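/- arXiv:math/9507205 — 2 statements merged into one kernel-verified Lean document; each statement's English description precedes it below -/
import Mathlib

section
/- Let h : S¹ → S¹ be an orientation-preserving homeomorphism with h(ℤ[1/2]) = ℤ[1/2], and assume that both h ∘ ν₂ ∘ h⁻¹ and h⁻¹ ∘ ν₂ ∘ h are everywhere-defined elements of T̄_{2,1}. Then h ∈ T_{2,1}. -/
/-!
Let `H` be a lift of `h` with inverse `K`, normalised so that `H 0 = 0`, and let `G`, `G'` be the
lifts of `h ν₂ h⁻¹` and `h⁻¹ ν₂ h` with `G (H x) = H (2 * x)` and `G' (K y) = K (2 * y)`. Both `G`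
and `G'` are piecewise linear with dyadic breaks and slopes powers of two (`DyadicPL`), and the
point is that `H` is too (`ConjPL.dyadicPL`).

*Jumps.* At the fixed point `0` both `G` and `G'` have slope `2` (`ConjPL.double_right`). Some
iterate of doubling carries a dyadic `p` to an integer, so on each side of `p` the germ of `H` is
its germ at `0` scaled by a power of two. The difference of the right and left exponents is the
jump of `H` at `p`. Since `G` has finitely many breaks modulo `1`, the jumps at `p` and `2 * p`
agree unless the denominator of `p` is small; hence for large denominators the jump depends only on
the numerator modulo a fixed power of two (`ConjPL.exists_code`).

*The jump is almost constant.* Conjugates `F = K ∘ (· + q) ∘ H` of dyadic translations are again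
`DyadicPL`, being branches of `G'⁻ⁿ ∘ G'ⁿ`, and preserve the jump wherever they have no break.
Call a standard dyadic interval good if `F` maps it affinely onto a standard dyadic interval. If
`q` is small, so that `F` is close to the identity but has no fixed point, a deepest interval that
is not good has two good halves, and one of them is mapped to an interval whose index has a
different last digit (`digit_mismatch`). Comparing jumps inside that half and inside its image shows
that the last relevant digit, which takes only two values, never influences the jump; so the jump is
constant at dyadic points of large denominator (`ConjPL.jump_const`).

*Linearity near `0`.* Consequently the reverse conjugates `H ∘ (· + q) ∘ K` have no breaks near `0`
and are affine there. Halving `q` halves the exponent of the slope, so this exponent is infinitely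
divisible by two and vanishes: `H` is additive near `0`, hence linear by monotonicity. Its slope is
a power of two because `H` and `K` preserve the dyadic rationals. Finally, the identity
`H (2 ^ M * x) = G^[M] (H x)` spreads piecewise linearity from a neighbourhood of `0` to the whole
period.
-/

noncomputable section

/-- `ℤ[1/n]` realized as a subset of `ℝ`: all reals of the form `a * n^b` with `a b : ℤ`. -/
def zpows (n : ℕ) : Set ℝ := {x : ℝ | ∃ a b : ℤ, x = (a : ℝ) * (n : ℝ) ^ b}

/-- The defining properties of the (unique) ring homomorphism `φₙ : ℤ[1/n] → ℤ/(n-1)ℤ`,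
expressed for a function `φ : ℝ → ZMod (n-1)` restricted to the subset `zpows n`. -/
def IsPhi (n : ℕ) (φ : ℝ → ZMod (n - 1)) : Prop :=
  (∀ x ∈ zpows n, ∀ y ∈ zpows n, φ (x + y) = φ x + φ y) ∧
  (∀ x ∈ zpows n, ∀ y ∈ zpows n, φ (x * y) = φ x * φ y) ∧
  φ 1 = 1

/-- Piecewise linearity data on the circle `ℝ/rℤ`, expressed for an `r`-periodic lift
`F : ℝ → ℝ`: there is an `r`-periodic break set `B ⊆ ℤ[1/n]`, finite in each period,
off which `F` is locally affine with slopes integral powers of `n`. -/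
def CircPL (n : ℕ) (r : ℝ) (F : ℝ → ℝ) : Prop :=
  ∃ B : Set ℝ,
    (B ∩ Set.Ico (0 : ℝ) r).Finite ∧ (∀ x ∈ B, x + r ∈ B ∧ x - r ∈ B) ∧ B ⊆ zpows n ∧
    ∀ x ∉ B, ∃ (k : ℤ) (c : ℝ), ∃ ε > 0, ∀ y : ℝ, |y - x| < ε → F y = (n : ℝ) ^ k * y + c

/-- Membership in `T_{n,r}`: an orientation-preserving homeomorphism of the circle
`S_r = ℝ/rℤ` (encoded by a strictly monotone surjective lift commuting with `x ↦ x + r`),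
piecewise linear with finitely many breaks, all breaks in `ℤ[1/n]`, all slopes integral
powers of `n`, and mapping (the image of) `ℤ[1/n]` into itself. -/
def MemT (n : ℕ) (r : ℝ) (f : AddCircle r → AddCircle r) : Prop :=
  ∃ F : ℝ → ℝ,
    (∀ x : ℝ, f (x : AddCircle r) = ((F x : ℝ) : AddCircle r)) ∧
    (∀ x : ℝ, F (x + r) = F x + r) ∧
    StrictMono F ∧ Function.Surjective F ∧ CircPL n r F ∧
    (∀ q ∈ zpows n, F q ∈ zpows n)

/-- An everywhere-defined element of `T̄_{n,r}`: a continuous, locally orientation-preserving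
local homeomorphism of the circle `S_r` (encoded by a strictly monotone continuous lift `G`
with `G (x + r) = G x + d·r` for some degree `d ≥ 1`), piecewise linear with finitely many
breaks, all breaks in `ℤ[1/n]`, all slopes integral powers of `n`, and mapping `ℤ[1/n]`
into itself. -/
def MemTbar (n : ℕ) (r : ℝ) (g : AddCircle r → AddCircle r) : Prop :=
  ∃ (G : ℝ → ℝ) (d : ℕ), 0 < d ∧
    (∀ x : ℝ, g (x : AddCircle r) = ((G x : ℝ) : AddCircle r)) ∧
    (∀ x : ℝ, G (x + r) = G x + (d : ℝ) * r) ∧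
    StrictMono G ∧ Continuous G ∧ CircPL n r G ∧
    (∀ q ∈ zpows n, G q ∈ zpows n)

/-- An orientation-preserving homeomorphism of the circle `S_r`, encoded by the existence
of a strictly monotone surjective lift commuting with `x ↦ x + r`. -/
def OrientedHomeo (r : ℝ) (h : AddCircle r → AddCircle r) : Prop :=
  ∃ H : ℝ → ℝ,
    (∀ x : ℝ, h (x : AddCircle r) = ((H x : ℝ) : AddCircle r)) ∧
    (∀ x : ℝ, H (x + r) = H x + r) ∧
    StrictMono H ∧ Function.Surjective H

/-- The doubling map `ν₂ : S¹ → S¹`, `x ↦ 2x (mod 1)`. -/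
def nu2 : AddCircle (1 : ℝ) → AddCircle (1 : ℝ) := fun z => z + z

/-- The image of the dyadic rationals `ℤ[1/2]` in the circle `S¹ = ℝ/ℤ`. -/
def dyadicCircle : Set (AddCircle (1 : ℝ)) :=
  {z : AddCircle (1 : ℝ) | ∃ q ∈ zpows 2, z = ((q : ℝ) : AddCircle (1 : ℝ))}

/-! ### Dyadic rationals -/

lemma mem_dy {x : ℝ} : x ∈ zpows 2 ↔ ∃ (N : ℕ) (z : ℤ), (2 : ℝ) ^ N * x = z := by
  constructor
  · rintro ⟨a, b, rfl⟩
    rcases le_total 0 b with hb | hb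
    · lift b to ℕ using hb
      exact ⟨0, a * 2 ^ b, by push_cast; simp⟩
    · obtain ⟨n, hn⟩ := Int.exists_eq_neg_ofNat hb
      subst hn
      refine ⟨n, a, ?_⟩
      push_cast
      rw [zpow_neg, zpow_natCast]
      field_simp
  · rintro ⟨N, z, h⟩
    refine ⟨z, -(N : ℤ), ?_⟩
    push_cast
    rw [← h, zpow_neg, zpow_natCast]
    field_simp

/-- A denominator exponent can be raised. -/
lemma dy_raise {x : ℝ} {N M : ℕ} (hNM : N ≤ M) (h : ∃ z : ℤ, (2 : ℝ) ^ N * x = z) :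
    ∃ z : ℤ, (2 : ℝ) ^ M * x = z := by
  obtain ⟨z, hz⟩ := h
  refine ⟨2 ^ (M - N) * z, ?_⟩
  push_cast
  rw [← hz, ← mul_assoc, ← pow_add]
  congr 3; omega

lemma dy_int (z : ℤ) : (z : ℝ) ∈ zpows 2 := mem_dy.2 ⟨0, z, by simp⟩

lemma dy_zpow (k : ℤ) : (2 : ℝ) ^ k ∈ zpows 2 := ⟨1, k, by push_cast; simp⟩

lemma dy_neg {x : ℝ} (h : x ∈ zpows 2) : -x ∈ zpows 2 := by
  obtain ⟨N, z, h⟩ := mem_dy.1 h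
  exact mem_dy.2 ⟨N, -z, by push_cast; linarith⟩

lemma dy_add {x y : ℝ} (hx : x ∈ zpows 2) (hy : y ∈ zpows 2) : x + y ∈ zpows 2 := by
  obtain ⟨N, hz⟩ := mem_dy.1 hx
  obtain ⟨M, hw⟩ := mem_dy.1 hy
  obtain ⟨z, hz⟩ := dy_raise (le_max_left N M) hz
  obtain ⟨w, hw⟩ := dy_raise (le_max_right N M) hw
  exact mem_dy.2 ⟨max N M, z + w, by push_cast; rw [mul_add, hz, hw]⟩

lemma dy_sub {x y : ℝ} (hx : x ∈ zpows 2) (hy : y ∈ zpows 2) : x - y ∈ zpows 2 := by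
  rw [sub_eq_add_neg]; exact dy_add hx (dy_neg hy)

lemma dy_mul {x y : ℝ} (hx : x ∈ zpows 2) (hy : y ∈ zpows 2) : x * y ∈ zpows 2 := by
  obtain ⟨N, z, hz⟩ := mem_dy.1 hx
  obtain ⟨M, w, hw⟩ := mem_dy.1 hy
  exact mem_dy.2 ⟨N + M, z * w, by push_cast; rw [← hz, ← hw]; ring⟩

lemma dy_neg_iff {x : ℝ} : -x ∈ zpows 2 ↔ x ∈ zpows 2 :=
  ⟨fun h => by simpa using dy_neg h, dy_neg⟩

lemma dy_div (z : ℤ) (n : ℕ) : (z : ℝ) / 2 ^ n ∈ zpows 2 :=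
  mem_dy.2 ⟨n, z, by field_simp⟩

lemma dy_dense {a b : ℝ} (h : a < b) : ∃ q ∈ zpows 2, a < q ∧ q < b := by
  obtain ⟨n, hn⟩ := exists_pow_lt_of_lt_one (sub_pos.2 h) (show (1 / 2 : ℝ) < 1 by norm_num)
  have h2 : (0 : ℝ) < 2 ^ n := by positivity
  have hn' : 1 < (b - a) * 2 ^ n := by
    rw [div_pow, one_pow, div_lt_iff₀ h2] at hn; exact hn
  refine ⟨((⌊a * 2 ^ n⌋ + 1 : ℤ) : ℝ) / 2 ^ n, dy_div _ _, ?_, ?_⟩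
  · rw [lt_div_iff₀ h2]; push_cast; exact Int.lt_floor_add_one _
  · rw [div_lt_iff₀ h2]; push_cast
    have := Int.floor_le (a * 2 ^ n); nlinarith

/-! ### One-sided slopes -/

/-- `F` is affine with slope `2 ^ a` on a right neighbourhood of `x`. -/
def RightSlope (F : ℝ → ℝ) (x : ℝ) (a : ℤ) : Prop :=
  ∃ ε > 0, ∀ τ, 0 < τ → τ < ε → F (x + τ) = F x + 2 ^ a * τ

/-- `F` is affine with slope `2 ^ a` on a left neighbourhood of `x`. -/
def LeftSlope (F : ℝ → ℝ) (x : ℝ) (a : ℤ) : Prop :=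
  ∃ ε > 0, ∀ τ, 0 < τ → τ < ε → F (x - τ) = F x - 2 ^ a * τ

/-- The conjugate of `F` by `x ↦ -x`. -/
def reflect (F : ℝ → ℝ) : ℝ → ℝ := fun x => -F (-x)

lemma rightSlope_reflect {F : ℝ → ℝ} {x : ℝ} {a : ℤ} :
    RightSlope (reflect F) x a ↔ LeftSlope F (-x) a := by
  unfold RightSlope LeftSlope reflect
  refine exists_congr fun ε => and_congr_right fun _ => forall_congr' fun τ =>
    forall_congr' fun _ => forall_congr' fun _ => ?_
  rw [show -(x + τ) = -x - τ by ring]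
  constructor <;> intro h <;> linarith

lemma leftSlope_reflect {F : ℝ → ℝ} {x : ℝ} {a : ℤ} :
    LeftSlope (reflect F) x a ↔ RightSlope F (-x) a := by
  unfold RightSlope LeftSlope reflect
  refine exists_congr fun ε => and_congr_right fun _ => forall_congr' fun τ =>
    forall_congr' fun _ => forall_congr' fun _ => ?_
  rw [show -(x - τ) = -x + τ by ring]
  constructor <;> intro h <;> linarith

@[simp] lemma reflect_reflect (F : ℝ → ℝ) : reflect (reflect F) = F := by
  funext x; simp [reflect]

lemma RightSlope.unique {F : ℝ → ℝ} {x : ℝ} {a b : ℤ} (ha : RightSlope F x a)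
    (hb : RightSlope F x b) : a = b := by
  obtain ⟨ε, hε, ha⟩ := ha
  obtain ⟨δ, hδ, hb⟩ := hb
  have hm : 0 < min ε δ := lt_min hε hδ
  have h1 := ha (min ε δ / 2) (by linarith) (by linarith [min_le_left ε δ])
  have h2 := hb (min ε δ / 2) (by linarith) (by linarith [min_le_right ε δ])
  have h3 : (2 : ℝ) ^ a = 2 ^ b := by
    have : (2 : ℝ) ^ a * (min ε δ / 2) = 2 ^ b * (min ε δ / 2) := by linarith
    exact mul_right_cancel₀ (by positivity) this
  exact zpow_right_injective₀ (by norm_num) (by norm_num) h3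

lemma LeftSlope.unique {F : ℝ → ℝ} {x : ℝ} {a b : ℤ} (ha : LeftSlope F x a)
    (hb : LeftSlope F x b) : a = b := by
  rw [← neg_neg x, ← rightSlope_reflect] at ha hb
  exact ha.unique hb

lemma RightSlope.comp {F G : ℝ → ℝ} {x : ℝ} {a b : ℤ} (hF : RightSlope F x a)
    (hG : RightSlope G (F x) b) : RightSlope (fun t => G (F t)) x (b + a) := by
  obtain ⟨ε, hε, hF⟩ := hF
  obtain ⟨δ, hδ, hG⟩ := hG
  have h2 : (0 : ℝ) < 2 ^ a := by positivity
  refine ⟨min ε (δ / 2 ^ a), lt_min hε (by positivity), fun τ h0 h1 => ?_⟩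
  have h3 := (lt_min_iff.1 h1).2
  rw [lt_div_iff₀ h2] at h3
  simp only
  rw [hF τ h0 (lt_min_iff.1 h1).1, hG _ (by positivity) (by linarith),
    zpow_add₀ (by norm_num)]
  ring

lemma LeftSlope.comp {F G : ℝ → ℝ} {x : ℝ} {a b : ℤ} (hF : LeftSlope F x a)
    (hG : LeftSlope G (F x) b) : LeftSlope (fun t => G (F t)) x (b + a) := by
  rw [← neg_neg x, ← rightSlope_reflect] at hF ⊢
  have hG' : RightSlope (reflect G) (reflect F (-x)) b := by
    rw [rightSlope_reflect]; simpa [reflect] using hG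
  have := hF.comp hG'
  convert this using 1
  funext t; simp [reflect]

lemma RightSlope.inv {F K : ℝ → ℝ} (hK : ∀ x, K (F x) = x) {x : ℝ} {a : ℤ}
    (hF : RightSlope F x a) : RightSlope K (F x) (-a) := by
  obtain ⟨ε, hε, hF⟩ := hF
  have h2 : (0 : ℝ) < 2 ^ a := by positivity
  refine ⟨2 ^ a * ε, by positivity, fun τ h0 h1 => ?_⟩
  have h3 := hF (2 ^ (-a) * τ) (by positivity) (by
    rw [zpow_neg, inv_mul_lt_iff₀ h2]; exact h1)
  rw [← mul_assoc, ← zpow_add₀ (by norm_num), add_neg_cancel, zpow_zero, one_mul] at h3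
  rw [← h3, hK, hK]

lemma LeftSlope.inv {F K : ℝ → ℝ} (hK : ∀ x, K (F x) = x) {x : ℝ} {a : ℤ}
    (hF : LeftSlope F x a) : LeftSlope K (F x) (-a) := by
  obtain ⟨ε, hε, hF⟩ := hF
  have h2 : (0 : ℝ) < 2 ^ a := by positivity
  refine ⟨2 ^ a * ε, by positivity, fun τ h0 h1 => ?_⟩
  have h3 := hF (2 ^ (-a) * τ) (by positivity) (by
    rw [zpow_neg, inv_mul_lt_iff₀ h2]; exact h1)
  rw [← mul_assoc, ← zpow_add₀ (by norm_num), add_neg_cancel, zpow_zero, one_mul] at h3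
  rw [← h3, hK, hK]

/-- A function without breaks in the open interval `(a, b)` is affine on `[a, b]`. -/
lemma affine_of_slopes {F : ℝ → ℝ} {a b : ℝ} {κ : ℤ} (ha : RightSlope F a κ)
    (hi : ∀ x, a < x → x < b → ∃ l, LeftSlope F x l ∧ RightSlope F x l)
    (hb : ∃ l, LeftSlope F b l) :
    ∀ z ∈ Set.Icc a b, F z = F a + 2 ^ κ * (z - a) := by
  -- two points on a left neighbourhood of `x` where `F` is known determine `F` there
  have key : ∀ x, a < x → ∀ l, LeftSlope F x l →
      (∀ z, a ≤ z → z < x → F z = F a + 2 ^ κ * (z - a)) →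
      l = κ ∧ F x = F a + 2 ^ κ * (x - a) := by
    rintro x hax l ⟨ε, hε, hl⟩ hz
    have hm : 0 < min ε (x - a) := lt_min hε (by linarith)
    have hm1 := min_le_left ε (x - a)
    have hm2 := min_le_right ε (x - a)
    set m := min ε (x - a)
    have e1 := hl (m / 2) (by linarith) (by linarith)
    have e2 := hl (m / 3) (by linarith) (by linarith)
    rw [hz _ (by linarith) (by linarith)] at e1 e2
    have h3 : (2 : ℝ) ^ κ = 2 ^ l := by
      have : (2 : ℝ) ^ κ * m = 2 ^ l * m := by linarith
      exact mul_right_cancel₀ hm.ne' this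
    refine ⟨(zpow_right_injective₀ (by norm_num) (by norm_num) h3).symm, ?_⟩
    rw [← h3] at e1
    linarith
  rcases lt_trichotomy a b with hab | hab | hab
  · have hclosed : IsClosed
        {x | ∀ z, a ≤ z → F z ≠ F a + 2 ^ κ * (z - a) → x ≤ z} := by
      simp only [Set.ofPred_forall]
      exact isClosed_iInter fun z => isClosed_iInter fun _ => isClosed_iInter fun _ =>
        isClosed_Iic
    have hsub : Set.Icc a b ⊆ {x | ∀ z, a ≤ z → F z ≠ F a + 2 ^ κ * (z - a) → x ≤ z} := by
      refine IsClosed.Icc_subset_of_forall_exists_gt (hclosed.inter isClosed_Icc)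
        (fun z hz _ => hz) ?_
      rintro x ⟨hx, hxa, hxb⟩ y hxy
      have hx' : ∀ z, a ≤ z → z < x → F z = F a + 2 ^ κ * (z - a) := fun z h1 h2 => by
        by_contra h; exact absurd (hx z h1 h) (not_le.2 h2)
      have hr : RightSlope F x κ ∧ F x = F a + 2 ^ κ * (x - a) := by
        rcases hxa.eq_or_lt with rfl | hxa
        · exact ⟨ha, by simp⟩
        · obtain ⟨l, hl, hr⟩ := hi x hxa hxb
          obtain ⟨rfl, h⟩ := key x hxa l hl hx'
          exact ⟨hr, h⟩
      obtain ⟨⟨ε, hε, hr⟩, hFx⟩ := hr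
      refine ⟨min y (x + ε), ?_, lt_min hxy (by linarith), min_le_left _ _⟩
      intro z hz hne
      by_contra hlt
      have h1 := (lt_min_iff.1 (not_le.1 hlt)).2
      apply hne
      rcases lt_trichotomy z x with h | h | h
      · exact hx' z hz h
      · rw [h, hFx]
      · have := hr (z - x) (by linarith) (by linarith)
        rw [add_sub_cancel, hFx] at this
        rw [this]; ring
    have hlt : ∀ z, a ≤ z → z < b → F z = F a + 2 ^ κ * (z - a) := fun z h1 h2 => by
      by_contra h
      exact absurd (hsub (Set.right_mem_Icc.2 hab.le) z h1 h) (not_le.2 h2)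
    rintro z ⟨h1, h2⟩
    rcases h2.lt_or_eq with h2 | rfl
    · exact hlt z h1 h2
    · obtain ⟨l, hl⟩ := hb
      exact (key z hab l hl hlt).2
  · rintro z ⟨h1, h2⟩
    obtain rfl : z = a := by linarith
    simp
  · rintro z ⟨h1, h2⟩; linarith

/-- A continuous function without breaks on `(x, x + ε)` is affine to the right of `x`. -/
lemma rightSlope_of_punctured {F : ℝ → ℝ} (hF : Continuous F) {x ε : ℝ} (hε : 0 < ε)
    (h : ∀ z, x < z → z < x + ε → ∃ l, LeftSlope F z l ∧ RightSlope F z l) :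
    ∃ κ, RightSlope F x κ := by
  set v := x + ε / 2 with hv
  have hseg : ∀ z, x < z → z < v → ∃ κ : ℤ, F v = F z + 2 ^ κ * (v - z) := by
    intro z h1 h2
    obtain ⟨κ, -, hκ⟩ := h z h1 (by linarith)
    obtain ⟨l, hl, -⟩ := h v (by linarith) (by linarith)
    exact ⟨κ, affine_of_slopes hκ (fun w hw1 hw2 => h w (by linarith) (by linarith)) ⟨l, hl⟩ v
      ⟨h2.le, le_rfl⟩⟩
  set z₀ := x + ε / 4 with hz₀
  obtain ⟨κ, hκ⟩ := hseg z₀ (by linarith) (by linarith)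
  have hz : ∀ z, x < z → z < z₀ → F v = F z + 2 ^ κ * (v - z) := by
    intro z h1 h2
    obtain ⟨μ, -, hμ⟩ := h z h1 (by linarith)
    obtain ⟨l, hl, -⟩ := h v (by linarith) (by linarith)
    have haff := affine_of_slopes hμ (fun w hw1 hw2 => h w (by linarith) (by linarith)) ⟨l, hl⟩
    have e1 := haff v ⟨by linarith, le_rfl⟩
    have e2 := haff z₀ ⟨by linarith, by linarith⟩
    have h3 : (2 : ℝ) ^ κ = 2 ^ μ := by
      have : (2 : ℝ) ^ κ * (v - z₀) = 2 ^ μ * (v - z₀) := by linarith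
      exact mul_right_cancel₀ (by linarith) this
    rw [h3]; exact e1
  have hx : F v = F x + 2 ^ κ * (v - x) := by
    have ht : Filter.Tendsto (fun z => F z + 2 ^ κ * (v - z)) (nhdsWithin x (Set.Ioi x))
        (nhds (F x + 2 ^ κ * (v - x))) := by
      refine Filter.Tendsto.mono_left ?_ nhdsWithin_le_nhds
      exact Continuous.tendsto (by fun_prop) x
    refine tendsto_nhds_unique (tendsto_const_nhds.congr' ?_) ht
    filter_upwards [Ioo_mem_nhdsGT (show x < z₀ by linarith)] with z hz'
    exact hz z hz'.1 hz'.2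
  refine ⟨κ, ε / 4, by linarith, fun τ h0 h1 => ?_⟩
  have := hz (x + τ) (by linarith) (by linarith)
  linarith

/-! ### Dyadic piecewise linear maps of the line -/

/-- A map of the line that is piecewise linear, with slopes powers of two and breaks at dyadic
rationals, and that preserves the dyadic rationals. Being local, the condition is stated through
one-sided slopes; local finiteness of the set of breaks is `DyadicPL.finite_breaks`. -/
structure DyadicPL (F : ℝ → ℝ) : Prop where
  right : ∀ x, ∃ a, RightSlope F x a
  left : ∀ x, ∃ a, LeftSlope F x a
  off : ∀ x ∉ zpows 2, ∃ a, LeftSlope F x a ∧ RightSlope F x a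
  dy : ∀ x ∈ zpows 2, F x ∈ zpows 2

lemma DyadicPL.dy_of {F : ℝ → ℝ} (hF : DyadicPL F) {x : ℝ} (h : F x ∈ zpows 2) :
    x ∈ zpows 2 := by
  obtain ⟨a, ε, hε, ha⟩ := hF.right x
  obtain ⟨q, hq, h1, h2⟩ := dy_dense (show x < x + ε by linarith)
  have h3 := ha (q - x) (by linarith) (by linarith)
  rw [add_sub_cancel] at h3
  have h4 : x = q - 2 ^ (-a) * (F q - F x) := by
    rw [h3, zpow_neg]; field_simp; ring
  rw [h4]
  exact dy_sub hq (dy_mul (dy_zpow _) (dy_sub (hF.dy q hq) h))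

lemma DyadicPL.comp {F G : ℝ → ℝ} (hG : DyadicPL G) (hF : DyadicPL F) :
    DyadicPL (fun x => G (F x)) where
  right x := by
    obtain ⟨a, ha⟩ := hF.right x
    obtain ⟨b, hb⟩ := hG.right (F x)
    exact ⟨_, ha.comp hb⟩
  left x := by
    obtain ⟨a, ha⟩ := hF.left x
    obtain ⟨b, hb⟩ := hG.left (F x)
    exact ⟨_, ha.comp hb⟩
  off x hx := by
    obtain ⟨a, ha, ha'⟩ := hF.off x hx
    obtain ⟨b, hb, hb'⟩ := hG.off (F x) fun h => hx (hF.dy_of h)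
    exact ⟨_, ha.comp hb, ha'.comp hb'⟩
  dy x hx := hG.dy _ (hF.dy x hx)

lemma DyadicPL.inv {F K : ℝ → ℝ} (hF : DyadicPL F) (hK : ∀ x, K (F x) = x)
    (hK' : ∀ x, F (K x) = x) : DyadicPL K where
  right x := by
    obtain ⟨a, ha⟩ := hF.right (K x)
    have := ha.inv hK
    rw [hK'] at this; exact ⟨_, this⟩
  left x := by
    obtain ⟨a, ha⟩ := hF.left (K x)
    have := ha.inv hK
    rw [hK'] at this; exact ⟨_, this⟩
  off x hx := by
    obtain ⟨a, ha, ha'⟩ := hF.off (K x) fun h => hx (by simpa [hK'] using hF.dy _ h)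
    have h1 := ha.inv hK
    have h2 := ha'.inv hK
    rw [hK'] at h1 h2; exact ⟨_, h1, h2⟩
  dy x hx := hF.dy_of (by rwa [hK'])

lemma DyadicPL.add_const {q : ℝ} (hq : q ∈ zpows 2) : DyadicPL (fun x => x + q) where
  right x := ⟨0, 1, one_pos, fun τ _ _ => by simp; ring⟩
  left x := ⟨0, 1, one_pos, fun τ _ _ => by simp; ring⟩
  off x _ := ⟨0, ⟨1, one_pos, fun τ _ _ => by simp; ring⟩, ⟨1, one_pos, fun τ _ _ => by simp; ring⟩⟩
  dy x hx := dy_add hx hq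

lemma DyadicPL.mul_zpow (k : ℤ) : DyadicPL (fun x => 2 ^ k * x) where
  right x := ⟨k, 1, one_pos, fun τ _ _ => by simp; ring⟩
  left x := ⟨k, 1, one_pos, fun τ _ _ => by simp; ring⟩
  off x _ := ⟨k, ⟨1, one_pos, fun τ _ _ => by simp; ring⟩, ⟨1, one_pos, fun τ _ _ => by simp; ring⟩⟩
  dy x hx := dy_mul (dy_zpow k) hx

lemma DyadicPL.iterate {F : ℝ → ℝ} (hF : DyadicPL F) (n : ℕ) : DyadicPL (F^[n]) := by
  induction n with
  | zero =>
    convert DyadicPL.mul_zpow 0 using 1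
    funext x; simp
  | succ n ih =>
    rw [Function.iterate_succ']
    exact hF.comp ih

lemma DyadicPL.reflect {F : ℝ → ℝ} (hF : DyadicPL F) : DyadicPL (reflect F) where
  right x := by simpa only [rightSlope_reflect] using hF.left (-x)
  left x := by simpa only [leftSlope_reflect] using hF.right (-x)
  off x hx := by
    obtain ⟨a, ha, hb⟩ := hF.off (-x) (mt dy_neg_iff.1 hx)
    exact ⟨a, leftSlope_reflect.2 hb, rightSlope_reflect.2 ha⟩
  dy x hx := dy_neg (hF.dy _ (dy_neg hx))

/-- The set of breaks. -/
def breaks (F : ℝ → ℝ) : Set ℝ := {x | ¬ ∃ a, LeftSlope F x a ∧ RightSlope F x a}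

lemma RightSlope.eventually {F : ℝ → ℝ} {x : ℝ} {a : ℤ} (h : RightSlope F x a) :
    ∃ ε > 0, ∀ z, x < z → z < x + ε → LeftSlope F z a ∧ RightSlope F z a := by
  obtain ⟨ε, hε, h⟩ := h
  refine ⟨ε, hε, fun z h1 h2 => ?_⟩
  have hz := h (z - x) (by linarith) (by linarith)
  rw [add_sub_cancel] at hz
  refine ⟨⟨z - x, by linarith, fun τ h3 h4 => ?_⟩, ⟨x + ε - z, by linarith, fun τ h3 h4 => ?_⟩⟩
  · have := h (z - τ - x) (by linarith) (by linarith)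
    rw [add_sub_cancel] at this
    rw [this, hz]; ring
  · have := h (z + τ - x) (by linarith) (by linarith)
    rw [add_sub_cancel] at this
    rw [this, hz]; ring

lemma LeftSlope.eventually {F : ℝ → ℝ} {x : ℝ} {a : ℤ} (h : LeftSlope F x a) :
    ∃ ε > 0, ∀ z, z < x → x - ε < z → LeftSlope F z a ∧ RightSlope F z a := by
  rw [← neg_neg x, ← rightSlope_reflect] at h
  obtain ⟨ε, hε, h⟩ := h.eventually
  refine ⟨ε, hε, fun z h1 h2 => ?_⟩
  have := h (-z) (by linarith) (by linarith)
  rw [leftSlope_reflect, rightSlope_reflect, neg_neg] at this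
  exact this.symm

/-- The breaks are isolated, hence finite in number on `[0, 1]`. -/
lemma DyadicPL.finite_breaks {F : ℝ → ℝ} (hF : DyadicPL F) :
    (breaks F ∩ Set.Icc 0 1).Finite := by
  refine isCompact_Icc.induction_on (p := fun s => (breaks F ∩ s).Finite) (by simp)
    (fun s t hst ht => ht.subset (Set.inter_subset_inter_right _ hst))
    (fun s t hs ht => by rw [Set.inter_union_distrib_left]; exact hs.union ht) ?_
  intro x _
  obtain ⟨a, ha⟩ := hF.right x
  obtain ⟨b, hb⟩ := hF.left x
  obtain ⟨ε, hε, ha⟩ := ha.eventually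
  obtain ⟨δ, hδ, hb⟩ := hb.eventually
  refine ⟨Set.Ioo (x - δ) (x + ε), mem_nhdsWithin_of_mem_nhds
    (Ioo_mem_nhds (by linarith) (by linarith)), (Set.finite_singleton x).subset ?_⟩
  rintro z ⟨hz, h1, h2⟩
  rcases lt_trichotomy z x with h | h | h
  · exact absurd ⟨b, hb z h h1⟩ hz
  · exact h
  · exact absurd ⟨a, ha z h h2⟩ hz

lemma DyadicPL.breaks_subset {F : ℝ → ℝ} (hF : DyadicPL F) : breaks F ⊆ zpows 2 := by
  intro x hx
  by_contra h
  exact hx (hF.off x h)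

lemma DyadicPL.continuous {F : ℝ → ℝ} (hF : DyadicPL F) : Continuous F := by
  rw [continuous_iff_continuousAt]
  intro x
  obtain ⟨a, ε, hε, ha⟩ := hF.right x
  obtain ⟨b, δ, hδ, hb⟩ := hF.left x
  rw [continuousAt_iff_continuous_left'_right']
  constructor
  · have : ContinuousWithinAt (fun z => F x - 2 ^ b * (x - z)) (Set.Iio x) x :=
      Continuous.continuousWithinAt (by fun_prop)
    refine this.congr_of_eventuallyEq ?_ (by simp)
    filter_upwards [Ioo_mem_nhdsLT (show x - δ < x by linarith)] with z hz
    have := hb (x - z) (by linarith [hz.2]) (by linarith [hz.1])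
    rwa [sub_sub_cancel] at this
  · have : ContinuousWithinAt (fun z => F x + 2 ^ a * (z - x)) (Set.Ioi x) x :=
      Continuous.continuousWithinAt (by fun_prop)
    refine this.congr_of_eventuallyEq ?_ (by simp)
    filter_upwards [Ioo_mem_nhdsGT (show x < x + ε by linarith)] with z hz
    have := ha (z - x) (by linarith [hz.1]) (by linarith [hz.2])
    rwa [add_sub_cancel] at this

lemma rightSlope_add_one {F : ℝ → ℝ} {d : ℝ} (hF : ∀ x, F (x + 1) = F x + d) {x : ℝ} {a : ℤ} :
    RightSlope F (x + 1) a ↔ RightSlope F x a := by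
  have e : ∀ τ, F (x + 1 + τ) = F (x + τ) + d := fun τ => by rw [← hF]; ring_nf
  simp only [RightSlope, e, hF]
  refine exists_congr fun ε => and_congr_right fun _ => forall_congr' fun τ =>
    forall_congr' fun _ => forall_congr' fun _ => ?_
  constructor <;> intro h <;> linarith

lemma leftSlope_add_one {F : ℝ → ℝ} {d : ℝ} (hF : ∀ x, F (x + 1) = F x + d) {x : ℝ} {a : ℤ} :
    LeftSlope F (x + 1) a ↔ LeftSlope F x a := by
  have e : ∀ τ, F (x + 1 - τ) = F (x - τ) + d := fun τ => by rw [← hF]; ring_nf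
  simp only [LeftSlope, e, hF]
  refine exists_congr fun ε => and_congr_right fun _ => forall_congr' fun τ =>
    forall_congr' fun _ => forall_congr' fun _ => ?_
  constructor <;> intro h <;> linarith

/-- A predicate invariant under `x ↦ x + 1` is invariant under integral translations. -/
lemma periodic_int {P : ℝ → Prop} (hP : ∀ x, P (x + 1) ↔ P x) (z : ℤ) (x : ℝ) :
    P (x + z) ↔ P x := by
  induction z using Int.induction_on generalizing x with
  | zero => simp
  | succ n ih =>
    push_cast at ih ⊢
    rw [← add_assoc, hP, ih]
  | pred n ih =>
    push_cast at ih ⊢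
    rw [← hP, show x + (-(n : ℝ) - 1) + 1 = x + -n by ring, ih]

lemma breaks_add_one {F : ℝ → ℝ} {d : ℝ} (hF : ∀ x, F (x + 1) = F x + d) (x : ℝ) :
    x + 1 ∈ breaks F ↔ x ∈ breaks F := by
  simp only [breaks, Set.mem_ofPred_eq, rightSlope_add_one hF, leftSlope_add_one hF]

/-- For a map that commutes with unit translations, the conditions need only be checked on a unit
interval. -/
lemma dyadicPL_of_unit {F : ℝ → ℝ} {d : ℝ} (hF : ∀ x, F (x + 1) = F x + d)
    (hr : ∀ x, 0 ≤ x → x < 1 → ∃ a, RightSlope F x a)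
    (hl : ∀ x, 0 < x → x ≤ 1 → ∃ a, LeftSlope F x a)
    (ho : ∀ x, 0 < x → x < 1 → x ∉ zpows 2 → ∃ a, LeftSlope F x a ∧ RightSlope F x a)
    (hd : ∀ x ∈ zpows 2, F x ∈ zpows 2) : DyadicPL F where
  right x := by
    rw [← Int.fract_add_floor x,
      periodic_int (P := fun x => ∃ a, RightSlope F x a)
        fun x => exists_congr fun a => rightSlope_add_one hF]
    exact hr _ (Int.fract_nonneg x) (Int.fract_lt_one x)
  left x := by
    rw [show x = x - (⌈x⌉ - 1) + ((⌈x⌉ - 1 : ℤ) : ℝ) by push_cast; ring,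
      periodic_int (P := fun x => ∃ a, LeftSlope F x a)
        fun x => exists_congr fun a => leftSlope_add_one hF]
    exact hl _ (by linarith [Int.ceil_lt_add_one x]) (by linarith [Int.le_ceil x])
  off x hx := by
    have hx' : Int.fract x ∉ zpows 2 := fun h => hx (by
      rw [← Int.fract_add_floor x]; exact dy_add h (dy_int _))
    rw [← Int.fract_add_floor x,
      periodic_int (P := fun x => ∃ a, LeftSlope F x a ∧ RightSlope F x a)
        fun x => exists_congr fun a => and_congr (leftSlope_add_one hF) (rightSlope_add_one hF)]
    refine ho _ (lt_of_le_of_ne (Int.fract_nonneg x) fun h => hx' ?_) (Int.fract_lt_one x) hx'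
    rw [← h]; simpa using dy_int 0
  dy := hd
/-! ### Conjugacies of the doubling map -/

/-- `H` is an increasing homeomorphism of the line, with inverse `K`, that is a lift of a circle
homeomorphism and preserves the dyadic rationals; `G = H ∘ 2 ∘ K` and `G' = K ∘ 2 ∘ H` are dyadic
piecewise linear. -/
structure ConjPL (H K G G' : ℝ → ℝ) : Prop where
  mono : StrictMono H
  HK : ∀ y, H (K y) = y
  KH : ∀ x, K (H x) = x
  H1 : ∀ x, H (x + 1) = H x + 1
  HD : ∀ x ∈ zpows 2, H x ∈ zpows 2
  KD : ∀ y ∈ zpows 2, K y ∈ zpows 2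
  hG : ∀ x, G (H x) = H (2 * x)
  hG' : ∀ y, G' (K y) = K (2 * y)
  plG : DyadicPL G
  plG' : DyadicPL G'

namespace ConjPL

variable {H K G G' : ℝ → ℝ}

lemma monoK (h : ConjPL H K G G') : StrictMono K := by
  intro x y hxy
  rw [← h.mono.lt_iff_lt, h.HK, h.HK]; exact hxy

lemma K1 (h : ConjPL H K G G') (y : ℝ) : K (y + 1) = K y + 1 := by
  have := h.H1 (K y)
  rw [h.HK] at this
  rw [← this, h.KH]

lemma symm (h : ConjPL H K G G') : ConjPL K H G' G where
  mono := h.monoK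
  HK := h.KH
  KH := h.HK
  H1 := h.K1
  HD := h.KD
  KD := h.HD
  hG := h.hG'
  hG' := h.hG
  plG := h.plG'
  plG' := h.plG

lemma reflect (h : ConjPL H K G G') :
    ConjPL (reflect H) (reflect K) (reflect G) (reflect G') where
  mono x y hxy := by simp only [_root_.reflect]; linarith [h.mono (show -y < -x by linarith)]
  HK y := by simp [_root_.reflect, h.HK]
  KH y := by simp [_root_.reflect, h.KH]
  H1 x := by
    have := h.H1 (-(x + 1))
    simp only [_root_.reflect]
    rw [show -(x + 1) + 1 = -x by ring] at this
    linarith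
  HD x hx := dy_neg (h.HD _ (dy_neg hx))
  KD x hx := dy_neg (h.KD _ (dy_neg hx))
  hG x := by simp [_root_.reflect, h.hG]
  hG' x := by simp [_root_.reflect, h.hG']
  plG := h.plG.reflect
  plG' := h.plG'.reflect

lemma cont (h : ConjPL H K G G') : Continuous H :=
  h.mono.monotone.continuous_of_surjective fun y => ⟨K y, h.HK y⟩

lemma Hint (h : ConjPL H K G G') (x : ℝ) (z : ℤ) : H (x + z) = H x + z := by
  induction z using Int.induction_on with
  | zero => simp
  | succ n ih =>
    push_cast at ih ⊢
    rw [← add_assoc, h.H1, ih]; ring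
  | pred n ih =>
    push_cast at ih ⊢
    have := h.H1 (x + (-(n : ℝ) - 1))
    rw [show x + (-(n : ℝ) - 1) + 1 = x + -n by ring, ih] at this
    linarith

lemma G1 (h : ConjPL H K G G') (y : ℝ) : G (y + 1) = G y + 2 := by
  have h1 := h.hG (K y + 1)
  have h2 := h.Hint (2 * K y) 2
  have h3 := h.hG (K y)
  rw [h.H1, h.HK, show 2 * (K y + 1) = 2 * K y + (2 : ℤ) by push_cast; ring, h2] at h1
  rw [h.HK] at h3
  rw [h1, h3]; norm_num

lemma iter (h : ConjPL H K G G') (n : ℕ) (x : ℝ) : G^[n] (H x) = H (2 ^ n * x) := by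
  induction n generalizing x with
  | zero => simp
  | succ n ih => rw [Function.iterate_succ_apply, h.hG, ih]; ring_nf

/-- The inverse of `G`. -/
lemma plInv (h : ConjPL H K G G') : DyadicPL (fun y => H (K y / 2)) := by
  refine h.plG.inv (fun x => ?_) (fun x => ?_)
  · have := h.hG (K x)
    rw [h.HK] at this
    rw [this, h.KH, mul_div_cancel_left₀ _ two_ne_zero, h.HK]
  · rw [h.hG, mul_div_cancel₀ _ two_ne_zero, h.HK]

/-- The conjugate by `H` of a dyadic translation is dyadic piecewise linear: since a dyadic
translation becomes an integral one under an iterate of doubling, it is a branch of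
`G'⁻ⁿ ∘ G'ⁿ`. -/
lemma translate (h : ConjPL H K G G') {q : ℝ} (hq : q ∈ zpows 2) :
    DyadicPL (fun x => K (H x + q)) := by
  obtain ⟨n, z, hz⟩ := mem_dy.1 hq
  have h1 := (h.symm.plInv.iterate n).comp
    ((DyadicPL.add_const (dy_int z)).comp (h.plG'.iterate n))
  have h2 : ∀ (m : ℕ) (y : ℝ), (fun y => K (H y / 2))^[m] (K y) = K (y / 2 ^ m) := by
    intro m
    induction m with
    | zero => intro y; simp
    | succ m ih =>
      intro y
      rw [Function.iterate_succ_apply]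
      simp only [h.HK]
      rw [ih, div_div, pow_succ']
  convert h1 using 1
  funext x
  have h3 := h.symm.iter n (H x)
  rw [h.KH] at h3
  rw [h3, ← h.symm.Hint, h2, ← hz]
  congr 1; field_simp

/-- Composing `H` with a dyadic translation keeps the hypotheses, so `H 0 = 0` can be assumed. -/
lemma recenter (h : ConjPL H K G G') :
    ∃ H₁ K₁ G₁ G₁', ConjPL H₁ K₁ G₁ G₁' ∧ H₁ 0 = 0 ∧ ∃ q ∈ zpows 2, ∀ x, H x = H₁ x + q := by
  have h0 : H 0 ∈ zpows 2 := h.HD 0 (by simpa using dy_int 0)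
  refine ⟨fun x => H x + -H 0, fun y => K (y + H 0), fun y => G (y + H 0) + -H 0,
    fun x => K (H (G' x) + -H 0), ?_, by simp, H 0, h0, fun x => by ring⟩
  exact
    { mono := fun x y hxy => by simpa using h.mono hxy
      HK := fun y => by simp [h.HK]
      KH := fun x => by simp [h.KH]
      H1 := fun x => by simp only [h.H1]; ring
      HD := fun x hx => dy_add (h.HD x hx) (dy_neg h0)
      KD := fun x hx => h.KD _ (dy_add hx h0)
      hG := fun x => by simp [h.hG]
      hG' := fun y => by simp only [h.hG', h.HK]; ring_nf
      plG := (DyadicPL.add_const (dy_neg h0)).comp (h.plG.comp (DyadicPL.add_const h0))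
      plG' := (h.translate (dy_neg h0)).comp h.plG' }

/-- The breaks of `G` have preimages under `H` of bounded denominator. -/
lemma breaks_level (h : ConjPL H K G G') :
    ∃ N : ℕ, ∀ p, H p ∈ breaks G → ∃ z : ℤ, (2 : ℝ) ^ N * p = z := by
  have hfin := h.plG.finite_breaks
  have hb : ∃ N : ℕ, ∀ b ∈ breaks G ∩ Set.Icc 0 1, ∃ z : ℤ, (2 : ℝ) ^ N * K b = z := by
    have : ∀ b ∈ breaks G ∩ Set.Icc 0 1, ∃ N : ℕ, ∃ z : ℤ, (2 : ℝ) ^ N * K b = z :=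
      fun b hb => mem_dy.1 (h.KD b (h.plG.breaks_subset hb.1))
    choose! N hN using this
    obtain ⟨M, hM⟩ := (hfin.image N).bddAbove
    exact ⟨M, fun b hb => dy_raise (hM ⟨b, hb, rfl⟩) (hN b hb)⟩
  obtain ⟨N, hN⟩ := hb
  refine ⟨N, fun p hp => ?_⟩
  -- translate `H p` into `[0, 1]`, using the periodicity of the set of breaks
  have hp' : Int.fract (H p) ∈ breaks G := by
    rw [← periodic_int (breaks_add_one h.G1) ⌊H p⌋, Int.fract_add_floor]; exact hp
  obtain ⟨z, hz⟩ := hN _ ⟨hp', Int.fract_nonneg _, (Int.fract_lt_one _).le⟩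
  have e : K (Int.fract (H p)) + ⌊H p⌋ = p := by
    rw [← h.symm.Hint, Int.fract_add_floor, h.KH]
  refine ⟨z + 2 ^ N * ⌊H p⌋, ?_⟩
  push_cast
  rw [← hz, ← mul_add, e]

/-- The slope of `G` at `0` governs `H ∘ 2` near `0`, and is at least `2` because `H` is
increasing. -/
lemma double_right_aux (h : ConjPL H K G G') (h0 : H 0 = 0) :
    ∃ s : ℤ, 1 ≤ s ∧ ∃ ε > 0, ∀ x, 0 < x → x < ε → H (2 * x) = 2 ^ s * H x := by
  obtain ⟨s, ε, hε, hs⟩ := h.plG.right 0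
  have hG0 : G 0 = 0 := by have := h.hG 0; simpa [h0] using this
  have hpos : ∀ x, 0 < x → 0 < H x := fun x hx => by rw [← h0]; exact h.mono hx
  have hK0 : K 0 = 0 := by rw [← h0, h.KH, h0]
  have hKε : 0 < K ε := by rw [← hK0]; exact h.monoK hε
  have hd : ∀ x, 0 < x → x < K ε → H (2 * x) = 2 ^ s * H x := by
    intro x h1 h2
    have h3 : H x < ε := by rw [← h.HK ε]; exact h.mono h2
    have := hs (H x) (hpos x h1) h3
    rw [zero_add, h.hG, hG0, zero_add] at this
    exact this
  refine ⟨s, ?_, K ε, hKε, hd⟩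
  by_contra hlt
  have h1 := hd (K ε / 2) (by linarith) (by linarith)
  have h2 : (2 : ℝ) ^ s ≤ 1 := zpow_le_one_of_nonpos₀ (by norm_num) (by omega)
  have h3 := h.mono (show K ε / 2 < 2 * (K ε / 2) by linarith)
  nlinarith [hpos (K ε / 2) (by linarith)]

/-- At the fixed point `0` both conjugates of doubling have the slope `2`: conjugation shows that
the exponents of the two slopes multiply to `1`. -/
lemma double_right (h : ConjPL H K G G') (h0 : H 0 = 0) :
    ∃ ε > 0, ∀ x, 0 < x → x < ε → H (2 * x) = 2 * H x := by
  have hK0 : K 0 = 0 := by rw [← h0, h.KH, h0]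
  obtain ⟨s, hs, ε, hε, h1⟩ := h.double_right_aux h0
  obtain ⟨t, ht, δ, hδ, h2⟩ := h.symm.double_right_aux hK0
  have : s = 1 := by
    by_contra hne
    have hs2 : 2 ≤ s := by omega
    obtain ⟨x, hx0, hxε, hxδ⟩ : ∃ x, 0 < x ∧ x < ε ∧ H x < δ / 2 := by
      have : 0 < K (δ / 2) := by rw [← hK0]; exact h.monoK (by linarith)
      refine ⟨min ε (K (δ / 2)) / 2, by positivity, ?_, ?_⟩
      · linarith [min_le_left ε (K (δ / 2)), lt_min hε this]
      · conv_rhs => rw [← h.HK (δ / 2)]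
        exact h.mono (by linarith [min_le_right ε (K (δ / 2)), lt_min hε this])
    have hHx : 0 < H x := by rw [← h0]; exact h.mono hx0
    have e1 := h1 x hx0 hxε
    have e2 := h2 (H x) hHx (by linarith)
    have e3 := h2 (2 * H x) (by linarith) (by linarith)
    rw [h.KH] at e2
    have h4 : (4 : ℝ) ≤ 2 ^ s := by
      calc (4 : ℝ) = 2 ^ (2 : ℤ) := by norm_num
        _ ≤ 2 ^ s := zpow_le_zpow_right₀ (by norm_num) hs2
    have h5 : (2 : ℝ) ≤ 2 ^ t := by
      calc (2 : ℝ) = 2 ^ (1 : ℤ) := by norm_num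
        _ ≤ 2 ^ t := zpow_le_zpow_right₀ (by norm_num) ht
    have h6 : K (2 * (2 * H x)) ≤ 2 * x := by
      rw [← h.KH (2 * x), e1]
      exact h.monoK.monotone (by nlinarith)
    rw [e3, e2] at h6
    nlinarith [mul_le_mul h5 h5 (by norm_num) (by positivity)]
  subst this
  exact ⟨ε, hε, by simpa using h1⟩

/-- Near `0` on the right, `H` commutes with scaling by any power of two. -/
lemma scale_right (h : ConjPL H K G G') (h0 : H 0 = 0) (b : ℤ) :
    ∃ ε > 0, ∀ x, 0 < x → x < ε → H (2 ^ b * x) = 2 ^ b * H x := by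
  obtain ⟨ε, hε, hd⟩ := h.double_right h0
  have nat : ∀ n : ℕ, ∃ ε > 0, ∀ x, 0 < x → x < ε → H (2 ^ n * x) = 2 ^ n * H x := by
    intro n
    induction n with
    | zero => exact ⟨1, one_pos, fun x _ _ => by simp⟩
    | succ n ih =>
      obtain ⟨δ, hδ, ih⟩ := ih
      refine ⟨min δ (ε / 2 ^ n), by positivity, fun x h1 h2 => ?_⟩
      obtain ⟨h2, h3⟩ := lt_min_iff.1 h2
      rw [lt_div_iff₀ (by positivity)] at h3
      have := hd (2 ^ n * x) (by positivity) (by linarith)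
      rw [ih x h1 h2] at this
      rw [pow_succ', mul_assoc, this, mul_assoc]
  obtain ⟨n, rfl | rfl⟩ := b.eq_nat_or_neg
  · simpa using nat n
  · obtain ⟨δ, hδ, hn⟩ := nat n
    refine ⟨2 ^ n * δ, by positivity, fun x h1 h2 => ?_⟩
    have := hn (x / 2 ^ n) (by positivity) (by rw [div_lt_iff₀ (by positivity)]; linarith)
    rw [mul_div_cancel₀ _ (by positivity)] at this
    rw [zpow_neg, zpow_natCast, this, ← mul_assoc, inv_mul_cancel₀ (by positivity), one_mul]
    congr 1; field_simp

end ConjPL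
/-! ### Germs of the conjugacy at dyadic points -/

/-- To the right of `p`, `H` is a copy of its germ at `0`, scaled by `2 ^ c`. -/
def RightGerm (H : ℝ → ℝ) (p : ℝ) (c : ℤ) : Prop :=
  ∃ ε > 0, ∀ τ, 0 < τ → τ < ε → H (p + τ) = H p + 2 ^ c * H τ

/-- To the left of `p`, `H` is a copy of its germ at `0`, scaled by `2 ^ c`. -/
def LeftGerm (H : ℝ → ℝ) (p : ℝ) (c : ℤ) : Prop :=
  ∃ ε > 0, ∀ τ, 0 < τ → τ < ε → H (p - τ) = H p + 2 ^ c * H (-τ)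

/-- The scaling exponents of `H` on the two sides of `p` differ by `e`. -/
def Jump (H : ℝ → ℝ) (p : ℝ) (e : ℤ) : Prop :=
  ∃ a b, RightGerm H p a ∧ LeftGerm H p b ∧ e = a - b

lemma rightGerm_reflect {H : ℝ → ℝ} {p : ℝ} {c : ℤ} :
    RightGerm (reflect H) p c ↔ LeftGerm H (-p) c := by
  unfold RightGerm LeftGerm reflect
  refine exists_congr fun ε => and_congr_right fun _ => forall_congr' fun τ =>
    forall_congr' fun _ => forall_congr' fun _ => ?_
  rw [show -(p + τ) = -p - τ by ring]
  constructor <;> intro h <;> linarith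

namespace ConjPL

variable {H K G G' : ℝ → ℝ}

lemma pos (h : ConjPL H K G G') (h0 : H 0 = 0) {x : ℝ} (hx : 0 < x) : 0 < H x := by
  rw [← h0]; exact h.mono hx

lemma reflect_zero (h0 : H 0 = 0) : _root_.reflect H 0 = 0 := by simp [_root_.reflect, h0]

lemma rightGerm_unique (h : ConjPL H K G G') (h0 : H 0 = 0) {p : ℝ} {a b : ℤ}
    (ha : RightGerm H p a) (hb : RightGerm H p b) : a = b := by
  obtain ⟨ε, hε, ha⟩ := ha
  obtain ⟨δ, hδ, hb⟩ := hb
  have hm : 0 < min ε δ := lt_min hε hδ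
  have h1 := ha (min ε δ / 2) (by linarith) (by linarith [min_le_left ε δ])
  have h2 := hb (min ε δ / 2) (by linarith) (by linarith [min_le_right ε δ])
  have hpos := h.pos h0 (half_pos hm)
  have h3 : (2 : ℝ) ^ a = 2 ^ b := by
    have : (2 : ℝ) ^ a * H (min ε δ / 2) = 2 ^ b * H (min ε δ / 2) := by linarith
    exact mul_right_cancel₀ hpos.ne' this
  exact zpow_right_injective₀ (by norm_num) (by norm_num) h3

lemma leftGerm_unique (h : ConjPL H K G G') (h0 : H 0 = 0) {p : ℝ} {a b : ℤ}
    (ha : LeftGerm H p a) (hb : LeftGerm H p b) : a = b := by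
  rw [← neg_neg p, ← rightGerm_reflect] at ha hb
  exact h.reflect.rightGerm_unique (reflect_zero h0) ha hb

lemma jump_unique (h : ConjPL H K G G') (h0 : H 0 = 0) {p : ℝ} {e f : ℤ}
    (he : Jump H p e) (hf : Jump H p f) : e = f := by
  obtain ⟨a, b, ha, hb, rfl⟩ := he
  obtain ⟨a', b', ha', hb', rfl⟩ := hf
  rw [h.rightGerm_unique h0 ha ha', h.leftGerm_unique h0 hb hb']

/-- The germ at `p` is the germ at `2 * p` pulled back by the branch of `G` at `H p`. -/
lemma rightGerm_half (h : ConjPL H K G G') (h0 : H 0 = 0) {p : ℝ} {a c : ℤ}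
    (hc : RightGerm H (2 * p) c) (ha : RightSlope G (H p) a) : RightGerm H p (c + 1 - a) := by
  obtain ⟨ε, hε, hc⟩ := hc
  obtain ⟨δ, hδ, ha⟩ := ha
  obtain ⟨η, hη, hd⟩ := h.double_right h0
  have hK : p < K (H p + δ) := by
    conv_lhs => rw [← h.KH p]
    exact h.monoK (by linarith)
  refine ⟨min (ε / 2) (min η (K (H p + δ) - p)), by
    refine lt_min (by linarith) (lt_min hη (by linarith)), fun τ h1 h2 => ?_⟩
  obtain ⟨h2, h3⟩ := lt_min_iff.1 h2
  obtain ⟨h3, h4⟩ := lt_min_iff.1 h3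
  have e1 := hc (2 * τ) (by linarith) (by linarith)
  rw [hd τ h1 h3, ← mul_add, ← h.hG, ← h.hG] at e1
  have hu : H (p + τ) - H p < δ := by
    have := h.mono (show p + τ < K (H p + δ) by linarith)
    rw [h.HK] at this; linarith
  have e2 := ha (H (p + τ) - H p) (by linarith [h.mono (show p < p + τ by linarith)]) hu
  rw [add_sub_cancel, e1] at e2
  have e3 : (2 : ℝ) ^ c * (2 * H τ) = 2 ^ a * (H (p + τ) - H p) := by linarith
  have e4 : H (p + τ) = H p + (2 : ℝ) ^ c * (2 * H τ) / 2 ^ a := by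
    rw [e3, mul_div_cancel_left₀ _ (by positivity)]; ring
  rw [e4, zpow_sub₀ (by norm_num), zpow_add₀ (by norm_num), zpow_one]
  ring

lemma leftGerm_half (h : ConjPL H K G G') (h0 : H 0 = 0) {p : ℝ} {a c : ℤ}
    (hc : LeftGerm H (2 * p) c) (ha : LeftSlope G (H p) a) : LeftGerm H p (c + 1 - a) := by
  rw [← neg_neg p, ← rightGerm_reflect]
  refine h.reflect.rightGerm_half (reflect_zero h0) ?_ ?_
  · rw [rightGerm_reflect]; simpa using hc
  · rw [rightSlope_reflect]; simpa [_root_.reflect] using ha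

lemma rightGerm_add_int (h : ConjPL H K G G') {p : ℝ} {c : ℤ} (hc : RightGerm H p c) (z : ℤ) :
    RightGerm H (p + z) c := by
  obtain ⟨ε, hε, hc⟩ := hc
  refine ⟨ε, hε, fun τ h1 h2 => ?_⟩
  have := hc τ h1 h2
  rw [show p + z + τ = p + τ + z by ring, h.Hint, h.Hint, this]; ring

lemma leftGerm_add_int (h : ConjPL H K G G') {p : ℝ} {c : ℤ} (hc : LeftGerm H p c) (z : ℤ) :
    LeftGerm H (p + z) c := by
  obtain ⟨ε, hε, hc⟩ := hc
  refine ⟨ε, hε, fun τ h1 h2 => ?_⟩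
  have := hc τ h1 h2
  rw [show p + z - τ = p - τ + z by ring, h.Hint, h.Hint, this]; ring

lemma jump_add_int (h : ConjPL H K G G') {p : ℝ} {e : ℤ} (he : Jump H p e) (z : ℤ) :
    Jump H (p + z) e := by
  obtain ⟨a, b, ha, hb, rfl⟩ := he
  exact ⟨a, b, h.rightGerm_add_int ha z, h.leftGerm_add_int hb z, rfl⟩

lemma jump_exists (h : ConjPL H K G G') (h0 : H 0 = 0) {p : ℝ} (hp : p ∈ zpows 2) :
    ∃ e, Jump H p e := by
  obtain ⟨N, hz⟩ := mem_dy.1 hp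
  have hex : (∃ a, RightGerm H p a) ∧ ∃ b, LeftGerm H p b := by
    clear hp
    induction N generalizing p with
    | zero =>
      obtain ⟨z, hz⟩ := hz
      rw [pow_zero, one_mul] at hz
      subst hz
      have h1 := h.rightGerm_add_int (p := 0) (c := 0) ⟨1, one_pos, fun τ _ _ => by simp [h0]⟩ z
      have h2 := h.leftGerm_add_int (p := 0) (c := 0) ⟨1, one_pos, fun τ _ _ => by simp [h0]⟩ z
      rw [zero_add] at h1 h2
      exact ⟨⟨0, h1⟩, ⟨0, h2⟩⟩
    | succ N ih =>
      obtain ⟨z, hz⟩ := hz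
      obtain ⟨⟨a, ha⟩, b, hb⟩ := @ih (2 * p) ⟨z, by rw [← hz]; ring⟩
      obtain ⟨s, hs⟩ := h.plG.right (H p)
      obtain ⟨t, ht⟩ := h.plG.left (H p)
      exact ⟨⟨_, h.rightGerm_half h0 ha hs⟩, _, h.leftGerm_half h0 hb ht⟩
  obtain ⟨⟨a, ha⟩, b, hb⟩ := hex
  exact ⟨a - b, a, b, ha, hb, rfl⟩

lemma jump_half (h : ConjPL H K G G') (h0 : H 0 = 0) {p : ℝ} {e : ℤ} (he : Jump H (2 * p) e)
    (hp : H p ∉ breaks G) : Jump H p e := by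
  obtain ⟨a, b, ha, hb, rfl⟩ := he
  obtain ⟨s, hs, ht⟩ : ∃ s, LeftSlope G (H p) s ∧ RightSlope G (H p) s := by
    simpa [breaks] using hp
  exact ⟨_, _, h.rightGerm_half h0 ha ht, h.leftGerm_half h0 hb hs, by ring⟩

lemma rightGerm_translate (h : ConjPL H K G G') (h0 : H 0 = 0) {q p : ℝ} {b c : ℤ}
    (hb : RightSlope (fun x => K (H x + q)) p b) (hc : RightGerm H p c) {c' : ℤ}
    (hc' : RightGerm H (K (H p + q)) c') : c = c' + b := by
  obtain ⟨ε, hε, hb⟩ := hb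
  obtain ⟨δ, hδ, hc⟩ := hc
  obtain ⟨η, hη, hc'⟩ := hc'
  obtain ⟨θ, hθ, hs⟩ := h.scale_right h0 b
  have h2 : (0 : ℝ) < 2 ^ b := by positivity
  obtain ⟨τ, h1, hτ⟩ := exists_between
    (show 0 < min (min ε δ) (min (η / 2 ^ b) θ) by positivity)
  simp only [lt_min_iff, lt_div_iff₀ h2] at hτ
  obtain ⟨⟨t1, t2⟩, t3, t4⟩ := hτ
  have e1 := congrArg H (hb τ h1 t1)
  simp only at e1
  rw [h.HK, hc' (2 ^ b * τ) (by positivity) (by linarith), h.HK, hc τ h1 t2, hs τ h1 t4] at e1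
  have hpos := h.pos h0 h1
  have h3 : (2 : ℝ) ^ c = 2 ^ (c' + b) := by
    rw [zpow_add₀ (by norm_num)]
    exact mul_right_cancel₀ hpos.ne' (by linarith)
  exact zpow_right_injective₀ (by norm_num) (by norm_num) h3

lemma leftGerm_translate (h : ConjPL H K G G') (h0 : H 0 = 0) {q p : ℝ} {b c : ℤ}
    (hb : LeftSlope (fun x => K (H x + q)) p b) (hc : LeftGerm H p c) {c' : ℤ}
    (hc' : LeftGerm H (K (H p + q)) c') : c = c' + b := by
  refine h.reflect.rightGerm_translate (reflect_zero h0) (p := -p) (q := -q) ?_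
    (rightGerm_reflect.2 (by simpa using hc)) (c' := c') (rightGerm_reflect.2 ?_)
  · have : (fun x => _root_.reflect K (_root_.reflect H x + -q)) =
        _root_.reflect (fun x => K (H x + q)) := by
      funext x; simp [_root_.reflect]; congr 1; ring
    rw [this, rightSlope_reflect]; simpa using hb
  · convert hc' using 1
    simp [_root_.reflect]; congr 1; ring

/-- Where the conjugate `K ∘ (· + q) ∘ H` of a translation has no break, it preserves the jump:
the translation itself has no breaks. -/
lemma jump_translate (h : ConjPL H K G G') (h0 : H 0 = 0) {q p : ℝ} {b e e' : ℤ}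
    (hl : LeftSlope (fun x => K (H x + q)) p b) (hr : RightSlope (fun x => K (H x + q)) p b)
    (he : Jump H p e) (he' : Jump H (K (H p + q)) e') : e = e' := by
  obtain ⟨a, c, ha, hc, rfl⟩ := he
  obtain ⟨a', c', ha', hc', rfl⟩ := he'
  have := h.rightGerm_translate h0 hr ha ha'
  have := h.leftGerm_translate h0 hl hc hc'
  omega

lemma rightSlope_translate (h : ConjPL H K G G') {p δ : ℝ} {a b : ℤ}
    (ha : RightGerm H p a) (hb : RightGerm H (p + δ) b) :
    RightSlope (fun y => H (K y + δ)) (H p) (b - a) := by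
  obtain ⟨ε, hε, ha⟩ := ha
  obtain ⟨η, hη, hb⟩ := hb
  have hm : 0 < min ε η := lt_min hε hη
  refine ⟨H (p + min ε η) - H p, by linarith [h.mono (show p < p + min ε η by linarith)],
    fun σ h1 h2 => ?_⟩
  -- `σ` is the increment of `H` over `[p, p + τ]`
  obtain ⟨τ, hτ⟩ : ∃ τ, τ = K (H p + σ) - p := ⟨_, rfl⟩
  have hK : K (H p + σ) = p + τ := by rw [hτ]; ring
  have hσ : H (p + τ) = H p + σ := by rw [← hK, h.HK]
  have h3 : 0 < τ := by
    have := h.mono.lt_iff_lt.1 (show H p < H (p + τ) by rw [hσ]; linarith)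
    linarith
  have h4 : τ < min ε η := by
    have := h.mono.lt_iff_lt.1 (show H (p + τ) < H (p + min ε η) by rw [hσ]; linarith)
    linarith
  obtain ⟨h4, h5⟩ := lt_min_iff.1 h4
  have e1 := ha τ h3 h4
  have e2 := hb τ h3 h5
  simp only
  rw [hK, h.KH, show p + τ + δ = p + δ + τ by ring, e2, zpow_sub₀ (by norm_num)]
  have e3 : σ = 2 ^ a * H τ := by linarith
  rw [e3]; field_simp

lemma leftSlope_translate (h : ConjPL H K G G') {p δ : ℝ} {a b : ℤ}
    (ha : LeftGerm H p a) (hb : LeftGerm H (p + δ) b) :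
    LeftSlope (fun y => H (K y + δ)) (H p) (b - a) := by
  have := h.reflect.rightSlope_translate (p := -p) (δ := -δ) (a := a) (b := b)
    (rightGerm_reflect.2 (by simpa using ha))
    (rightGerm_reflect.2 (by rw [show -(-p + -δ) = p + δ by ring]; exact hb))
  have e : (fun y => _root_.reflect H (_root_.reflect K y + -δ)) =
      _root_.reflect (fun y => H (K y + δ)) := by
    funext x; simp [_root_.reflect]; congr 1; ring
  rw [e, rightSlope_reflect] at this
  simpa [_root_.reflect] using this

end ConjPL
/-! ### Standard dyadic intervals -/

/-- `F` maps the standard dyadic interval `[i / 2 ^ m, (i + 1) / 2 ^ m]` affinely onto a standard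
dyadic interval. -/
def Good (F : ℝ → ℝ) (m : ℕ) (i : ℤ) : Prop :=
  ∃ (m' : ℕ) (i' : ℤ), ∀ t : ℝ, 0 ≤ t → t ≤ 1 → F ((i + t) / 2 ^ m) = (i' + t) / 2 ^ m'

lemma good_of_affine {b : ℝ} (hb : b ∈ zpows 2) (a : ℤ) : ∃ M : ℕ, ∀ (F : ℝ → ℝ) (m : ℕ) (i : ℤ),
    M ≤ m → (∀ x : ℝ, i / 2 ^ m ≤ x → x ≤ (i + 1) / 2 ^ m → F x = 2 ^ a * x + b) →
      Good F m i := by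
  obtain ⟨N, hN⟩ := mem_dy.1 hb
  refine ⟨a.toNat + N, fun F m i hm hF => ?_⟩
  obtain ⟨m', hm'⟩ : ∃ m' : ℕ, (m' : ℤ) = m - a := ⟨(m - a).toNat, by omega⟩
  obtain ⟨z, hz⟩ := dy_raise (show N ≤ m' by omega) hN
  refine ⟨m', i + z, fun t h0 h1 => ?_⟩
  rw [hF _ (by gcongr; linarith) (by gcongr)]
  have e : (2 : ℝ) ^ m = 2 ^ m' * 2 ^ a := by
    rw [← zpow_natCast, ← zpow_natCast, ← zpow_add₀ (by norm_num), hm']; congr 1; ring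
  push_cast
  rw [← hz, e]
  field_simp
  ring

/-- Sufficiently small standard dyadic intervals near a given point are good. -/
lemma DyadicPL.good_local {F : ℝ → ℝ} (hF : DyadicPL F) (x : ℝ) :
    ∃ ε > 0, ∃ M : ℕ, ∀ (m : ℕ) (i : ℤ), M ≤ m → x - ε < i / 2 ^ m → (i + 1) / 2 ^ m < x + ε →
      Good F m i := by
  by_cases hx : x ∈ zpows 2
  · obtain ⟨a, ε, hε, ha⟩ := hF.right x
    obtain ⟨b, δ, hδ, hb⟩ := hF.left x
    obtain ⟨M₁, h1⟩ := good_of_affine (dy_sub (hF.dy x hx) (dy_mul (dy_zpow a) hx)) a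
    obtain ⟨M₂, h2⟩ := good_of_affine (dy_sub (hF.dy x hx) (dy_mul (dy_zpow b) hx)) b
    obtain ⟨N, hN⟩ := mem_dy.1 hx
    refine ⟨min ε δ, lt_min hε hδ, max N (max M₁ M₂), fun m i hm hl hr => ?_⟩
    have := min_le_left ε δ
    have := min_le_right ε δ
    -- `x` is an endpoint of standard intervals of level `m`, so it is not interior to this one
    obtain ⟨z, hz⟩ := dy_raise (show N ≤ m by omega) hN
    have hxz : x = z / 2 ^ m := by rw [← hz]; field_simp
    rcases le_or_gt z i with hzi | hzi
    · refine h1 F m i (by omega) fun y hy1 hy2 => ?_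
      have : x ≤ i / 2 ^ m := by rw [hxz]; gcongr
      rcases (this.trans hy1).eq_or_lt with rfl | hlt
      · ring
      · have := ha (y - x) (by linarith) (by linarith)
        rw [add_sub_cancel] at this
        rw [this]; ring
    · refine h2 F m i (by omega) fun y hy1 hy2 => ?_
      have : (i + 1) / 2 ^ m ≤ x := by
        rw [hxz]; gcongr; exact_mod_cast hzi
      rcases (hy2.trans this).eq_or_lt with rfl | hlt
      · ring
      · have := hb (x - y) (by linarith) (by linarith)
        rw [sub_sub_cancel] at this
        rw [this]; ring
  · obtain ⟨a, ⟨δ, hδ, hb⟩, ε, hε, ha⟩ := hF.off x hx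
    have hm : 0 < min ε δ := lt_min hε hδ
    have := min_le_left ε δ
    have := min_le_right ε δ
    obtain ⟨q, hq, h1, h2⟩ := dy_dense (show x < x + min ε δ by linarith)
    have hFq := ha (q - x) (by linarith) (by linarith)
    rw [add_sub_cancel] at hFq
    obtain ⟨M, h3⟩ := good_of_affine (dy_sub (hF.dy q hq) (dy_mul (dy_zpow a) hq)) a
    refine ⟨min ε δ, hm, M, fun m i hm hl hr => h3 F m i hm fun y hy1 hy2 => ?_⟩
    rw [hFq]
    rcases lt_trichotomy y x with h | rfl | h
    · have := hb (x - y) (by linarith) (by linarith)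
      rw [sub_sub_cancel] at this
      rw [this]; ring
    · ring
    · have := ha (y - x) (by linarith) (by linarith)
      rw [add_sub_cancel] at this
      rw [this]; ring

/-- A deepest interval that is not good exists: otherwise repeated halving would produce a nested
sequence of intervals that are not good, contradicting `DyadicPL.good_local` at its limit. -/
lemma DyadicPL.exists_deepest {F : ℝ → ℝ} (hF : DyadicPL F) (h0 : ¬ Good F 0 0) :
    ∃ m i, ¬ Good F m i ∧ Good F (m + 1) (2 * i) ∧ Good F (m + 1) (2 * i + 1) := by
  by_contra! hcon
  have step : ∀ (m : ℕ) (i : ℤ), ¬ Good F m i →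
      ∃ j, (j = 2 * i ∨ j = 2 * i + 1) ∧ ¬ Good F (m + 1) j := by
    intro m i hi
    by_cases h1 : Good F (m + 1) (2 * i)
    · exact ⟨_, Or.inr rfl, hcon m i hi h1⟩
    · exact ⟨_, Or.inl rfl, h1⟩
  choose! f hf using step
  obtain ⟨s, hs0, hsS⟩ : ∃ s : ℕ → ℤ, s 0 = 0 ∧ ∀ k, s (k + 1) = f k (s k) :=
    ⟨fun k => Nat.rec 0 (fun k i => f k i) k, rfl, fun _ => rfl⟩
  have hbad : ∀ k, ¬ Good F k (s k) := by
    intro k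
    induction k with
    | zero => rwa [hs0]
    | succ k ih => rw [hsS]; exact (hf k _ ih).2
  have hs : ∀ k, s (k + 1) = 2 * s k ∨ s (k + 1) = 2 * s k + 1 := fun k => by
    rw [hsS]; exact (hf k _ (hbad k)).1
  have hmono : Monotone (fun k => (s k : ℝ) / 2 ^ k : ℕ → ℝ) := by
    refine monotone_nat_of_le_succ fun k => ?_
    have h2 : (0 : ℝ) < 2 ^ k := by positivity
    rw [pow_succ, div_le_div_iff₀ h2 (by positivity)]
    rcases hs k with h | h <;> rw [h] <;> push_cast <;> nlinarith
  have hanti : Antitone (fun k => ((s k : ℝ) + 1) / 2 ^ k : ℕ → ℝ) := by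
    refine antitone_nat_of_succ_le fun k => ?_
    have h2 : (0 : ℝ) < 2 ^ k := by positivity
    rw [pow_succ, div_le_div_iff₀ (by positivity) h2]
    rcases hs k with h | h <;> rw [h] <;> push_cast <;> nlinarith
  have hle : (fun k : ℕ => (s k : ℝ) / 2 ^ k) ≤ fun k : ℕ => ((s k : ℝ) + 1) / 2 ^ k := fun k => by
    simp only; gcongr; linarith
  have hmem := Monotone.ciSup_mem_iInter_Icc_of_antitone hmono hanti hle
  set x := ⨆ k : ℕ, ((s k : ℤ) : ℝ) / 2 ^ k
  rw [Set.mem_iInter] at hmem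
  obtain ⟨ε, hε, M, hM⟩ := hF.good_local x
  obtain ⟨n, hn⟩ := exists_pow_lt_of_lt_one hε (show (1 / 2 : ℝ) < 1 by norm_num)
  have hlen : ((s (max n M) : ℝ) + 1) / 2 ^ max n M - s (max n M) / 2 ^ max n M < ε := by
    rw [← sub_div, add_sub_cancel_left, ← one_div_pow]
    exact lt_of_le_of_lt
      (pow_le_pow_of_le_one (by norm_num) (by norm_num) (le_max_left n M)) hn
  obtain ⟨h1, h2⟩ := hmem (max n M)
  exact hbad _ (hM _ _ (le_max_right n M) (by linarith) (by linarith))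

/-- A map that moves all points to the right by less than `2 ^ (-(N + 1))` cannot carry a standard
dyadic interval to another one if one of them has level at most `N`: lengths being powers of two,
the two intervals would coincide and their endpoints would be fixed. -/
lemma level_lt {F : ℝ → ℝ} {N : ℕ} (hpos : ∀ x, x < F x) (hlt : ∀ x, F x < x + (1 / 2) ^ (N + 1))
    {m m' : ℕ} {i i' : ℤ} (h0 : F (i / 2 ^ m) = i' / 2 ^ m')
    (h1 : F ((i + 1) / 2 ^ m) = (i' + 1) / 2 ^ m') : N < m ∧ N < m' := by
  have a1 := hpos (i / 2 ^ m)
  have a2 := hlt (i / 2 ^ m)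
  have a3 := hpos ((i + 1) / 2 ^ m)
  have a4 := hlt ((i + 1) / 2 ^ m)
  rw [h0] at a1 a2
  rw [h1] at a3 a4
  have hA : ((i : ℝ) + 1) / 2 ^ m = i / 2 ^ m + (1 / 2) ^ m := by rw [one_div_pow]; ring
  have hB : ((i' : ℝ) + 1) / 2 ^ m' = i' / 2 ^ m' + (1 / 2) ^ m' := by rw [one_div_pow]; ring
  rw [hA, hB] at a3
  rw [hA, hB] at a4
  have hpow : ∀ {k l : ℕ}, k ≤ l → (1 / 2 : ℝ) ^ l ≤ (1 / 2) ^ k := fun hkl =>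
    pow_le_pow_of_le_one (by norm_num) (by norm_num) hkl
  rcases lt_trichotomy m m' with hm | rfl | hm
  · refine ⟨?_, ?_⟩ <;> by_contra hN
    all_goals
      have b1 := hpow (show m + 1 ≤ m' from hm)
      have b2 := hpow (show m + 1 ≤ N + 1 by omega)
      rw [pow_succ (1 / 2 : ℝ) m] at b1 b2
      linarith
  · rw [and_self]
    by_contra hN
    have h2 : (0 : ℝ) < 2 ^ m := by positivity
    have b2 := hpow (show m + 1 ≤ N + 1 by omega)
    have c1 : (i : ℝ) < i' := by rwa [div_lt_div_iff_of_pos_right h2] at a1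
    have c2 : ((i : ℝ) + 1) / 2 ^ m ≤ i' / 2 ^ m := by
      gcongr; exact_mod_cast c1
    rw [hA] at c2
    rw [pow_succ (1 / 2 : ℝ) m] at b2
    have : (0 : ℝ) < (1 / 2) ^ m := by positivity
    linarith
  · refine ⟨?_, ?_⟩ <;> by_contra hN
    all_goals
      have b1 := hpow (show m' + 1 ≤ m from hm)
      have b2 := hpow (show m' + 1 ≤ N + 1 by omega)
      rw [pow_succ (1 / 2 : ℝ) m'] at b1 b2
      linarith

/-- If both halves of an interval that is not good are good, then `F` changes the last binary digit
of one of them. Otherwise the images are the two halves of one standard interval, in order. -/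
lemma digit_mismatch {F : ℝ → ℝ} {m m₁ m₂ : ℕ} {i j₁ j₂ : ℤ} (hbad : ¬ Good F m i) (hm₁ : 0 < m₁)
    (h1 : ∀ t : ℝ, 0 ≤ t → t ≤ 1 → F (((2 * i : ℤ) + t) / 2 ^ (m + 1)) = (j₁ + t) / 2 ^ m₁)
    (h2 : ∀ t : ℝ, 0 ≤ t → t ≤ 1 → F (((2 * i + 1 : ℤ) + t) / 2 ^ (m + 1)) = (j₂ + t) / 2 ^ m₂) :
    (2 * i) % 2 ≠ j₁ % 2 ∨ (2 * i + 1) % 2 ≠ j₂ % 2 := by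
  by_contra! hcon
  obtain ⟨u, rfl⟩ : ∃ u, j₁ = 2 * u := ⟨j₁ / 2, by omega⟩
  obtain ⟨w, rfl⟩ : ∃ w, j₂ = 2 * w + 1 := ⟨j₂ / 2, by omega⟩
  -- the images share an endpoint, with odd numerator in both representations
  have hmid : (2 * u + 1) * 2 ^ m₂ = (2 * w + 1) * (2 : ℤ) ^ m₁ := by
    have e1 := h1 1 zero_le_one le_rfl
    have e2 := h2 0 le_rfl zero_le_one
    push_cast at e1 e2
    rw [add_zero, e1, add_zero, div_eq_div_iff (by positivity) (by positivity)] at e2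
    refine Int.cast_injective (α := ℝ) ?_
    push_cast
    exact e2
  have hmm : m₁ = m₂ := by
    rcases lt_trichotomy m₁ m₂ with h | h | h
    · obtain ⟨d, rfl⟩ := Nat.exists_eq_add_of_lt h
      rw [show m₁ + d + 1 = m₁ + (d + 1) by ring, pow_add, mul_comm ((2 : ℤ) ^ m₁), ← mul_assoc] at hmid
      have := mul_right_cancel₀ (by positivity) hmid
      rw [pow_succ, ← mul_assoc] at this
      omega
    · exact h
    · obtain ⟨d, rfl⟩ := Nat.exists_eq_add_of_lt h
      rw [show m₂ + d + 1 = m₂ + (d + 1) by ring, pow_add, mul_comm ((2 : ℤ) ^ m₂), ← mul_assoc] at hmid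
      have := mul_right_cancel₀ (by positivity) hmid
      rw [pow_succ, ← mul_assoc] at this
      omega
  subst hmm
  have huw : u = w := by
    have := mul_right_cancel₀ (by positivity) hmid
    omega
  subst huw
  obtain ⟨k, rfl⟩ : ∃ k, m₁ = k + 1 := ⟨m₁ - 1, by omega⟩
  refine hbad ⟨k, u, fun t ht0 ht1 => ?_⟩
  rcases le_total t (1 / 2) with ht | ht
  · have := h1 (2 * t) (by linarith) (by linarith)
    push_cast at this
    rw [← mul_add, ← mul_add, pow_succ', pow_succ', mul_div_mul_left _ _ two_ne_zero,
      mul_div_mul_left _ _ two_ne_zero] at this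
    exact this
  · have := h2 (2 * t - 1) (by linarith) (by linarith)
    push_cast at this
    rw [show 2 * (i : ℝ) + 1 + (2 * t - 1) = 2 * (i + t) by ring,
      show 2 * (u : ℝ) + 1 + (2 * t - 1) = 2 * (u + t) by ring, pow_succ', pow_succ',
      mul_div_mul_left _ _ two_ne_zero, mul_div_mul_left _ _ two_ne_zero] at this
    exact this

/-- A function of odd integers that is periodic modulo a power of two, and whose value does not
change when the digits `i` above position `L` are replaced by `i'`, is constant when `i` and `i'`
have different last digits: by downward induction on `L`, it only depends on the residue
modulo `2 ^ L`. -/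
lemma const_of_mismatch {N : ℕ} {f : ℤ → ℤ} (hper : ∀ v w, v ≡ w [ZMOD 2 ^ N] → f v = f w)
    {i i' : ℤ} (hii : i % 2 ≠ i' % 2)
    (hmis : ∀ (L : ℕ) (v : ℤ), 0 < L → v % 2 = 1 → 0 < v → v < 2 ^ L →
      f (i * 2 ^ L + v) = f (i' * 2 ^ L + v)) :
    ∀ v w, v % 2 = 1 → w % 2 = 1 → f v = f w := by
  have main : ∀ d L : ℕ, L + d = N + 1 → 0 < L →
      ∀ v w, v % 2 = 1 → v ≡ w [ZMOD 2 ^ L] → f v = f w := by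
    intro d
    induction d with
    | zero =>
      intro L hL _ v w _ hvw
      exact hper v w (hvw.of_dvd (pow_dvd_pow 2 (by omega)))
    | succ d ih =>
      intro L hL hL0 v w hv hvw
      have ih := ih (L + 1) (by omega) (by omega)
      have hP : (0 : ℤ) < 2 ^ L := by positivity
      have h2 : (2 : ℤ) ∣ 2 ^ L := dvd_pow_self 2 hL0.ne'
      set P : ℤ := 2 ^ L with hPdef
      have hr0 := Int.emod_nonneg v hP.ne'
      have hrP := Int.emod_lt_of_pos v hP
      have hr : v % P % 2 = 1 := by rw [Int.emod_emod_of_dvd v h2]; exact hv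
      have hrw : w % P = v % P := hvw.symm
      -- only the parity of the digits above position `L` matters
      have red : ∀ (r a b : ℤ), r % 2 = 1 → a % 2 = b % 2 → f (a * P + r) = f (b * P + r) := by
        intro r a b hr hab
        obtain ⟨k, hk⟩ : ∃ k, b = a + 2 * k := ⟨(b - a) / 2, by omega⟩
        obtain ⟨c, hc⟩ := h2
        refine ih _ _ ?_ ?_
        · rw [hc, show a * (2 * c) = 2 * (a * c) by ring]; omega
        · rw [Int.modEq_iff_dvd]
          exact ⟨k, by rw [pow_succ, ← hPdef, hk]; ring⟩
      have hm := hmis L (v % P) hL0 hr (by omega) hrP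
      rw [← Int.ediv_mul_add_emod v P, ← Int.ediv_mul_add_emod w P, hrw]
      generalize v % P = r at *
      rcases Int.emod_two_eq_zero_or_one (v / P) with h1 | h1 <;>
      rcases Int.emod_two_eq_zero_or_one (w / P) with h3 | h3 <;>
      rcases Int.emod_two_eq_zero_or_one i with h4 | h4 <;>
      rcases Int.emod_two_eq_zero_or_one i' with h5 | h5
      all_goals first
        | omega
        | exact red _ _ _ hr (by omega)
        | exact (red _ _ i hr (by omega)).trans (hm.trans (red _ i' _ hr (by omega)))
        | exact (red _ _ i' hr (by omega)).trans (hm.symm.trans (red _ i _ hr (by omega)))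
  intro v w hv hw
  exact main N 1 (by omega) one_pos v w hv (by simpa [Int.ModEq] using hv.trans hw.symm)
/-! ### The jumps are almost constant -/

namespace ConjPL

variable {H K G G' : ℝ → ℝ}

/-- The jump at a dyadic point of high level is a function of the numerator modulo a fixed power
of two. -/
lemma exists_code (h : ConjPL H K G G') (h0 : H 0 = 0) :
    ∃ (N : ℕ) (f : ℤ → ℤ), (∀ v w, v ≡ w [ZMOD 2 ^ N] → f v = f w) ∧
      ∀ (n : ℕ) (v : ℤ), N ≤ n → v % 2 = 1 → Jump H (v / 2 ^ n) (f v) := by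
  obtain ⟨N, hN⟩ := h.breaks_level
  have hex : ∀ v : ℤ, ∃ e, Jump H ((v : ℝ) / 2 ^ N) e := fun v => h.jump_exists h0 (dy_div v N)
  choose f hf using hex
  refine ⟨N, f, fun v w hvw => ?_, fun n v hn hv => ?_⟩
  · obtain ⟨k, hk⟩ := hvw.dvd
    refine h.jump_unique h0 (p := (w : ℝ) / 2 ^ N) ?_ (hf w)
    have := h.jump_add_int (hf v) k
    convert this using 1
    have : (w : ℝ) = v + 2 ^ N * k := by
      have : w = v + 2 ^ N * k := by omega
      rw [this]; push_cast; ring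
    rw [this]; field_simp
  · induction n, hn using Nat.le_induction with
    | base => exact hf v
    | succ n hn ih =>
      refine h.jump_half h0 ?_ ?_
      · convert ih using 1
        rw [pow_succ]; field_simp
      · intro hb
        obtain ⟨z, hz⟩ := hN _ hb
        obtain ⟨d, rfl⟩ := Nat.exists_eq_add_of_le hn
        have h3 : (v : ℝ) = z * (2 ^ d * 2) := by
          rw [← hz, pow_succ, pow_add]; field_simp
        have h4 : v = z * (2 ^ d * 2) := by exact_mod_cast h3
        rw [h4, ← mul_assoc] at hv
        omega

/-- The conjugates of small translations are uniformly close to the identity. -/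
lemma exists_small (h : ConjPL H K G G') {δ : ℝ} (hδ : 0 < δ) :
    ∃ n : ℕ, ∀ x, x < K (H x + (1 / 2) ^ n) ∧ K (H x + (1 / 2) ^ n) < x + δ := by
  have hc := h.cont
  obtain ⟨c, -, hmin⟩ := isCompact_Icc.exists_isMinOn (Set.nonempty_Icc.2 zero_le_one)
    (f := fun x => H (x + δ) - H x) (s := Set.Icc (0 : ℝ) 1)
    (Continuous.continuousOn (by fun_prop))
  have hpos : 0 < H (c + δ) - H c := by linarith [h.mono (show c < c + δ by linarith)]
  obtain ⟨n, hn⟩ := exists_pow_lt_of_lt_one hpos (show (1 / 2 : ℝ) < 1 by norm_num)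
  refine ⟨n, fun x => ⟨?_, ?_⟩⟩
  · conv_lhs => rw [← h.KH x]
    exact h.monoK (by linarith [show (0 : ℝ) < (1 / 2) ^ n by positivity])
  · have h1 : H (c + δ) - H c ≤ H (Int.fract x + δ) - H (Int.fract x) :=
      hmin (⟨Int.fract_nonneg x, (Int.fract_lt_one x).le⟩ : Int.fract x ∈ Set.Icc (0 : ℝ) 1)
    have h2 := h.Hint (Int.fract x) ⌊x⌋
    have h3 := h.Hint (Int.fract x + δ) ⌊x⌋
    rw [Int.fract_add_floor] at h2
    rw [show Int.fract x + δ + ⌊x⌋ = x + δ by linarith [Int.fract_add_floor x]] at h3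
    rw [← h.KH (x + δ)]
    exact h.monoK (by linarith)

/-- The conjugate of a small dyadic translation maps some standard dyadic interval to another one,
both of high level, changing the last digit of its index. Comparing the jumps at the dyadic points
of these intervals shows that the jump is constant at all dyadic points of high level. -/
lemma jump_const (h : ConjPL H K G G') (h0 : H 0 = 0) :
    ∃ (N : ℕ) (c : ℤ), ∀ (n : ℕ) (v : ℤ), N ≤ n → v % 2 = 1 → Jump H (v / 2 ^ n) c := by
  obtain ⟨N, f, hper, hf⟩ := h.exists_code h0
  suffices hconst : ∀ v w, v % 2 = 1 → w % 2 = 1 → f v = f w from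
    ⟨N, f 1, fun n v hn hv => by rw [hconst 1 v rfl hv]; exact hf n v hn hv⟩
  obtain ⟨n, hn⟩ := h.exists_small (δ := (1 / 2) ^ (N + 1)) (by positivity)
  have hq : ((1 / 2 : ℝ)) ^ n ∈ zpows 2 := by
    have := dy_div 1 n
    rw [one_div_pow]; simpa using this
  have hF := h.translate hq
  obtain ⟨F, hFdef⟩ : ∃ F, F = fun x => K (H x + (1 / 2) ^ n) := ⟨_, rfl⟩
  rw [← hFdef] at hF
  have hpos : ∀ x, x < F x := fun x => by rw [hFdef]; exact (hn x).1
  have hlt : ∀ x, F x < x + (1 / 2) ^ (N + 1) := fun x => by rw [hFdef]; exact (hn x).2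
  have hlev : ∀ {m m' : ℕ} {i i' : ℤ},
      (∀ t : ℝ, 0 ≤ t → t ≤ 1 → F ((i + t) / 2 ^ m) = (i' + t) / 2 ^ m') → N < m ∧ N < m' := by
    intro m m' i i' hg
    have e0 := hg 0 le_rfl zero_le_one
    rw [add_zero, add_zero] at e0
    exact level_lt hpos hlt e0 (hg 1 zero_le_one le_rfl)
  have hbad0 : ¬ Good F 0 0 := fun ⟨m', i', hg⟩ => absurd (hlev hg).1 (by omega)
  -- a digit mismatch propagates to the jumps
  have use : ∀ {m m' : ℕ} {i i' : ℤ},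
      (∀ t : ℝ, 0 ≤ t → t ≤ 1 → F ((i + t) / 2 ^ m) = (i' + t) / 2 ^ m') → i % 2 ≠ i' % 2 →
      ∀ v w, v % 2 = 1 → w % 2 = 1 → f v = f w := by
    intro m m' i i' hg hii
    obtain ⟨hm, hm'⟩ := hlev hg
    refine const_of_mismatch hper hii fun L v hL hv hv0 hvL => ?_
    have hL2 : (0 : ℝ) < 2 ^ L := by positivity
    have hodd : ∀ k : ℤ, (k * 2 ^ L + v) % 2 = 1 := by
      intro k
      obtain ⟨d, rfl⟩ : ∃ d, L = d + 1 := ⟨L - 1, by omega⟩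
      rw [pow_succ, ← mul_assoc]; omega
    have j1 := hf (m + L) (i * 2 ^ L + v) (by omega) (hodd i)
    have j2 := hf (m' + L) (i' * 2 ^ L + v) (by omega) (hodd i')
    have hv0' : (0 : ℝ) < v := by exact_mod_cast hv0
    have hvL' : (v : ℝ) < 2 ^ L := by exact_mod_cast hvL
    have e1 : (((i * 2 ^ L + v : ℤ) : ℝ)) / 2 ^ (m + L) = (i + v / 2 ^ L) / 2 ^ m := by
      push_cast; rw [pow_add]; field_simp
    have e2 : (((i' * 2 ^ L + v : ℤ) : ℝ)) / 2 ^ (m' + L) = (i' + v / 2 ^ L) / 2 ^ m' := by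
      push_cast; rw [pow_add]; field_simp
    rw [e1] at j1
    set t : ℝ := v / 2 ^ L with ht
    have ht0 : 0 < t := by positivity
    have ht1 : t < 1 := by rw [ht, div_lt_one hL2]; exact hvL'
    rw [e2, ← hg t ht0.le ht1.le] at j2
    rw [hFdef] at j2
    -- `F` has the same slope `2 ^ (m - m')` on both sides of an interior point
    have hsl : (2 : ℝ) ^ ((m : ℤ) - m') = 2 ^ m / 2 ^ m' := by
      rw [zpow_sub₀ (by norm_num), zpow_natCast, zpow_natCast]
    refine h.jump_translate h0 (b := (m : ℤ) - m') ?_ ?_ j1 j2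
    · rw [← hFdef]
      refine ⟨t / 2 ^ m, by positivity, fun τ h1 h2 => ?_⟩
      rw [lt_div_iff₀ (by positivity)] at h2
      have := hg (t - τ * 2 ^ m) (by linarith) (by nlinarith [show (0 : ℝ) < 2 ^ m by positivity])
      rw [show ((i : ℝ) + t) / 2 ^ m - τ = (i + (t - τ * 2 ^ m)) / 2 ^ m by field_simp; ring,
        this, hg t ht0.le ht1.le, hsl]
      field_simp; ring
    · rw [← hFdef]
      refine ⟨(1 - t) / 2 ^ m, by have : 0 < 1 - t := by linarith
                                  positivity, fun τ h1 h2 => ?_⟩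
      rw [lt_div_iff₀ (by positivity)] at h2
      have := hg (t + τ * 2 ^ m) (by positivity) (by linarith)
      rw [show ((i : ℝ) + t) / 2 ^ m + τ = (i + (t + τ * 2 ^ m)) / 2 ^ m by field_simp; ring,
        this, hg t ht0.le ht1.le, hsl]
      field_simp; ring
  obtain ⟨m, i, hbad, ⟨m₁, j₁, hg₁⟩, m₂, j₂, hg₂⟩ := hF.exists_deepest hbad0
  rcases digit_mismatch hbad (by have := (hlev hg₁).2; omega) hg₁ hg₂ with hne | hne
  · exact use hg₁ hne
  · exact use hg₂ hne

/-! ### Linearity near the fixed point -/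

/-- If the jump is constant at dyadic points of `(0, 2 ^ (-M))`, then conjugates by `H` of
translations have no breaks there. -/
lemma translate_affine (h : ConjPL H K G G') (h0 : H 0 = 0) {N : ℕ} {c : ℤ}
    (hc : ∀ (n : ℕ) (v : ℤ), N ≤ n → v % 2 = 1 → Jump H (v / 2 ^ n) c) {M m : ℕ} (hM : N ≤ M)
    (hm : M < m) :
    ∃ κ : ℤ, ∀ x, 0 ≤ x → x + (1 / 2) ^ m ≤ (1 / 2) ^ M →
      H (x + (1 / 2) ^ m) = H ((1 / 2) ^ m) + 2 ^ κ * H x := by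
  have hK0 : K 0 = 0 := by rw [← h0, h.KH, h0]
  -- a dyadic point strictly between `0` and `2 ^ (-M)` has level greater than `M`
  have hjump : ∀ p ∈ zpows 2, 0 < p → p < (1 / 2) ^ M → Jump H p c := by
    intro p hp hp0 hpM
    obtain ⟨k, z, hz⟩ := mem_dy.1 hp
    have : ∃ (n : ℕ) (v : ℤ), v % 2 = 1 ∧ p = v / 2 ^ n := by
      have hp1 : p < 1 := hpM.trans_le (pow_le_one₀ (by norm_num) (by norm_num))
      clear hpM
      induction k generalizing z with
      | zero =>
        rw [pow_zero, one_mul] at hz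
        rw [hz] at hp0 hp1
        have h1 : 0 < z := by exact_mod_cast hp0
        have h2 : z < 1 := by exact_mod_cast hp1
        omega
      | succ k ih =>
        rcases Int.emod_two_eq_zero_or_one z with h1 | h1
        · obtain ⟨w, rfl⟩ : ∃ w, z = 2 * w := ⟨z / 2, by omega⟩
          refine ih w ?_
          push_cast at hz
          rw [pow_succ] at hz
          linarith
        · exact ⟨k + 1, z, h1, by rw [← hz]; field_simp⟩
    obtain ⟨n, v, hv, rfl⟩ := this
    refine hc n v ?_ hv
    by_contra hn
    rw [one_div_pow, div_lt_div_iff₀ (by positivity) (by positivity), one_mul] at hpM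
    have h1 : (2 : ℝ) ^ n ≤ 2 ^ M := pow_le_pow_right₀ (by norm_num) (by omega)
    have h2 : (1 : ℝ) ≤ v := by
      have : (0 : ℝ) < v := by
        by_contra hneg
        exact absurd hp0 (not_lt.2 (div_nonpos_of_nonpos_of_nonneg (not_lt.1 hneg) (by positivity)))
      have : 0 < v := by exact_mod_cast this
      exact_mod_cast this
    nlinarith [show (0 : ℝ) < 2 ^ M by positivity]
  have hδ : (0 : ℝ) < (1 / 2) ^ m := by positivity
  have hδM : ((1 / 2 : ℝ)) ^ m < (1 / 2) ^ M :=
    pow_lt_pow_right_of_lt_one₀ (by norm_num) (by norm_num) hm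
  have hδD : ((1 / 2 : ℝ)) ^ m ∈ zpows 2 := by
    have := dy_div 1 m
    rw [one_div_pow]; simpa using this
  set δ : ℝ := (1 / 2) ^ m
  have hT := h.symm.translate hδD
  obtain ⟨κ, hκ⟩ := hT.right 0
  have haff := affine_of_slopes hκ (b := H ((1 / 2) ^ M - δ)) (fun y hy0 hyb => ?_) (hT.left _)
  · refine ⟨κ, fun x hx0 hx1 => ?_⟩
    have := haff (H x) ⟨by rw [← h0]; exact h.mono.monotone hx0,
      h.mono.monotone (by linarith)⟩
    rw [h.KH, hK0, zero_add, sub_zero] at this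
    exact this
  · by_cases hyD : y ∈ zpows 2
    · have hp0 : 0 < K y := by rw [← hK0]; exact h.monoK hy0
      have hpb : K y < (1 / 2) ^ M - δ := by
        rw [← h.KH ((1 / 2) ^ M - δ)]; exact h.monoK hyb
      have hpD := h.KD y hyD
      obtain ⟨a, b, ha, hb, hab⟩ := hjump (K y) hpD hp0 (by linarith)
      obtain ⟨a', b', ha', hb', hab'⟩ :=
        hjump (K y + δ) (dy_add hpD hδD) (by linarith) (by linarith)
      have h1 := h.leftSlope_translate hb hb'
      have h2 := h.rightSlope_translate ha ha'
      rw [h.HK] at h1 h2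
      refine ⟨b' - b, h1, ?_⟩
      rwa [show b' - b = a' - a by omega]
    · exact hT.off y hyD

/-- The slopes in `translate_affine` are trivial: a translation is a `2 ^ j`-th power of another
one for every `j`, so the exponent of its slope is divisible by `2 ^ j`. -/
lemma additive (h : ConjPL H K G G') (h0 : H 0 = 0) {N : ℕ} {c : ℤ}
    (hc : ∀ (n : ℕ) (v : ℤ), N ≤ n → v % 2 = 1 → Jump H (v / 2 ^ n) c) {M m : ℕ} (hM : N ≤ M)
    (hm : M < m) (x : ℝ) (hx : 0 ≤ x) (hx' : x + (1 / 2) ^ m ≤ (1 / 2) ^ M) :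
    H (x + (1 / 2) ^ m) = H ((1 / 2) ^ m) + H x := by
  choose! κ hκ using fun (m : ℕ) (hm : M < m) => h.translate_affine h0 hc hM hm
  have hhalf : ∀ n, M < n → κ n = 2 * κ (n + 1) := by
    intro n hn
    obtain ⟨δ, hδ⟩ : ∃ δ : ℝ, δ = (1 / 2) ^ (n + 1) := ⟨_, rfl⟩
    have hδ0 : 0 < δ := by rw [hδ]; positivity
    have h2δ : (1 / 2 : ℝ) ^ n = δ + δ := by rw [hδ, pow_succ]; ring
    have h4δ : δ + δ + (δ + δ) ≤ (1 / 2) ^ M := by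
      rw [← h2δ]
      obtain ⟨k, rfl⟩ : ∃ k, n = k + 1 := ⟨n - 1, by omega⟩
      have := pow_le_pow_of_le_one (show (0 : ℝ) ≤ 1 / 2 by norm_num) (by norm_num)
        (show M ≤ k by omega)
      rw [pow_succ]; linarith
    have e1 := hκ n hn δ hδ0.le (by rw [h2δ]; linarith)
    have hκ' := hκ (n + 1) (by omega)
    rw [← hδ] at hκ'
    rw [h2δ] at e1
    have e2 := hκ' δ hδ0.le (by linarith)
    have e3 := hκ' (δ + δ) (by linarith) (by linarith)
    rw [show δ + (δ + δ) = δ + δ + δ by ring, e3, e2] at e1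
    have hpos := h.pos h0 hδ0
    have h3 : (2 : ℝ) ^ κ n = 2 ^ (κ (n + 1) + κ (n + 1)) := by
      rw [zpow_add₀ (by norm_num)]
      refine mul_right_cancel₀ hpos.ne' ?_
      linarith
    have := zpow_right_injective₀ (by norm_num) (by norm_num) h3
    omega
  have hdvd : ∀ j n, M < n → (2 : ℤ) ^ j ∣ κ n := by
    intro j
    induction j with
    | zero => intro n _; simp
    | succ j ih =>
      intro n hn
      rw [hhalf n hn, pow_succ']
      exact mul_dvd_mul_left 2 (ih (n + 1) (by omega))
  have hzero : κ m = 0 := by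
    refine Int.eq_zero_of_abs_lt_dvd (hdvd (κ m).natAbs m hm) ?_
    have := (κ m).natAbs.lt_two_pow_self
    rw [Int.abs_eq_natAbs]
    exact_mod_cast this
  have := hκ m hm x hx hx'
  rwa [hzero, zpow_zero, one_mul] at this

/-- A positive dyadic rational with dyadic inverse is a power of two. -/
lemma _root_.eq_zpow_of_dy {l : ℝ} (hl : 0 < l) (h1 : l ∈ zpows 2) (h2 : l⁻¹ ∈ zpows 2) :
    ∃ k : ℤ, l = 2 ^ k := by
  obtain ⟨N, z, hz⟩ := mem_dy.1 h1
  obtain ⟨M, w, hw⟩ := mem_dy.1 h2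
  have hzw : z * w = 2 ^ (N + M) := by
    have : (z : ℝ) * w = 2 ^ (N + M) := by rw [← hz, ← hw, pow_add]; field_simp
    exact_mod_cast this
  have hz0 : 0 < z := by
    have : (0 : ℝ) < z := by rw [← hz]; positivity
    exact_mod_cast this
  lift z to ℕ using hz0.le
  have hdvd : z ∣ 2 ^ (N + M) := by
    have : (z : ℤ) ∣ 2 ^ (N + M) := ⟨w, hzw.symm⟩
    exact_mod_cast this
  obtain ⟨k, -, rfl⟩ := (Nat.dvd_prime_pow Nat.prime_two).1 hdvd
  refine ⟨k - N, ?_⟩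
  rw [zpow_sub₀ (by norm_num), zpow_natCast, zpow_natCast]
  push_cast at hz
  rw [← hz]; field_simp

/-- Near `0` on the right, `H` is linear with slope a power of two. -/
lemma linear_near_zero (h : ConjPL H K G G') (h0 : H 0 = 0) :
    ∃ (M : ℕ) (k : ℤ), ∀ x, 0 ≤ x → x ≤ (1 / 2) ^ M → H x = 2 ^ k * x := by
  obtain ⟨M, c, hc⟩ := h.jump_const h0
  have hadd := fun m hm => h.additive h0 hc le_rfl (m := m) hm
  obtain ⟨l, hl⟩ : ∃ l, l = 2 ^ M * H ((1 / 2) ^ M) := ⟨_, rfl⟩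
  have hl0 : 0 < l := by
    rw [hl]; exact mul_pos (by positivity) (h.pos h0 (by positivity))
  have hmul : ∀ m, M < m → ∀ k : ℕ, k * (1 / 2 : ℝ) ^ m ≤ (1 / 2) ^ M →
      H (k * (1 / 2) ^ m) = k * H ((1 / 2) ^ m) := by
    intro m hm k
    induction k with
    | zero => intro _; simp [h0]
    | succ k ih =>
      intro hk
      have hδ : (0 : ℝ) < (1 / 2) ^ m := by positivity
      push_cast at hk ⊢
      rw [add_mul, one_mul] at hk
      rw [add_mul, one_mul, hadd m hm _ (by positivity) hk, ih (by linarith)]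
      ring
  have hdy : ∀ q ∈ zpows 2, 0 < q → q ≤ (1 / 2) ^ M → H q = l * q := by
    intro q hq hq0 hqM
    obtain ⟨N, hN⟩ := mem_dy.1 hq
    obtain ⟨m, hmM, hmN⟩ : ∃ m, M < m ∧ N ≤ m := ⟨max (M + 1) N, by omega, by omega⟩
    obtain ⟨z, hz⟩ := dy_raise hmN hN
    have hz0 : 0 < z := by
      have : (0 : ℝ) < z := by rw [← hz]; positivity
      exact_mod_cast this
    lift z to ℕ using hz0.le
    have hqz : q = z * (1 / 2) ^ m := by
      have hz' : (z : ℝ) = 2 ^ m * q := by rw [hz]; push_cast; rfl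
      rw [hz', one_div_pow]; field_simp
    have e1 := hmul m hmM z (by rw [← hqz]; exact hqM)
    obtain ⟨d, rfl⟩ := Nat.exists_eq_add_of_lt hmM
    have e2 : ((2 ^ (d + 1) : ℕ) : ℝ) * (1 / 2) ^ (M + d + 1) = (1 / 2) ^ M := by
      push_cast
      rw [one_div_pow, one_div_pow, pow_add, pow_add, pow_add]; field_simp
    have e3 := hmul _ hmM (2 ^ (d + 1)) e2.le
    rw [e2] at e3
    rw [hqz, e1, hl, e3]
    push_cast
    rw [one_div_pow (2 : ℝ), pow_add, pow_add, pow_add]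
    field_simp
  have hlin : ∀ x, 0 < x → x < (1 / 2) ^ M → H x = l * x := by
    intro x hx0 hxM
    rcases lt_trichotomy (H x) (l * x) with hlt | heq | hlt
    · obtain ⟨q, hq, h1, h2⟩ := dy_dense (show H x / l < x by rwa [div_lt_iff₀' hl0])
      have hq0 : 0 < q := (div_pos (h.pos h0 hx0) hl0).trans h1
      rw [div_lt_iff₀' hl0, ← hdy q hq hq0 (by linarith)] at h1
      exact absurd (h.mono h2) (not_lt.2 h1.le)
    · exact heq
    · obtain ⟨q, hq, h1, h2⟩ := dy_dense
        (show x < min (H x / l) ((1 / 2) ^ M) from lt_min (by rwa [lt_div_iff₀' hl0]) hxM)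
      obtain ⟨h2, h3⟩ := lt_min_iff.1 h2
      rw [lt_div_iff₀' hl0, ← hdy q hq (by linarith) h3.le] at h2
      exact absurd (h.mono h1) (not_lt.2 h2.le)
  have hMD : ((1 / 2 : ℝ)) ^ M ∈ zpows 2 := by
    have := dy_div 1 M
    rw [one_div_pow]; simpa using this
  have hM0 : (0 : ℝ) < (1 / 2) ^ M := by positivity
  obtain ⟨k, hk⟩ := eq_zpow_of_dy hl0
    (by rw [hl]; exact dy_mul (by exact_mod_cast dy_zpow M) (h.HD _ hMD)) (by
      -- a small power of two has preimage `2 ^ (-j) / l`, which must be dyadic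
      obtain ⟨j, hj⟩ := exists_pow_lt_of_lt_one (h.pos h0 hM0) (show (1 / 2 : ℝ) < 1 by norm_num)
      have hj0 : (0 : ℝ) < (1 / 2) ^ j := by positivity
      have hjD : ((1 / 2 : ℝ)) ^ j ∈ zpows 2 := by
        have := dy_div 1 j
        rw [one_div_pow]; simpa using this
      have hK0 : K 0 = 0 := by rw [← h0, h.KH, h0]
      have e := hlin (K ((1 / 2) ^ j)) (by rw [← hK0]; exact h.monoK hj0)
        (by rw [← h.KH ((1 / 2) ^ M)]; exact h.monoK hj)
      rw [h.HK] at e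
      have : l⁻¹ = 2 ^ (j : ℤ) * K ((1 / 2) ^ j) := by
        have e' : K ((1 / 2) ^ j) = (1 / 2) ^ j / l := by
          rw [eq_div_iff hl0.ne', mul_comm]; exact e.symm
        rw [e', zpow_natCast, one_div_pow]; field_simp
      rw [this]
      exact dy_mul (dy_zpow _) (h.KD _ hjD))
  refine ⟨M, k, fun x hx0 hxM => ?_⟩
  rw [← hk]
  rcases hx0.eq_or_lt with rfl | hx0
  · simp [h0]
  · rcases hxM.eq_or_lt with rfl | hxM
    · exact hdy _ hMD hM0 le_rfl
    · exact hlin x hx0 hxM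

/-- Expanding by iterates of doubling, linearity near `0` makes `H` piecewise linear. -/
lemma dyadicPL (h : ConjPL H K G G') (h0 : H 0 = 0) : DyadicPL H := by
  obtain ⟨M, k, hk⟩ := h.linear_near_zero h0
  have hP := (h.plG.iterate M).comp (DyadicPL.mul_zpow (k - M))
  have hHP : ∀ x, 0 ≤ x → x ≤ 1 → H x = G^[M] (2 ^ (k - M) * x) := by
    intro x hx0 hx1
    have e := h.iter M (x / 2 ^ M)
    rw [mul_div_cancel₀ _ (by positivity), hk _ (by positivity)
      (by rw [one_div_pow]; gcongr)] at e
    rw [← e, zpow_sub₀ (by norm_num), zpow_natCast]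
    congr 1; ring
  have hr : ∀ x a, 0 ≤ x → x < 1 → RightSlope (fun x => G^[M] (2 ^ (k - M) * x)) x a →
      RightSlope H x a := by
    rintro x a hx0 hx1 ⟨ε, hε, ha⟩
    refine ⟨min ε (1 - x), lt_min hε (by linarith), fun τ h1 h2 => ?_⟩
    obtain ⟨h2, h3⟩ := lt_min_iff.1 h2
    rw [hHP _ (by linarith) (by linarith), hHP x hx0 hx1.le]
    exact ha τ h1 h2
  have hl : ∀ x a, 0 < x → x ≤ 1 → LeftSlope (fun x => G^[M] (2 ^ (k - M) * x)) x a →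
      LeftSlope H x a := by
    rintro x a hx0 hx1 ⟨ε, hε, ha⟩
    refine ⟨min ε x, lt_min hε hx0, fun τ h1 h2 => ?_⟩
    obtain ⟨h2, h3⟩ := lt_min_iff.1 h2
    rw [hHP _ (by linarith) (by linarith), hHP x hx0.le hx1]
    exact ha τ h1 h2
  refine dyadicPL_of_unit h.H1 (fun x h1 h2 => ?_) (fun x h1 h2 => ?_) (fun x h1 h2 h3 => ?_) h.HD
  · obtain ⟨a, ha⟩ := hP.right x
    exact ⟨a, hr x a h1 h2 ha⟩
  · obtain ⟨a, ha⟩ := hP.left x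
    exact ⟨a, hl x a h1 h2 ha⟩
  · obtain ⟨a, ha, hb⟩ := hP.off x h3
    exact ⟨a, hl x a h1 h2.le ha, hr x a h1.le h2 hb⟩

end ConjPL

/-! ### Lifts -/

lemma bothSlopes_of_affine {F : ℝ → ℝ} {x : ℝ}
    (h : ∃ (k : ℤ) (c : ℝ), ∃ ε > 0, ∀ y : ℝ, |y - x| < ε → F y = ((2 : ℕ) : ℝ) ^ k * y + c) :
    ∃ l, LeftSlope F x l ∧ RightSlope F x l := by
  obtain ⟨k, c, ε, hε, h⟩ := h
  have h0 := h x (by simpa using hε)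
  push_cast at h h0
  refine ⟨k, ⟨ε, hε, fun τ h1 h2 => ?_⟩, ⟨ε, hε, fun τ h1 h2 => ?_⟩⟩
  · rw [h (x - τ) (by rw [abs_lt]; constructor <;> linarith), h0]; ring
  · rw [h (x + τ) (by rw [abs_lt]; constructor <;> linarith), h0]; ring

lemma exists_gap {S : Set ℝ} (hS : S.Finite) (y : ℝ) :
    ∃ ε > 0, ∀ z, z ≠ y → |z - y| < ε → z ∉ S := by
  have hc : IsClosed (S \ {y}) := (hS.subset Set.sdiff_subset).isClosed
  obtain ⟨ε, hε, h⟩ := Metric.isOpen_iff.1 hc.isOpen_compl y (by simp)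
  refine ⟨ε, hε, fun z hz hzy hzS => ?_⟩
  exact h (by rwa [Metric.mem_ball, Real.dist_eq]) ⟨hzS, hz⟩

lemma dyadicPL_of_circPL {G : ℝ → ℝ} {d : ℝ} (hG : CircPL 2 1 G) (hc : Continuous G)
    (hd : ∀ x, G (x + 1) = G x + d) (hD : ∀ x ∈ zpows 2, G x ∈ zpows 2) : DyadicPL G := by
  obtain ⟨B, hfin, -, hB, hoff⟩ := hG
  have hoff' : ∀ x ∉ B, ∃ l, LeftSlope G x l ∧ RightSlope G x l :=
    fun x hx => bothSlopes_of_affine (hoff x hx)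
  refine dyadicPL_of_unit hd ?_ ?_ (fun x _ _ hx => hoff' x (mt (@hB x) hx)) hD
  · intro x h0 h1
    obtain ⟨ε, hε, hgap⟩ := exists_gap hfin x
    refine rightSlope_of_punctured hc (lt_min hε (sub_pos.2 h1)) fun z hz1 hz2 => hoff' z ?_
    have e1 := min_le_left ε (1 - x)
    have e2 := min_le_right ε (1 - x)
    intro hz
    exact hgap z hz1.ne' (by rw [abs_lt]; constructor <;> linarith)
      ⟨hz, by linarith, by linarith⟩
  · intro x h0 h1
    obtain ⟨ε, hε, hgap⟩ := exists_gap hfin x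
    have hc' : Continuous (reflect G) := (hc.comp continuous_neg).neg
    have key : ∃ κ, RightSlope (reflect G) (-x) κ := by
      refine rightSlope_of_punctured hc' (lt_min hε h0) fun z hz1 hz2 => ?_
      have e1 := min_le_left ε x
      have e2 := min_le_right ε x
      obtain ⟨l, hl, hr⟩ := hoff' (-z) fun hz =>
        hgap (-z) (by intro h; linarith) (by rw [abs_lt]; constructor <;> linarith)
          ⟨hz, by linarith, by linarith⟩
      exact ⟨l, leftSlope_reflect.2 hr, rightSlope_reflect.2 hl⟩
    simpa only [rightSlope_reflect, neg_neg] using key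

/-- A continuous integer-valued function is constant. -/
lemma int_const {f : ℝ → ℝ} (hf : Continuous f)
    (h : ∀ t, ((f t : ℝ) : AddCircle (1 : ℝ)) = 0) : ∃ k : ℤ, ∀ t, f t = k := by
  have h' : ∀ t, ∃ n : ℤ, (n : ℝ) = f t := fun t => by
    obtain ⟨n, hn⟩ := (AddCircle.coe_eq_zero_iff (1 : ℝ)).1 (h t)
    exact ⟨n, by simpa using hn⟩
  choose n hn using h'
  have hcn : Continuous n := by
    rw [Int.isClosedEmbedding_coe_real.isInducing.continuous_iff]
    convert hf using 1
    funext t; exact hn t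
  exact ⟨n 0, fun t => by
    rw [← hn t, PreconnectedSpace.constant (inferInstance : PreconnectedSpace ℝ) hcn (x := t)
      (y := 0)]⟩

lemma dy_of_coe {x : ℝ} (h : ((x : ℝ) : AddCircle (1 : ℝ)) ∈ dyadicCircle) : x ∈ zpows 2 := by
  obtain ⟨q, hq, e⟩ := h
  rw [← sub_eq_zero, ← AddCircle.coe_sub, AddCircle.coe_eq_zero_iff] at e
  obtain ⟨n, hn⟩ := e
  have : x = q + (n : ℝ) := by
    have : (n : ℝ) = x - q := by simpa using hn
    linarith
  rw [this]
  exact dy_add hq (dy_int n)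

/-- If `φ` has lift `H` and `φ ∘ ν₂ ∘ φ⁻¹` belongs to `T̄_{2,1}`, then a suitable lift of the latter
is a dyadic PL map conjugate to `t ↦ 2 * t` by `H`. -/
lemma exists_conj_lift {φ ψ : AddCircle (1 : ℝ) → AddCircle (1 : ℝ)} {H : ℝ → ℝ}
    (hH : ∀ x : ℝ, φ (x : AddCircle (1 : ℝ)) = ((H x : ℝ) : AddCircle (1 : ℝ)))
    (hψ : ∀ z, ψ (φ z) = z) (hHc : Continuous H) (hconj : MemTbar 2 1 (φ ∘ nu2 ∘ ψ)) :
    ∃ G : ℝ → ℝ, DyadicPL G ∧ ∀ t, G (H t) = H (2 * t) := by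
  obtain ⟨G₀, d, -, hG₀, hd, -, hc, hpl, hD⟩ := hconj
  have hpl₀ : DyadicPL G₀ := dyadicPL_of_circPL hpl hc hd hD
  obtain ⟨k, hk⟩ := int_const (f := fun t => G₀ (H t) - H (2 * t))
    ((hc.comp hHc).sub (hHc.comp (continuous_const.mul continuous_id))) fun t => by
      rw [AddCircle.coe_sub, ← hG₀, ← hH, ← hH, sub_eq_zero]
      simp only [Function.comp_apply, hψ, nu2]
      rw [← AddCircle.coe_add, two_mul]
  refine ⟨fun x => G₀ x + ((-k : ℤ) : ℝ), DyadicPL.comp (DyadicPL.add_const (dy_int _)) hpl₀,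
    fun t => ?_⟩
  have := hk t
  push_cast
  linarith

lemma DyadicPL.circPL {H : ℝ → ℝ} (h : DyadicPL H) (h1 : ∀ x, H (x + 1) = H x + 1) :
    CircPL 2 1 H := by
  refine ⟨breaks H, h.finite_breaks.subset (Set.inter_subset_inter_right _ Set.Ico_subset_Icc_self),
    fun x hx => ⟨(breaks_add_one h1 x).2 hx, (breaks_add_one h1 (x - 1)).1 (by simpa using hx)⟩,
    h.breaks_subset, fun x hx => ?_⟩
  obtain ⟨a, ⟨ε, hε, hl⟩, ⟨δ, hδ, hr⟩⟩ := not_not.1 hx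
  refine ⟨a, H x - 2 ^ a * x, min ε δ, lt_min hε hδ, fun y hy => ?_⟩
  obtain ⟨hy1, hy2⟩ := abs_lt.1 hy
  have e1 := min_le_left ε δ
  have e2 := min_le_right ε δ
  push_cast
  rcases lt_trichotomy y x with hxy | rfl | hxy
  · have := hl (x - y) (by linarith) (by linarith)
    rw [sub_sub_cancel] at this
    rw [this]; ring
  · ring
  · have := hr (y - x) (by linarith) (by linarith)
    rw [add_sub_cancel] at this
    rw [this]; ring

/-- **Theorem 2.** If `h` is an orientation-preserving homeomorphism of
`S¹` with `h(ℤ[1/2]) = ℤ[1/2]` such that `h ν₂ h⁻¹` and `h⁻¹ ν₂ h` are both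
everywhere-defined elements of `T̄_{2,1}`, then `h ∈ T_{2,1}`. -/
theorem stmt_10 (h h' : AddCircle (1 : ℝ) → AddCircle (1 : ℝ))
    (hh : OrientedHomeo 1 h)
    (hinv₁ : ∀ z, h' (h z) = z) (hinv₂ : ∀ z, h (h' z) = z)
    (hdy : h '' dyadicCircle = dyadicCircle)
    (hconj₁ : MemTbar 2 1 (h ∘ nu2 ∘ h'))
    (hconj₂ : MemTbar 2 1 (h' ∘ nu2 ∘ h)) :
    MemT 2 1 h := by
  obtain ⟨H, hH, H1, mono, surj⟩ := hh
  choose K HK using surj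
  have KH : ∀ x, K (H x) = x := fun x => mono.injective (HK _)
  have Hc : Continuous H := mono.monotone.continuous_of_surjective fun y => ⟨K y, HK y⟩
  have monoK : StrictMono K := fun x y hxy => by
    rw [← mono.lt_iff_lt, HK, HK]; exact hxy
  have Kc : Continuous K := monoK.monotone.continuous_of_surjective fun x => ⟨H x, KH x⟩
  have hK : ∀ y : ℝ, h' (y : AddCircle (1 : ℝ)) = ((K y : ℝ) : AddCircle (1 : ℝ)) := fun y => by
    conv_lhs => rw [← HK y, ← hH, hinv₁]
  have HD : ∀ x ∈ zpows 2, H x ∈ zpows 2 := fun x hx => by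
    refine dy_of_coe ?_
    rw [← hH, ← hdy]
    exact ⟨_, ⟨x, hx, rfl⟩, rfl⟩
  have KD : ∀ y ∈ zpows 2, K y ∈ zpows 2 := fun y hy => by
    refine dy_of_coe ?_
    have hy' : (y : AddCircle (1 : ℝ)) ∈ h '' dyadicCircle := by
      rw [hdy]; exact ⟨y, hy, rfl⟩
    obtain ⟨z, hz, e⟩ := hy'
    rwa [← hK, ← e, hinv₁]
  obtain ⟨G, plG, hG⟩ := exists_conj_lift hH hinv₁ Hc hconj₁
  obtain ⟨G', plG', hG'⟩ := exists_conj_lift hK hinv₂ Kc hconj₂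
  have hconj : ConjPL H K G G' := ⟨mono, HK, KH, H1, HD, KD, hG, hG', plG, plG'⟩
  obtain ⟨H₁, K₁, G₁, G₁', hc₁, h0, q, hq, e⟩ := hconj.recenter
  have hpl : DyadicPL H := by
    rw [funext e]
    exact DyadicPL.comp (DyadicPL.add_const hq) (hc₁.dyadicPL h0)
  exact ⟨H, hH, H1, mono, fun y => ⟨K y, HK y⟩, hpl.circPL H1, HD⟩
end
end

section
/- Let h : S¹ → S¹ be an orientation-preserving homeomorphism fixing the point 0 of S¹, and assume that both h ∘ ν₂ ∘ h⁻¹ and h⁻¹ ∘ ν₂ ∘ h are everywhere-defined elements of T̄_{2,1}. Then h ∈ T_{2,1}. -/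
/-!
Let `H` be the lift of `h` fixing `0`, and `E` its inverse. That `h ν₂ h⁻¹` is piecewise linear
says that the germ of `H` at `2 * x` is a rescaling, by powers of two in the source and in the
target, of the germ of `H` at `x`, except at finitely many dyadic breaks modulo `1`, where only
the one-sided germs are so related. The same holds for `E`, and relations between germs of `H` at
`x` and `x'` dualize to relations between germs of `E` at `H x` and `H x'` (`GRel.dual`). Both `H`
and `E` preserve the dyadics.

At `0`, on each side, `H` intertwines doubling with multiplication by some `2 ^ k`, and `E` with
multiplication by some `2 ^ m`. As `E` inverts `H`, `k * m = 1`, so `k = m = 1`. Transporting this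
by doubling, the germ of `H` at every dyadic is invariant under doubling source and target
(`Conj.self_dy`). Hence, at dyadics, germs need only be compared up to a factor in the target;
this relation is `Sim`, and it is preserved by duality.

The germs of `H` and `E` at dyadics have finite memory: up to `Sim`, the germ at `u / 2 ^ n`, with
`u` odd and `n ≥ N`, depends only on `u` modulo `2 ^ N`, because one may double until `n = N` and
then use periodicity (`Conj.memory`). Either the germs of `E` at these dyadics are all equivalent,
or, for a suitable residue class of numerators modulo `2 ^ K`, the binary digit of weight `2 ^ K`
separates them (`exists_separates`; that a digit has only two possible values matters here). In
the second case, an affine map of slope `2 ^ σ` which preserves the germs of `E` on one side of a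
dyadic must lower the level of this dyadic by exactly `σ` (`Separates.level_eq`).

The main step is that `H` has equivalent germs at all small positive dyadics (`Conj.sim_small`).
For a small dyadic `r > 0`, the translation `x ↦ x + r` preserves the germ of `H` at all but
finitely many small `x > 0`. In the coordinate `y = H x`, it is affine on each side of an
exceptional point whose level in this coordinate is maximal and large enough, and since both
slopes are determined by the change of level, they agree. Thus the point was not exceptional
(`Conj.sim_translate`). Small dyadics are reduced to points of large level by halving.

Consequently dyadic translations near `0` are affine in the coordinate `y = H x`, with slope `1`
since `H (2 * x) = 2 * H x`. So `H` is additive, hence linear, near `0` on the right, with slope a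
power of two because `H` and `E` preserve the dyadics. Finally, away from the integers divided by
`2 ^ N`, every point of the circle is reached from points near `0` by doubling, which shows that
`H` is piecewise linear.
-/

noncomputable section

open Filter Topology

/-! ### Dyadic rationals and their levels -/

/-- `x` is an integer divided by `2 ^ n`. -/
def DyAt (n : ℤ) (x : ℝ) : Prop := ∃ u : ℤ, x * 2 ^ n = u

/-- `x` is a dyadic rational. -/
def Dy (x : ℝ) : Prop := ∃ n : ℤ, DyAt n x

/-- The dyadic rational `x` is nonzero and has level `n`: it is an odd integer divided by
`2 ^ n`. -/
def Lev (n : ℤ) (x : ℝ) : Prop := ∃ u : ℤ, Odd u ∧ x = u / 2 ^ n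

lemma two_zpow_pos (n : ℤ) : (0 : ℝ) < 2 ^ n := by positivity

lemma two_zpow_ne (n : ℤ) : (2 : ℝ) ^ n ≠ 0 := (two_zpow_pos n).ne'

lemma zadd (a b : ℤ) : (2 : ℝ) ^ (a + b) = 2 ^ a * 2 ^ b := zpow_add₀ (by norm_num) a b

lemma zsub (a b : ℤ) : (2 : ℝ) ^ (a - b) = 2 ^ a / 2 ^ b := zpow_sub₀ (by norm_num) a b

lemma zneg (a : ℤ) : (2 : ℝ) ^ (-a) = (2 ^ a)⁻¹ := zpow_neg 2 a

lemma zpow_int_of_nonneg {a : ℤ} (h : 0 ≤ a) : (2 : ℝ) ^ a = ((2 ^ a.toNat : ℤ) : ℝ) := by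
  obtain ⟨n, rfl⟩ := Int.eq_ofNat_of_zero_le h
  simp

lemma DyAt.mono {n m : ℤ} {x : ℝ} (h : DyAt n x) (hnm : n ≤ m) : DyAt m x := by
  obtain ⟨u, hu⟩ := h
  refine ⟨u * 2 ^ (m - n).toNat, ?_⟩
  rw [Int.cast_mul, ← zpow_int_of_nonneg (by omega), ← hu, zsub]
  field_simp

lemma DyAt.add {n : ℤ} {x y : ℝ} (hx : DyAt n x) (hy : DyAt n y) : DyAt n (x + y) := by
  obtain ⟨u, hu⟩ := hx
  obtain ⟨v, hv⟩ := hy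
  exact ⟨u + v, by push_cast; rw [← hu, ← hv]; ring⟩

lemma DyAt.neg {n : ℤ} {x : ℝ} (hx : DyAt n x) : DyAt n (-x) := by
  obtain ⟨u, hu⟩ := hx
  exact ⟨-u, by push_cast; rw [← hu]; ring⟩

lemma Dy.add {x y : ℝ} (hx : Dy x) (hy : Dy y) : Dy (x + y) := by
  obtain ⟨n, hn⟩ := hx
  obtain ⟨m, hm⟩ := hy
  exact ⟨max n m, (hn.mono (le_max_left _ _)).add (hm.mono (le_max_right _ _))⟩

lemma Dy.neg {x : ℝ} (hx : Dy x) : Dy (-x) := hx.imp fun _ h => h.neg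

lemma Dy.sub {x y : ℝ} (hx : Dy x) (hy : Dy y) : Dy (x - y) := by
  rw [sub_eq_add_neg]; exact hx.add hy.neg

lemma Dy.zpow_mul {x : ℝ} (hx : Dy x) (a : ℤ) : Dy (2 ^ a * x) := by
  obtain ⟨n, u, hu⟩ := hx
  refine ⟨n - a, u, ?_⟩
  rw [← hu, zsub]
  field_simp

lemma Dy.zpow_mul_iff {x : ℝ} (a : ℤ) : Dy (2 ^ a * x) ↔ Dy x := by
  refine ⟨fun h => ?_, fun h => h.zpow_mul a⟩
  have := h.zpow_mul (-a)
  rwa [zneg, inv_mul_cancel_left₀ (two_zpow_ne a)] at this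

lemma dyAt_int (u : ℤ) : DyAt 0 (u : ℝ) := ⟨u, by simp⟩

lemma dy_int_s11 (u : ℤ) : Dy (u : ℝ) := ⟨0, dyAt_int u⟩

lemma dy_div_s11 (u : ℤ) (n : ℤ) : Dy ((u : ℝ) / 2 ^ n) :=
  ⟨n, u, by rw [div_mul_cancel₀ _ (two_zpow_ne n)]⟩

lemma dy_zpow_s11 (n : ℤ) : Dy ((2 : ℝ) ^ n) := by
  have := (dy_int_s11 1).zpow_mul n
  simpa using this

lemma mem_zpows_iff {x : ℝ} : x ∈ zpows 2 ↔ Dy x := by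
  constructor
  · rintro ⟨a, b, h⟩
    refine ⟨-b, a, ?_⟩
    rw [h, zneg]
    push_cast
    field_simp
  · rintro ⟨n, u, h⟩
    refine ⟨u, -n, ?_⟩
    push_cast
    rw [zneg, ← h]
    field_simp

lemma exists_lev {x : ℝ} (hx : Dy x) (h0 : x ≠ 0) : ∃ n, Lev n x := by
  obtain ⟨n, u, hu⟩ := hx
  have hu0 : u ≠ 0 := by
    rintro rfl
    simp [two_zpow_ne] at hu
    exact h0 hu
  obtain ⟨k, v, hv, rfl⟩ : ∃ (k : ℕ) (v : ℤ), Odd v ∧ u = 2 ^ k * v := by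
    obtain ⟨k, m, hm, h⟩ := Nat.exists_eq_two_pow_mul_odd (Int.natAbs_ne_zero.2 hu0)
    rcases Int.natAbs_eq u with h' | h'
    · exact ⟨k, m, by exact_mod_cast hm, by rw [h', h]; push_cast; ring⟩
    · exact ⟨k, -m, ((Int.odd_coe_nat m).2 hm).neg, by rw [h', h]; push_cast; ring⟩
  refine ⟨n - k, v, hv, ?_⟩
  rw [zsub]
  push_cast at hu
  rw [zpow_natCast]
  field_simp
  linarith

lemma Lev.dyAt {n : ℤ} {x : ℝ} (h : Lev n x) : DyAt n x := by
  obtain ⟨u, _, h⟩ := h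
  exact ⟨u, by rw [h, div_mul_cancel₀ _ (two_zpow_ne n)]⟩

lemma Lev.dy {n : ℤ} {x : ℝ} (h : Lev n x) : Dy x := ⟨n, h.dyAt⟩

lemma Lev.le_of_dyAt {n m : ℤ} {x : ℝ} (h : Lev n x) (hm : DyAt m x) : n ≤ m := by
  by_contra! hlt
  obtain ⟨u, hu, h⟩ := h
  obtain ⟨v, hv⟩ := hm
  have h1 : (u : ℝ) = ((v * 2 ^ (n - m).toNat : ℤ) : ℝ) := by
    rw [Int.cast_mul, ← zpow_int_of_nonneg (by omega), ← hv, h, zsub]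
    field_simp
  have h2 : u = v * 2 ^ (n - m).toNat := by exact_mod_cast h1
  have h3 : Even u := by
    rw [h2]
    exact (Even.pow_of_ne_zero even_two (by omega)).mul_left v
  exact (Int.not_even_iff_odd.2 hu) h3

lemma Lev.unique {n m : ℤ} {x : ℝ} (h : Lev n x) (h' : Lev m x) : n = m :=
  le_antisymm (h.le_of_dyAt h'.dyAt) (h'.le_of_dyAt h.dyAt)

lemma Lev.div {n : ℤ} {x : ℝ} (h : Lev n x) (k : ℤ) : Lev (n + k) (x / 2 ^ k) := by
  obtain ⟨u, hu, h⟩ := h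
  exact ⟨u, hu, by rw [h, zadd]; field_simp⟩

/-- A positive dyadic below `2 ^ (-N)` has level above `N`. -/
lemma Lev.lt_of_lt {n N : ℤ} {x : ℝ} (h : Lev n x) (h0 : 0 < x) (hx : x < 2 ^ (-N)) : N < n := by
  by_contra! hle
  obtain ⟨u, hu⟩ := h.dyAt.mono hle
  have h1 : (0 : ℝ) < u := by rw [← hu]; exact mul_pos h0 (two_zpow_pos N)
  have h2 : (u : ℝ) < 1 := by
    rw [← hu]
    calc x * 2 ^ N < 2 ^ (-N) * 2 ^ N := by gcongr
      _ = 1 := by rw [zneg, inv_mul_cancel₀ (two_zpow_ne N)]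
  have h3 : 0 < u := by exact_mod_cast h1
  have h4 : u < 1 := by exact_mod_cast h2
  omega

/-- Distinct integers divided by `2 ^ n` are at least `2 ^ (-n)` apart. -/
lemma DyAt.add_le {n : ℤ} {x y : ℝ} (hx : DyAt n x) (hy : DyAt n y) (h : x < y) :
    x + 2 ^ (-n) ≤ y := by
  obtain ⟨u, hu⟩ := hx
  obtain ⟨v, hv⟩ := hy
  have h1 : (u : ℝ) < v := by
    rw [← hu, ← hv]; exact mul_lt_mul_of_pos_right h (two_zpow_pos n)
  have h2 : u + 1 ≤ v := by exact_mod_cast h1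
  have h3 : (u : ℝ) + 1 ≤ v := by exact_mod_cast h2
  rw [← hu, ← hv] at h3
  rw [zneg]
  have := two_zpow_pos n
  have h4 : (x + (2 ^ n)⁻¹) * 2 ^ n ≤ y * 2 ^ n := by
    rw [add_mul, inv_mul_cancel₀ this.ne']; exact h3
  exact le_of_mul_le_mul_right h4 this

lemma exists_dy_btw {x y : ℝ} (h : x < y) : ∃ q, Dy q ∧ x < q ∧ q < y := by
  obtain ⟨n, hn⟩ := exists_pow_lt_of_lt_one (sub_pos.2 h) (show (1 / 2 : ℝ) < 1 by norm_num)
  have h2 : (0 : ℝ) < 2 ^ n := by positivity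
  refine ⟨((⌊x * 2 ^ n⌋ + 1 : ℤ) : ℝ) / 2 ^ (n : ℤ), dy_div_s11 _ _, ?_, ?_⟩
  · rw [zpow_natCast, lt_div_iff₀ h2]
    push_cast
    exact Int.lt_floor_add_one _
  · rw [zpow_natCast, div_lt_iff₀ h2]
    push_cast
    have h3 := Int.floor_le (x * 2 ^ n)
    rw [one_div, inv_pow, inv_lt_iff_one_lt_mul₀ h2] at hn
    nlinarith

lemma exists_zpow_lt {x : ℝ} (h : 0 < x) : ∃ n : ℕ, (2 : ℝ) ^ (-(n : ℤ)) < x := by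
  obtain ⟨n, hn⟩ := exists_pow_lt_of_lt_one h (show (1 / 2 : ℝ) < 1 by norm_num)
  exact ⟨n, by rwa [zneg, zpow_natCast, ← inv_pow, ← one_div]⟩

/-- Two continuous functions which agree on the dyadics of an open interval agree on its
closure. -/
lemma eqOn_Icc_of_dy {f g : ℝ → ℝ} (hf : Continuous f) (hg : Continuous g) {a b : ℝ}
    (hab : a < b) (h : ∀ x, Dy x → a < x → x < b → f x = g x) {x : ℝ} (h1 : a ≤ x)
    (h2 : x ≤ b) : f x = g x := by
  have hcl : IsClosed {x | f x = g x} := isClosed_eq hf hg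
  have hsub : Set.Icc a b ⊆ closure (Set.Ioo a b ∩ {x | Dy x}) := by
    have hd : Dense {x : ℝ | Dy x} := by
      refine dense_iff_exists_between.2 fun x y hxy => ?_
      obtain ⟨q, hq, h1, h2⟩ := exists_dy_btw hxy
      exact ⟨q, hq, h1, h2⟩
    rw [← closure_Ioo hab.ne]
    exact closure_minimal (hd.open_subset_closure_inter isOpen_Ioo) isClosed_closure
  have := closure_minimal (s := Set.Ioo a b ∩ {x | Dy x}) (t := {x | f x = g x})
    (fun z hz => h z hz.2 hz.1.1 hz.1.2) hcl
  exact this (hsub ⟨h1, h2⟩)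

/-! ### Functions which are locally affine with slopes powers of two -/

/-- A function which is affine with slope a power of two near each point of an open interval is
affine on that interval. -/
lemma affine_Ioo {Φ : ℝ → ℝ} {α β : ℝ} (hab : α < β)
    (h : ∀ y, α < y → y < β → ∃ c : ℤ, ∀ᶠ ε in 𝓝 (0 : ℝ), Φ (y + ε) - Φ y = 2 ^ c * ε) :
    ∃ (c : ℤ) (d : ℝ), ∀ y, α < y → y < β → Φ y = 2 ^ c * y + d := by
  have key : ∀ y ∈ Set.Ioo α β, ∃ (c : ℤ) (d : ℝ), ∀ᶠ z in 𝓝 y, Φ z = 2 ^ c * z + d := by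
    intro y hy
    obtain ⟨c, hc⟩ := h y hy.1 hy.2
    refine ⟨c, Φ y - 2 ^ c * y, ?_⟩
    have ht : Tendsto (fun z => z - y) (𝓝 y) (𝓝 0) := by
      have : Continuous fun z : ℝ => z - y := by fun_prop
      simpa using this.tendsto y
    filter_upwards [ht.eventually hc] with z hz
    rw [add_sub_cancel] at hz
    linarith
  have hD : ∀ y ∈ Set.Ioo α β, ∃ (c : ℤ), ∀ᶠ z in 𝓝 y, HasDerivAt Φ (2 ^ c) z := by
    intro y hy
    obtain ⟨c, d, hc⟩ := key y hy
    refine ⟨c, ?_⟩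
    filter_upwards [eventually_eventually_nhds.2 hc] with z hz
    have h1 : HasDerivAt (fun z : ℝ => (2 : ℝ) ^ c * z + d) (2 ^ c) z := by
      simpa using ((hasDerivAt_id z).const_mul ((2 : ℝ) ^ c)).add_const d
    exact h1.congr_of_eventuallyEq hz
  have hDD : ∀ y ∈ Set.Ioo α β, HasDerivAt (deriv Φ) 0 y := by
    intro y hy
    obtain ⟨c, hc⟩ := hD y hy
    exact (hasDerivAt_const y ((2 : ℝ) ^ c)).congr_of_eventuallyEq (hc.mono fun z hz => hz.deriv)
  obtain ⟨x₀, hx₀⟩ := Set.nonempty_Ioo.2 hab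
  obtain ⟨c, hc⟩ := hD x₀ hx₀
  have hconst : ∀ y ∈ Set.Ioo α β, deriv Φ y = 2 ^ c := fun y hy =>
    (isOpen_Ioo.is_const_of_deriv_eq_zero isPreconnected_Ioo
      (fun z hz => (hDD z hz).differentiableAt.differentiableWithinAt)
      (fun z hz => (hDD z hz).deriv) hy hx₀).trans hc.self_of_nhds.deriv
  have hdiff : ∀ y ∈ Set.Ioo α β, HasDerivAt (fun z => Φ z - 2 ^ c * z) 0 y := by
    intro y hy
    obtain ⟨c', hc'⟩ := hD y hy
    have h1 := hc'.self_of_nhds.differentiableAt.hasDerivAt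
    rw [hconst y hy] at h1
    exact (h1.sub ((hasDerivAt_id y).const_mul ((2 : ℝ) ^ c))).congr_deriv (by simp)
  refine ⟨c, Φ x₀ - 2 ^ c * x₀, fun y h1 h2 => ?_⟩
  have := isOpen_Ioo.is_const_of_deriv_eq_zero isPreconnected_Ioo
      (fun z hz => (hdiff z hz).differentiableAt.differentiableWithinAt)
      (fun z hz => (hdiff z hz).deriv) (⟨h1, h2⟩ : y ∈ Set.Ioo α β) hx₀
  linarith

lemma affine_Icc {Φ : ℝ → ℝ} (hΦ : Continuous Φ) {α β : ℝ} (hab : α < β)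
    (h : ∀ y, α < y → y < β → ∃ c : ℤ, ∀ᶠ ε in 𝓝 (0 : ℝ), Φ (y + ε) - Φ y = 2 ^ c * ε) :
    ∃ (c : ℤ) (d : ℝ), ∀ y, α ≤ y → y ≤ β → Φ y = 2 ^ c * y + d := by
  obtain ⟨c, d, hc⟩ := affine_Ioo hab h
  exact ⟨c, d, fun y h1 h2 => eqOn_Icc_of_dy hΦ (by fun_prop) hab (fun x _ => hc x) h1 h2⟩

/-! ### The relation between germs -/

/-- The germ of `H` at `x'`, read along `l`, is obtained from its germ at `x` by rescaling the
source by `2 ^ a` and the target by `2 ^ b`. The filter `l` at `0` is `𝓝 0`, or one of the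
one-sided filters. -/
def GRelOn (l : Filter ℝ) (H : ℝ → ℝ) (a b : ℤ) (x x' : ℝ) : Prop :=
  ∀ᶠ ε in l, H (x' + 2 ^ a * ε) - H x' = 2 ^ b * (H (x + ε) - H x)

/-- The two-sided version of `GRelOn`. -/
def GRel (H : ℝ → ℝ) (a b : ℤ) (x z : ℝ) : Prop := GRelOn (𝓝 0) H a b x z

/-- The germs of `H` at `x` and `z` agree up to translations and a power of two in the
target. -/
def Sim (H : ℝ → ℝ) (x z : ℝ) : Prop := ∃ c : ℤ, GRel H 0 c x z

/-- A filter invariant under multiplication by powers of two. -/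
def ScaleInv (l : Filter ℝ) : Prop := ∀ a : ℤ, Tendsto (fun ε : ℝ => 2 ^ a * ε) l l

lemma scaleInv_nhds : ScaleInv (𝓝 0) := fun a => by
  have : Continuous fun ε : ℝ => (2 : ℝ) ^ a * ε := by fun_prop
  simpa using this.tendsto 0

lemma scaleInv_gt : ScaleInv (𝓝[>] 0) := fun a =>
  tendsto_nhdsWithin_iff.2 ⟨(scaleInv_nhds a).mono_left nhdsWithin_le_nhds, by
    filter_upwards [self_mem_nhdsWithin] with ε hε
    exact mul_pos (two_zpow_pos a) hε⟩

lemma scaleInv_lt : ScaleInv (𝓝[<] 0) := fun a =>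
  tendsto_nhdsWithin_iff.2 ⟨(scaleInv_nhds a).mono_left nhdsWithin_le_nhds, by
    filter_upwards [self_mem_nhdsWithin] with ε hε
    exact mul_neg_of_pos_of_neg (two_zpow_pos a) hε⟩

lemma GRelOn.trans {l : Filter ℝ} (hl : ScaleInv l) {H : ℝ → ℝ} {a b a' b' : ℤ} {x x' x'' : ℝ}
    (h : GRelOn l H a b x x') (h' : GRelOn l H a' b' x' x'') : GRelOn l H (a + a') (b + b') x x'' := by
  filter_upwards [h, (hl a).eventually h'] with ε h1 h2
  rw [zadd, mul_comm ((2 : ℝ) ^ a), mul_assoc, h2, h1, zadd]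
  ring

lemma GRelOn.symm {l : Filter ℝ} (hl : ScaleInv l) {H : ℝ → ℝ} {a b : ℤ} {x x' : ℝ}
    (h : GRelOn l H a b x x') : GRelOn l H (-a) (-b) x' x := by
  filter_upwards [(hl (-a)).eventually h] with ε h1
  rw [← mul_assoc, ← zadd, add_neg_cancel, zpow_zero, one_mul] at h1
  rw [h1, ← mul_assoc, ← zadd, neg_add_cancel, zpow_zero, one_mul]

lemma GRel.trans {H : ℝ → ℝ} {a b a' b' : ℤ} {x x' x'' : ℝ}
    (h : GRel H a b x x') (h' : GRel H a' b' x' x'') : GRel H (a + a') (b + b') x x'' :=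
  GRelOn.trans scaleInv_nhds h h'

lemma GRel.symm {H : ℝ → ℝ} {a b : ℤ} {x x' : ℝ} (h : GRel H a b x x') :
    GRel H (-a) (-b) x' x := GRelOn.symm scaleInv_nhds h

lemma GRel.refl (H : ℝ → ℝ) (x : ℝ) : GRel H 0 0 x x := by
  refine Eventually.of_forall fun ε => ?_
  simp

lemma Sim.refl (H : ℝ → ℝ) (x : ℝ) : Sim H x x := ⟨0, GRel.refl H x⟩

lemma Sim.symm {H : ℝ → ℝ} {x x' : ℝ} (h : Sim H x x') : Sim H x' x := by
  obtain ⟨c, hc⟩ := h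
  exact ⟨-c, by simpa using hc.symm⟩

lemma Sim.trans {H : ℝ → ℝ} {x x' x'' : ℝ} (h : Sim H x x') (h' : Sim H x' x'') :
    Sim H x x'' := by
  obtain ⟨c, hc⟩ := h
  obtain ⟨c', hc'⟩ := h'
  exact ⟨c + c', by simpa using hc.trans hc'⟩

lemma rel_of_sides {H : ℝ → ℝ} {a b : ℤ} {x x' : ℝ} (h1 : GRelOn (𝓝[>] 0) H a b x x')
    (h2 : GRelOn (𝓝[<] 0) H a b x x') : GRel H a b x x' := by
  have h3 : GRelOn (𝓝[≠] 0) H a b x x' := by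
    unfold GRelOn
    rw [← nhdsLT_sup_nhdsGT]
    exact eventually_sup.2 ⟨h2, h1⟩
  have h4 := eventually_nhdsWithin_iff.1 h3
  filter_upwards [h4] with ε hε
  by_cases h0 : ε = 0
  · simp [h0]
  · exact hε h0

/-- If `H x = y` and `H x' = y'`, exchanging `H` with its inverse exchanges the two scales. -/
lemma GRel.dual {H E : ℝ → ℝ} (hE : Continuous E) (HE : ∀ y, H (E y) = y) (EH : ∀ x, E (H x) = x)
    {a b : ℤ} {x x' : ℝ} (h : GRel H a b x x') : GRel E b a (H x) (H x') := by
  have ht : Tendsto (fun δ => E (H x + δ) - x) (𝓝 0) (𝓝 0) := by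
    have : Continuous fun δ => E (H x + δ) - x := by fun_prop
    have h2 := this.tendsto 0
    simpa [EH] using h2
  filter_upwards [ht.eventually h] with δ hδ
  rw [add_sub_cancel, HE, add_sub_cancel_left, sub_eq_iff_eq_add] at hδ
  rw [EH, EH, add_comm, ← hδ, EH]
  ring

/-! ### Homeomorphisms which conjugate doubling to a piecewise linear map -/

/-- The facts about the lift `H` of a circle homeomorphism fixing `0` which are extracted from the
assumption that `H` conjugates doubling to a piecewise linear map with dyadic breaks and slopes
powers of two: the germ of `H` at `2 * p` is a rescaling of the germ at `p` on each side of
`p`, with the same factor on both sides unless `p` is an integer divided by `2 ^ N`. -/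
structure Half (N : ℕ) (H : ℝ → ℝ) : Prop where
  mono : StrictMono H
  cont : Continuous H
  zero : H 0 = 0
  per : ∀ x, H (x + 1) = H x + 1
  dy : ∀ x, Dy x → Dy (H x)
  double : ∀ p, ¬ DyAt N p → ∃ t : ℤ, GRel H 1 t p (2 * p)
  right : ∀ p, ∃ t : ℤ, GRelOn (𝓝[>] 0) H 1 t p (2 * p)
  left : ∀ p, ∃ t : ℤ, GRelOn (𝓝[<] 0) H 1 t p (2 * p)

/-- Two mutually inverse lifts, each of which conjugates doubling to a piecewise linear map. -/
structure Conj (N : ℕ) (H E : ℝ → ℝ) : Prop where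
  HE : ∀ y, H (E y) = y
  EH : ∀ x, E (H x) = x
  h : Half N H
  e : Half N E

variable {N : ℕ} {H E : ℝ → ℝ}

lemma Conj.swap (C : Conj N H E) : Conj N E H := ⟨C.EH, C.HE, C.e, C.h⟩

lemma Conj.dual (C : Conj N H E) {a b : ℤ} {x x' : ℝ} (h : GRel H a b x x') :
    GRel E b a (H x) (H x') := GRel.dual C.e.cont C.HE C.EH h

lemma Half.per_int (h : Half N H) (x : ℝ) (m : ℤ) : H (x + m) = H x + m := by
  induction m using Int.induction_on with
  | zero => simp
  | succ i ih =>
    push_cast at ih ⊢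
    rw [← add_assoc, h.per, ih]
    ring
  | pred i ih =>
    have := h.per (x + ((-i - 1 : ℤ) : ℝ))
    push_cast at ih this ⊢
    rw [show x + (-(i : ℝ) - 1) + 1 = x + -i by ring, ih] at this
    linarith

lemma Half.translate (h : Half N H) (x : ℝ) (m : ℤ) : GRel H 0 0 x (x + m) := by
  refine Eventually.of_forall fun ε => ?_
  rw [show x + (m : ℝ) + 2 ^ (0 : ℤ) * ε = x + ε + m by simp; ring, h.per_int, h.per_int]
  simp

lemma Half.pos (h : Half N H) {x : ℝ} (hx : 0 < x) : 0 < H x := by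
  have := h.mono hx
  rwa [h.zero] at this

lemma Half.neg (h : Half N H) {x : ℝ} (hx : x < 0) : H x < 0 := by
  have := h.mono hx
  rwa [h.zero] at this

lemma Half.tendsto_gt (h : Half N H) : Tendsto H (𝓝[>] 0) (𝓝[>] 0) := by
  refine tendsto_nhdsWithin_iff.2 ⟨?_, ?_⟩
  · have := h.cont.tendsto 0
    rw [h.zero] at this
    exact this.mono_left nhdsWithin_le_nhds
  · filter_upwards [self_mem_nhdsWithin] with ε hε using h.pos hε

lemma Half.tendsto_lt (h : Half N H) : Tendsto H (𝓝[<] 0) (𝓝[<] 0) := by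
  refine tendsto_nhdsWithin_iff.2 ⟨?_, ?_⟩
  · have := h.cont.tendsto 0
    rw [h.zero] at this
    exact this.mono_left nhdsWithin_le_nhds
  · filter_upwards [self_mem_nhdsWithin] with ε hε using h.neg hε

lemma Half.abs_lt_gt (h : Half N H) : ∀ᶠ ε in 𝓝[>] (0 : ℝ), |H ε| < |H (2 * ε)| := by
  filter_upwards [self_mem_nhdsWithin] with ε hε
  have hε : 0 < ε := hε
  rw [abs_of_pos (h.pos hε), abs_of_pos (h.pos (by linarith))]
  exact h.mono (by linarith)

lemma Half.abs_lt_lt (h : Half N H) : ∀ᶠ ε in 𝓝[<] (0 : ℝ), |H ε| < |H (2 * ε)| := by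
  filter_upwards [self_mem_nhdsWithin] with ε hε
  have hε : ε < 0 := hε
  rw [abs_of_neg (h.neg hε), abs_of_neg (h.neg (by linarith))]
  exact neg_lt_neg (h.mono (by linarith))

lemma GRelOn.iter {l : Filter ℝ} (hl : ScaleInv l) {k : ℤ} (h : GRelOn l H 1 k 0 0) (n : ℕ) :
    GRelOn l H n (n * k) 0 0 := by
  induction n with
  | zero => exact Eventually.of_forall fun ε => by simp
  | succ n ih =>
    have := ih.trans hl h
    rwa [← Nat.cast_succ, show (n : ℤ) * k + k = ((n + 1 : ℕ) : ℤ) * k by push_cast; ring] at this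

/-- As `H` expands when its argument is doubled, the factor between the two germs exceeds `1`. -/
lemma GRelOn.scale_pos {l : Filter ℝ} [l.NeBot] {k : ℤ} (h : GRelOn l H 1 k 0 0) (h0 : H 0 = 0)
    (hlt : ∀ᶠ ε in l, |H ε| < |H (2 * ε)|) : 0 < k := by
  obtain ⟨ε, h1, h2⟩ := (h.and hlt).exists
  simp only [zpow_one, zero_add, h0, sub_zero] at h1
  rw [h1, abs_mul, abs_of_pos (two_zpow_pos k)] at h2
  have h3 : (1 : ℝ) < 2 ^ k := by
    by_contra! hle
    nlinarith [abs_nonneg (H ε)]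
  exact (one_lt_zpow_iff_right₀ (by norm_num)).1 h3

/-- If `H` and its inverse both intertwine doubling with multiplication by a power of two
near `0`, on one side, then these powers are `2` since their exponents have product `1`. -/
lemma Conj.scale_eq_one (C : Conj N H E) {l : Filter ℝ} [l.NeBot] (hl : ScaleInv l)
    (hH : Tendsto H l l) (hlH : ∀ᶠ ε in l, |H ε| < |H (2 * ε)|)
    (hlE : ∀ᶠ ε in l, |E ε| < |E (2 * ε)|) {k m : ℤ}
    (hk : GRelOn l H 1 k 0 0) (hm : GRelOn l E 1 m 0 0) : k = 1 := by
  have hk0 := hk.scale_pos C.h.zero hlH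
  have hm0 := hm.scale_pos C.e.zero hlE
  obtain ⟨n, rfl⟩ := Int.eq_ofNat_of_zero_le hm0.le
  obtain ⟨ε, h1, h2, h3⟩ := ((hk.iter hl n).and ((hH.eventually hm).and hlH)).exists
  simp only [zpow_one, zero_add, C.h.zero, C.e.zero, sub_zero, C.EH] at h1 h2
  have hne : H ε ≠ 0 := by
    intro h0
    have : ε = 0 := by rw [← C.EH ε, h0, C.e.zero]
    simp [this] at h3
  rw [← h2, C.HE] at h1
  have h4 := mul_right_cancel₀ hne h1
  have h5 : (2 : ℝ) ^ (1 : ℤ) = 2 ^ ((n : ℤ) * k) := by simpa using h4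
  have h6 : (1 : ℤ) = n * k := zpow_right_injective₀ (by norm_num) (by norm_num) h5
  nlinarith

lemma Conj.self_zero (C : Conj N H E) : GRel H 1 1 0 0 := by
  refine rel_of_sides ?_ ?_
  · obtain ⟨k, hk⟩ := C.h.right 0
    obtain ⟨m, hm⟩ := C.e.right 0
    rw [mul_zero] at hk hm
    rwa [C.scale_eq_one scaleInv_gt C.h.tendsto_gt C.h.abs_lt_gt C.e.abs_lt_gt hk hm] at hk
  · obtain ⟨k, hk⟩ := C.h.left 0
    obtain ⟨m, hm⟩ := C.e.left 0
    rw [mul_zero] at hk hm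
    rwa [C.scale_eq_one scaleInv_lt C.h.tendsto_lt C.h.abs_lt_lt C.e.abs_lt_lt hk hm] at hk

/-- The germ of `H` at a dyadic is invariant under doubling source and target. -/
lemma Conj.self_dy (C : Conj N H E) {x : ℝ} (hx : Dy x) : GRel H 1 1 x x := by
  obtain ⟨n, hn⟩ := hx
  replace hn : DyAt (n.toNat : ℤ) x := hn.mono (Int.self_le_toNat n)
  generalize n.toNat = n at hn
  induction n generalizing x with
  | zero =>
    obtain ⟨u, hu⟩ := hn
    simp only [Nat.cast_zero, zpow_zero, mul_one] at hu
    have h1 := C.h.translate 0 u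
    rw [zero_add, ← hu] at h1
    simpa using (h1.symm.trans C.self_zero).trans h1
  | succ n ih =>
    have h2 : DyAt n (2 * x) := by
      obtain ⟨u, hu⟩ := hn
      refine ⟨u, ?_⟩
      rw [← hu, Nat.cast_succ, zadd, zpow_one]
      ring
    have h3 := ih h2
    refine rel_of_sides ?_ ?_
    · obtain ⟨t, ht⟩ := C.h.right x
      have h4 : GRelOn (𝓝[>] 0) H 1 1 (2 * x) (2 * x) := h3.filter_mono nhdsWithin_le_nhds
      simpa using (ht.trans scaleInv_gt h4).trans scaleInv_gt (ht.symm scaleInv_gt)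
    · obtain ⟨t, ht⟩ := C.h.left x
      have h4 : GRelOn (𝓝[<] 0) H 1 1 (2 * x) (2 * x) := h3.filter_mono nhdsWithin_le_nhds
      simpa using (ht.trans scaleInv_lt h4).trans scaleInv_lt (ht.symm scaleInv_lt)

lemma Conj.self_pow (C : Conj N H E) {x : ℝ} (hx : Dy x) (k : ℤ) : GRel H k k x x := by
  have h1 : ∀ n : ℕ, GRel H n n x x := by
    intro n
    induction n with
    | zero => exact GRel.refl H x
    | succ n ih => simpa using ih.trans (C.self_dy hx)
  obtain ⟨n, rfl | rfl⟩ := Int.eq_nat_or_neg k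
  · exact h1 n
  · exact (h1 n).symm

/-- At a dyadic, rescaling the source can be undone by `Conj.self_pow`, at the cost of rescaling the
target. -/
lemma Conj.sim_of_rel (C : Conj N H E) {a b : ℤ} {x x' : ℝ} (hx : Dy x) (h : GRel H a b x x') :
    Sim H x x' := by
  have := (C.self_pow hx (-a)).trans h
  exact ⟨-a + b, by simpa using this⟩

lemma Conj.sim_dual (C : Conj N H E) {x x' : ℝ} (hx : Dy x) (h : Sim H x x') :
    Sim E (H x) (H x') := by
  obtain ⟨c, hc⟩ := h
  exact C.swap.sim_of_rel (C.h.dy x hx) (C.dual hc)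

/-! ### Finite memory -/

lemma Half.not_dyAt_of_odd {u n : ℤ} (hu : Odd u) (hn : N < n) : ¬ DyAt N ((u : ℝ) / 2 ^ n) :=
  fun h => by
    have h1 : Lev n ((u : ℝ) / 2 ^ n) := ⟨u, hu, rfl⟩
    have := h1.le_of_dyAt h
    omega

/-- Doubling brings an odd integer over `2 ^ n` down to level `N` without meeting a point where
the two one-sided germs may be rescaled differently. -/
lemma Conj.sim_descend (C : Conj N H E) {u n : ℤ} (hu : Odd u) (hn : N ≤ n) :
    Sim H ((u : ℝ) / 2 ^ n) ((u : ℝ) / 2 ^ (N : ℤ)) := by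
  induction n, hn using Int.leInduction with
  | base => exact Sim.refl _ _
  | succ n hn ih =>
    obtain ⟨t, ht⟩ := C.h.double _ (Half.not_dyAt_of_odd hu (show (N : ℤ) < n + 1 by omega))
    have h1 : 2 * ((u : ℝ) / 2 ^ (n + 1)) = u / 2 ^ n := by
      rw [zadd, zpow_one]
      field_simp
    rw [h1] at ht
    exact (C.sim_of_rel (dy_div_s11 _ _) ht).trans ih

/-- The germ of `H` at an odd integer over `2 ^ n`, where `n ≥ N`, is determined up to
equivalence by the odd integer modulo `2 ^ N`. -/
lemma Conj.memory (C : Conj N H E) {u u' n n' : ℤ} (hu : Odd u) (hu' : Odd u') (hn : N ≤ n)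
    (hn' : N ≤ n') (h : (2 : ℤ) ^ N ∣ u' - u) :
    Sim H ((u : ℝ) / 2 ^ n) ((u' : ℝ) / 2 ^ n') := by
  refine (C.sim_descend hu hn).trans (Sim.trans ?_ (C.sim_descend hu' hn').symm)
  obtain ⟨m, hm⟩ := h
  have h1 : (u' : ℝ) / 2 ^ (N : ℤ) = u / 2 ^ (N : ℤ) + m := by
    have : (u' : ℝ) = u + 2 ^ N * m := by
      have : u' = u + 2 ^ N * m := by linarith
      rw [this]; push_cast; ring
    rw [this, zpow_natCast]
    field_simp
  rw [h1]
  exact ⟨0, C.h.translate _ m⟩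

lemma Half.double_iter (h : Half N H) {x : ℝ} (n : ℕ)
    (hx : ∀ i < n, ¬ DyAt N (2 ^ i * x)) : ∃ t : ℤ, GRel H n t x (2 ^ n * x) := by
  induction n with
  | zero => exact ⟨0, by simpa using GRel.refl H x⟩
  | succ n ih =>
    obtain ⟨t, ht⟩ := ih fun i hi => hx i (by omega)
    obtain ⟨s, hs⟩ := h.double (2 ^ n * x) (hx n (by omega))
    refine ⟨t + s, ?_⟩
    rw [show (2 : ℝ) ^ (n + 1) * x = 2 * (2 ^ n * x) by ring]
    exact_mod_cast ht.trans hs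

/-- Germs at non-dyadic points are not affected by dyadic translations. -/
lemma Half.sim_not_dy (h : Half N H) {x r : ℝ} (hx : ¬ Dy x) (hr : Dy r) : Sim H x (x + r) := by
  have h1 : ∀ y, ¬ Dy y → ∀ i : ℕ, ¬ DyAt N (2 ^ i * y) := by
    intro y hy i hi
    have : Dy ((2 : ℝ) ^ (i : ℤ) * y) := by rw [zpow_natCast]; exact ⟨N, hi⟩
    exact hy ((Dy.zpow_mul_iff _).1 this)
  have hxr : ¬ Dy (x + r) := fun h' => hx (by simpa using h'.sub hr)
  obtain ⟨n, hn⟩ := hr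
  obtain ⟨u, hu⟩ := hn.mono (Int.self_le_toNat n)
  generalize n.toNat = n at hu
  obtain ⟨t, ht⟩ := h.double_iter n fun i _ => h1 x hx i
  obtain ⟨s, hs⟩ := h.double_iter n fun i _ => h1 _ hxr i
  rw [show (2 : ℝ) ^ n * (x + r) = 2 ^ n * x + u by rw [← hu, zpow_natCast]; ring] at hs
  exact ⟨t - s, by simpa [sub_eq_add_neg] using (ht.trans (h.translate _ u)).trans hs.symm⟩

/-! ### Digit separation -/

/-- The germ of `E` at an odd integer divided by `2 ^ n`, where `n ≥ N`, depends, up to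
equivalence, only on the odd integer modulo `2 ^ M`. -/
def Remembers (N : ℕ) (E : ℝ → ℝ) (M : ℕ) : Prop :=
  ∀ u w n m : ℤ, Odd u → Odd w → N ≤ n → N ≤ m → (2 : ℤ) ^ M ∣ w - u →
    Sim E ((u : ℝ) / 2 ^ n) ((w : ℝ) / 2 ^ m)

/-- For numerators congruent to `v` modulo `2 ^ K`, the binary digit of weight `2 ^ K` separates
the germs of `E`. -/
def Separates (N : ℕ) (E : ℝ → ℝ) (K : ℕ) (v : ℤ) : Prop :=
  ∀ a w n m : ℤ, (2 : ℤ) ^ K ∣ a - v → (2 : ℤ) ^ (K + 1) ∣ w - a - 2 ^ K → N ≤ n → N ≤ m →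
    ¬ Sim E ((a : ℝ) / 2 ^ n) ((w : ℝ) / 2 ^ m)

/-- Take `K + 1` to be the least number of binary digits that determine the germ. Since each
digit has only two possible values, changing the last one changes the germ. -/
lemma exists_separates (hN : Remembers N E N) (h0 : ¬ Remembers N E 0) :
    ∃ (K : ℕ) (v : ℤ), 1 ≤ K ∧ Odd v ∧ Separates N E K v := by
  classical
  have hex : ∃ M, Remembers N E M := ⟨N, hN⟩
  obtain ⟨hM, hmin⟩ := And.intro (Nat.find_spec hex) (fun m => Nat.find_min hex (m := m))
  generalize Nat.find hex = M at hM hmin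
  obtain _ | K := M
  · exact absurd hM h0
  have hK : K ≠ 0 := by
    rintro rfl
    refine h0 fun u u' n n' hu hu' hn hn' _ => hM u u' n n' hu hu' hn hn' ?_
    have := hu'.sub_odd hu
    simpa using this.two_dvd
  have hnot := hmin K (by omega)
  unfold Remembers at hnot
  push Not at hnot
  obtain ⟨v, v', l, l', hv, hv', hl, hl', hd, hS⟩ := hnot
  refine ⟨K, v, by omega, hv, fun a a' n n' ha ha' hn hn' hSim => hS ?_⟩
  obtain ⟨x, hx⟩ := hd
  obtain ⟨y, hy⟩ := ha
  obtain ⟨z, hz⟩ := ha'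
  have h2K : Even ((2 : ℤ) ^ K) := even_two.pow_of_ne_zero hK
  have hao : Odd a := by
    rw [show a = v + 2 ^ K * y by linarith]
    exact hv.add_even (h2K.mul_right y)
  have hao' : Odd a' := by
    rw [show a' = a + (2 ^ K + 2 ^ (K + 1) * z) by linarith]
    refine hao.add_even (h2K.add ?_)
    rw [pow_succ, mul_assoc]
    exact h2K.mul_right _
  rw [pow_succ] at hz
  rcases Int.even_or_odd x with hxe | ⟨i, hi⟩
  · obtain ⟨i, hi⟩ := hxe
    exact hM v v' l l' hv hv' hl hl' ⟨i, by rw [hx, hi]; ring⟩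
  rcases Int.even_or_odd y with hye | hyo
  · obtain ⟨j, hj⟩ := hye
    have h1 := hM v a l n hv hao hl hn ⟨j, by rw [hy, hj]; ring⟩
    have h2 := hM a' v' n' l' hao' hv' hn' hl' ⟨i - j - z, by
      rw [pow_succ]; rw [hi] at hx; rw [hj] at hy; linear_combination hx - hy - hz⟩
    exact (h1.trans hSim).trans h2
  · obtain ⟨j, hj⟩ := hyo
    have h1 := hM v a' l n' hv hao' hl hn' ⟨j + 1 + z, by
      rw [pow_succ]; rw [hj] at hy; linear_combination hy + hz⟩
    have h2 := hM a v' n l' hao hv' hn hl' ⟨i - j, by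
      rw [pow_succ]; rw [hi] at hx; rw [hj] at hy; linear_combination hx - hy⟩
    exact (h1.trans hSim.symm).trans h2

/-- An affine map of slope `2 ^ σ` sending `u / 2 ^ n` to a point `u' / 2 ^ n'` of level too low for
the slope alters the germ of `E` at some nearby dyadic: choose a numerator congruent to `v` modulo
`2 ^ K` for the latter, and its image then has a numerator which differs from it by `2 ^ K`
modulo `2 ^ (K + 1)`. -/
lemma Separates.exists_not_sim {K : ℕ} {v : ℤ} (hS : Separates N E K v) (hK : 1 ≤ K)
    (hv : Odd v) {s : ℤ} (hs : s = 1 ∨ s = -1) {u u' n n' σ : ℤ} (hu : Odd u) (hn : N ≤ n)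
    (hn' : N ≤ n') (hlt : n' < n - σ) :
    ∃ η : ℝ, Dy η ∧ 0 < η ∧ η < 2 ^ (-n) ∧
      ¬ Sim E (u / 2 ^ n + s * η) (u' / 2 ^ n' + s * (2 ^ σ * η)) := by
  have h2 : (0 : ℤ) < 2 ^ K := by positivity
  have hs2 : s * s = 1 := by rcases hs with rfl | rfl <;> norm_num
  have hso : Odd s := by rcases hs with rfl | rfl <;> decide
  -- for `η = w / 2 ^ (n + K)`, the numerator of `u / 2 ^ n + s * η` is congruent to `s * w`, hence to
  -- `v`, modulo `2 ^ K`
  set w : ℤ := (s * v) % 2 ^ K with hw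
  have hwdiv : w + 2 ^ K * (s * v / 2 ^ K) = s * v := Int.emod_add_mul_ediv _ _
  have hwo : Odd w := by
    have h3 : Odd (s * v) := hso.mul hv
    rw [show w = s * v - 2 ^ K * (s * v / 2 ^ K) by linarith]
    exact h3.sub_even ((even_two.pow_of_ne_zero (by omega)).mul_right _)
  have hw0 : 0 ≤ w := Int.emod_nonneg _ h2.ne'
  have hwlt : w < 2 ^ K := Int.emod_lt_of_pos _ h2
  have hwpos : 0 < w := by
    rcases hw0.lt_or_eq with h | h
    · exact h
    · rw [← h] at hwo; exact absurd hwo (by decide)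
  obtain ⟨j, hj⟩ : ∃ j : ℕ, n - σ - n' = j + 1 := ⟨(n - σ - n' - 1).toNat, by omega⟩
  have hσ : σ = n - n' - (j + 1) := by omega
  refine ⟨w / 2 ^ (n + K), dy_div_s11 _ _, div_pos (by exact_mod_cast hwpos) (two_zpow_pos _), ?_, ?_⟩
  · rw [div_lt_iff₀ (two_zpow_pos _), ← zadd, neg_add_cancel_left, zpow_natCast]
    exact_mod_cast hwlt
  · have h3 := hS (u * 2 ^ K + s * w) (u' * 2 ^ K * 2 ^ (j + 1) + s * w) (n + K) (n + K - σ)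
      ⟨u - s * (s * v / 2 ^ K), by linear_combination s * hwdiv + v * hs2⟩ ?_ (by omega) (by omega)
    · have e1 : (((u * 2 ^ K + s * w : ℤ) : ℝ)) / 2 ^ (n + K) =
          u / 2 ^ n + s * (w / 2 ^ (n + (K : ℤ))) := by
        have := two_zpow_ne n
        rw [zadd, zpow_natCast]
        push_cast
        field_simp
      have e2 : (((u' * 2 ^ K * 2 ^ (j + 1) + s * w : ℤ) : ℝ)) / 2 ^ (n + K - σ) =
          u' / 2 ^ n' + s * (2 ^ σ * (w / 2 ^ (n + (K : ℤ)))) := by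
        have := two_zpow_ne n
        have := two_zpow_ne n'
        rw [hσ, zsub, zsub, zsub, zadd, zadd, zpow_natCast, zpow_natCast, zpow_one]
        push_cast
        field_simp
        ring
      rwa [e1, e2] at h3
    · obtain ⟨i, hi⟩ := hu
      exact ⟨u' * 2 ^ j - i - 1, by rw [hi]; ring⟩

/-- If on one side of `u / 2 ^ n`, up to distance `2 ^ (-n)`, an affine map of slope `2 ^ σ`
preserves the germs of `E`, then it lowers the level of `u / 2 ^ n` by `σ`: otherwise the last
memorized digit of some nearby point would be altered. -/
lemma Separates.level_eq {K : ℕ} {v : ℤ} (hS : Separates N E K v) (hK : 1 ≤ K)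
    (hv : Odd v) {s : ℤ} (hs : s = 1 ∨ s = -1) {u u' n n' σ : ℤ} (hu : Odd u) (hu' : Odd u')
    (hn : N ≤ n) (hn' : N ≤ n')
    (h : ∀ η : ℝ, Dy η → 0 < η → η < 2 ^ (-n) →
      Sim E (u / 2 ^ n + s * η) (u' / 2 ^ n' + s * (2 ^ σ * η))) : σ = n - n' := by
  rcases lt_trichotomy n' (n - σ) with hlt | heq | hgt
  · obtain ⟨η, h1, h2, h3, h4⟩ := hS.exists_not_sim hK hv hs (u' := u') hu hn hn' hlt
    exact absurd (h η h1 h2 h3) h4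
  · omega
  · obtain ⟨η, h1, h2, h3, h4⟩ := hS.exists_not_sim hK hv hs (u' := u) (σ := -σ) hu' hn' hn
      (by omega)
    have h5 := h (2 ^ (-σ) * η) (h1.zpow_mul _) (mul_pos (two_zpow_pos _) h2) ?_
    · rw [← mul_assoc ((2 : ℝ) ^ σ), ← zadd, add_neg_cancel, zpow_zero, one_mul] at h5
      exact absurd h5.symm h4
    · calc (2 : ℝ) ^ (-σ) * η < 2 ^ (-σ) * 2 ^ (-n') :=
            mul_lt_mul_of_pos_left h3 (two_zpow_pos _)
        _ = 2 ^ (-σ + -n') := (zadd _ _).symm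
        _ ≤ 2 ^ (-n) := zpow_le_zpow_right₀ (by norm_num) (by omega)

/-! ### Germs at small positive dyadics are equivalent -/

lemma Conj.lt_of (C : Conj N H E) {x y : ℝ} (h : H x < H y) : x < y := C.h.mono.lt_iff_lt.1 h

lemma Conj.dy_of (C : Conj N H E) {x : ℝ} (h : Dy (H x)) : Dy x := by
  have := C.e.dy _ h
  rwa [C.EH] at this

/-- In the coordinate `y = H x`, the translation `x ↦ x + r` is affine near a point whose germ is
equivalent to that of its translate. -/
lemma Conj.affine_of_sim (C : Conj N H E) {y r : ℝ} (h : Sim H (E y) (E y + r)) :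
    ∃ c : ℤ, ∀ᶠ ε in 𝓝 (0 : ℝ), H (E (y + ε) + r) - H (E y + r) = 2 ^ c * ε := by
  obtain ⟨c, hc⟩ := h
  refine ⟨c, ?_⟩
  have ht : Tendsto (fun ε => E (y + ε) - E y) (𝓝 0) (𝓝 0) := by
    have : Continuous fun ε => E (y + ε) - E y := by have := C.e.cont; fun_prop
    simpa using this.tendsto 0
  filter_upwards [ht.eventually hc] with ε hε
  rw [zpow_zero, one_mul, add_sub_cancel, C.HE, C.HE,
    show E y + r + (E (y + ε) - E y) = E (y + ε) + r by ring] at hε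
  rw [hε]
  ring

lemma finite_dyAt (n : ℤ) (b : ℝ) : {x : ℝ | DyAt n x ∧ 0 < x ∧ x < b}.Finite := by
  refine ((Set.finite_Icc (0 : ℤ) ⌈b * 2 ^ n⌉).image fun u : ℤ => (u : ℝ) / 2 ^ n).subset ?_
  rintro x ⟨⟨u, hu⟩, h0, hb⟩
  have h2 := two_zpow_pos n
  refine ⟨u, ⟨?_, ?_⟩, ?_⟩
  · have : (0 : ℝ) ≤ u := by rw [← hu]; positivity
    exact_mod_cast this
  · have : (u : ℝ) ≤ ⌈b * 2 ^ n⌉ := by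
      rw [← hu]
      exact (mul_le_mul_of_nonneg_right hb.le h2.le).trans (Int.le_ceil _)
    exact_mod_cast this
  · simp only
    rw [← hu]
    field_simp

/-- Dyadic translations by `r` preserve the germ at dyadics of level at least `N` above that
of `r`. -/
lemma Conj.sim_of_deep (C : Conj N H E) {x r : ℝ} {n l : ℤ} (hx : Lev n x) (hr : DyAt l r)
    (hn : N ≤ n) (hnl : l + N < n) : Sim H x (x + r) := by
  obtain ⟨u, hu, rfl⟩ := hx
  obtain ⟨w, hw⟩ := hr
  obtain ⟨j, hj⟩ : ∃ j : ℕ, n = l + N + j + 1 := ⟨(n - l - N - 1).toNat, by omega⟩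
  have e1 : (u : ℝ) / 2 ^ n + r = ((u + w * 2 ^ (N + j + 1) : ℤ) : ℝ) / 2 ^ n := by
    have := two_zpow_ne l
    push_cast
    rw [← hw, hj, zadd, zadd, zadd, zpow_natCast, zpow_natCast, zpow_one, pow_add, pow_add]
    field_simp
  rw [e1]
  refine C.memory hu ?_ hn hn ⟨w * 2 ^ (j + 1), by ring⟩
  rw [pow_succ]
  exact hu.add_even ((even_two.mul_left _).mul_left _)

/-- The data of a right neighbourhood `(0, b)` of `0` on which `H` commutes with doubling, and
which is mapped into `(0, 2 ^ (-N))` even after doubling. -/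
structure SmallNhd (N : ℕ) (H : ℝ → ℝ) (b : ℝ) : Prop where
  pos : 0 < b
  dy : Dy b
  two : ∀ x, 0 ≤ x → x ≤ b → H (2 * x) = 2 * H x
  lt : H (2 * b) < 2 ^ (-(N : ℤ))

/-- If translation by `r` fails to preserve the germ at some point `x` of `(0, b)` with
`H x` of level at least that of `H b`, choose `x` with `H x` of the largest possible level `n`.
On both sides of `H x`, up to distance `2 ^ (-n)`, all dyadics have level above `n`, so the
translation, in the coordinate `H x`, is affine there. The two slopes agree since
both are determined by the level of `H (x + r)`, and then `x` was not exceptional. -/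
lemma Conj.sim_translate (C : Conj N H E) {K : ℕ} {v : ℤ} (hS : Separates N E K v) (hK : 1 ≤ K)
    (hv : Odd v) {b : ℝ} (S : SmallNhd N H b) {r : ℝ} (hr : Dy r) (hr0 : 0 < r) (hrb : r < b)
    {p : ℤ} (hp : Lev p (H b)) {x : ℝ} (hx : Dy x) (hx0 : 0 < x) (hxb : x < b) {q : ℤ}
    (hq : Lev q (H x)) (hpq : p ≤ q) : Sim H x (x + r) := by
  by_contra hbad
  -- the level of an exceptional point is bounded, so there are finitely many of them
  set Bad : Set ℝ := {z | Dy z ∧ 0 < z ∧ z < b ∧ ¬ Sim H z (z + r)} with hBad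
  have hBfin : Bad.Finite := by
    obtain ⟨l, hl⟩ := hr
    refine (finite_dyAt (max N (l + N)) b).subset ?_
    rintro z ⟨hz, hz0, hzb, hzs⟩
    refine ⟨?_, hz0, hzb⟩
    obtain ⟨n, hn⟩ := exists_lev hz hz0.ne'
    refine hn.dyAt.mono ?_
    by_contra! hlt
    exact hzs (C.sim_of_deep hn hl (by omega) (by omega))
  set Ls : Set ℤ := ⋃ z ∈ Bad, {n | Lev n (H z)} with hLs
  have hLfin : Ls.Finite :=
    hBfin.biUnion fun z _ => Set.Subsingleton.finite fun n hn m hm => Lev.unique hn hm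
  have hqL : q ∈ Ls := Set.mem_biUnion (⟨hx, hx0, hxb, hbad⟩ : x ∈ Bad) hq
  obtain ⟨n, hnL, hmax⟩ := Set.exists_max_image Ls id hLfin ⟨q, hqL⟩
  have hpn : p ≤ n := hpq.trans (hmax q hqL)
  clear hbad hq hpq hqL hx hx0 hxb x
  obtain ⟨x, ⟨hx, hx0, hxb, hbad⟩, hn⟩ := Set.mem_iUnion₂.1 hnL
  have hn : Lev n (H x) := hn
  have hb2 : H b < H (2 * b) := C.h.mono (by linarith [S.pos])
  have hm0 : 0 < H x := C.h.pos hx0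
  have hmb : H x < H b := C.h.mono hxb
  have hm'0 : 0 < H (x + r) := C.h.pos (by linarith)
  have hm'lt : H (x + r) < 2 ^ (-(N : ℤ)) := (C.h.mono (by linarith)).trans S.lt
  have hNn : N < n := hn.lt_of_lt hm0 (by linarith [S.lt])
  obtain ⟨n', hn'⟩ := exists_lev (C.h.dy _ (hx.add hr)) hm'0.ne'
  have hNn' : N < n' := hn'.lt_of_lt hm'0 hm'lt
  have h2n : (0 : ℝ) < 2 ^ (-n) := two_zpow_pos _
  have hlo : 2 ^ (-n) ≤ H x := by
    have := DyAt.add_le (n := n) (x := 0) ⟨0, by simp⟩ hn.dyAt hm0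
    linarith
  have hhi : H x + 2 ^ (-n) ≤ H b := hn.dyAt.add_le (hp.dyAt.mono hpn) hmb
  -- the germs are preserved at all points close to `x`
  have hgood : ∀ y, y ≠ H x → H x - 2 ^ (-n) < y → y < H x + 2 ^ (-n) → Sim H (E y) (E y + r) := by
    intro y hne h1 h2
    by_cases hy : Dy (E y)
    · by_contra hsim
      have hy0 : 0 < y := by linarith
      have hE0 : 0 < E y := C.e.pos hy0
      have hEb : E y < b := C.lt_of (by rw [C.HE]; linarith)
      have hHy := C.h.dy _ hy
      rw [C.HE] at hHy
      obtain ⟨k, hk⟩ := exists_lev hHy hy0.ne'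
      have hkL : k ∈ Ls :=
        Set.mem_biUnion (⟨hy, hE0, hEb, hsim⟩ : E y ∈ Bad) (by rwa [Set.mem_ofPred, C.HE])
      have hkn : k ≤ n := hmax k hkL
      have hyn := hk.dyAt.mono hkn
      rcases lt_or_gt_of_ne hne with h | h
      · have := hyn.add_le hn.dyAt h
        linarith
      · have := hn.dyAt.add_le hyn h
        linarith
    · exact C.h.sim_not_dy hy hr
  have hΓ : Continuous fun y => H (E y + r) := by
    have := C.e.cont
    have := C.h.cont
    fun_prop
  obtain ⟨w, hw, hw'⟩ := id hn'
  obtain ⟨u, hu, hu'⟩ := id hn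
  -- the translation in the coordinate `H x` is affine on both sides of `H x`
  obtain ⟨c₁, d₁, h₁⟩ := affine_Icc hΓ (show H x - 2 ^ (-n) < H x by linarith)
    fun y h1 h2 => C.affine_of_sim (hgood y h2.ne h1 (by linarith))
  obtain ⟨c₂, d₂, h₂⟩ := affine_Icc hΓ (show H x < H x + 2 ^ (-n) by linarith)
    fun y h1 h2 => C.affine_of_sim (hgood y h1.ne' (by linarith) h2)
  have hx₁ := h₁ (H x) (by linarith) le_rfl
  have hx₂ := h₂ (H x) le_rfl (by linarith)
  have hsimE : ∀ y, Dy y → y ≠ H x → H x - 2 ^ (-n) < y → y < H x + 2 ^ (-n) →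
      Sim E y (H (E y + r)) := by
    intro y hy hne h1 h2
    have := C.sim_dual (C.e.dy y hy) (hgood y hne h1 h2)
    rwa [C.HE] at this
  have hHx := C.h.dy x hx
  have hc₁ : c₁ = n - n' := by
    refine hS.level_eq hK hv (s := -1) (Or.inr rfl) hu hw hNn.le hNn'.le fun η hη h0 hlt => ?_
    rw [← hu', ← hw']
    push_cast
    have h3 := hsimE (H x - η) (hHx.sub hη) (by linarith) (by linarith) (by linarith)
    simp only [h₁ (H x - η) (by linarith) (by linarith)] at h3
    rw [C.EH] at hx₁
    convert h3 using 1
    · ring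
    · rw [hx₁]; ring
  have hc₂ : c₂ = n - n' := by
    refine hS.level_eq hK hv (s := 1) (Or.inl rfl) hu hw hNn.le hNn'.le fun η hη h0 hlt => ?_
    rw [← hu', ← hw']
    push_cast
    have h3 := hsimE (H x + η) (hHx.add hη) (by linarith) (by linarith) (by linarith)
    simp only [h₂ (H x + η) (by linarith) (by linarith)] at h3
    rw [C.EH] at hx₂
    convert h3 using 1
    · ring
    · rw [hx₂]; ring
  refine hbad ⟨n - n', ?_⟩
  have hcont : Tendsto (fun ε => H (x + ε)) (𝓝 0) (𝓝 (H x)) := by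
    have : Continuous fun ε => H (x + ε) := by have := C.h.cont; fun_prop
    simpa using this.tendsto 0
  filter_upwards [hcont.eventually (Ioo_mem_nhds (show H x - 2 ^ (-n) < H x by linarith)
    (show H x < H x + 2 ^ (-n) by linarith))] with ε hε
  have e : H (x + r + 2 ^ (0 : ℤ) * ε) = H (E (H (x + ε)) + r) := by
    rw [C.EH, zpow_zero, one_mul, add_right_comm]
  rw [e]
  rw [C.EH] at hx₁ hx₂
  rcases le_total (H (x + ε)) (H x) with hle | hle
  · rw [h₁ _ hε.1.le hle, hx₁, hc₁]; ring
  · rw [h₂ _ hle hε.2.le, hx₂, hc₂]; ring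

lemma SmallNhd.half_pow {b : ℝ} (S : SmallNhd N H b) {x : ℝ} (hx0 : 0 < x) (hxb : x < b) (k : ℕ) :
    H (x / 2 ^ k) = H x / 2 ^ k ∧ 0 < x / 2 ^ k ∧ x / 2 ^ k < b := by
  have hb : ∀ k : ℕ, 0 < x / 2 ^ k ∧ x / 2 ^ k < b := fun k =>
    ⟨by positivity, (div_le_self hx0.le (one_le_pow₀ (by norm_num))).trans_lt hxb⟩
  refine ⟨?_, hb k⟩
  induction k with
  | zero => simp
  | succ k ih =>
    have h1 := S.two (x / 2 ^ (k + 1)) (hb (k + 1)).1.le (hb (k + 1)).2.le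
    rw [show 2 * (x / 2 ^ (k + 1)) = x / 2 ^ k by rw [pow_succ]; field_simp, ih] at h1
    rw [pow_succ]
    field_simp at h1 ⊢
    rw [pow_succ] at h1
    linarith

lemma Conj.sim_half_pow (C : Conj N H E) {b : ℝ} (S : SmallNhd N H b) {x : ℝ} (hx : Dy x)
    (hx0 : 0 < x) (hxb : x < b) (k : ℕ) : Sim H (x / 2 ^ k) x := by
  have hdy : ∀ k : ℕ, Dy (x / 2 ^ k) := fun k => by
    have := hx.zpow_mul (-(k : ℤ))
    rwa [zneg, zpow_natCast, inv_mul_eq_div] at this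
  induction k with
  | zero => simpa using Sim.refl H x
  | succ k ih =>
    refine Sim.trans ?_ ih
    obtain ⟨-, h1, h2⟩ := S.half_pow hx0 hxb (k + 1)
    refine C.sim_of_rel (hdy (k + 1)) (a := 1) (b := 1) ?_
    set z := x / 2 ^ (k + 1)
    rw [show x / 2 ^ k = 2 * z by simp only [z]; rw [pow_succ]; field_simp]
    have ht : Tendsto (fun ε => z + ε) (𝓝 0) (𝓝 z) := by
      have : Continuous fun ε => z + ε := by fun_prop
      simpa using this.tendsto 0
    filter_upwards [ht.eventually (Ioo_mem_nhds h1 h2)] with ε hε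
    rw [zpow_one, ← mul_add, S.two _ hε.1.le hε.2.le, S.two _ h1.le h2.le]
    ring

/-- If the germs of `E` at dyadics of large level are all equivalent, apply this to the values of
`H` and dualize. Otherwise digit separation is available; rescale `x` and `y` towards `0`, which
does not change their germs, until `Conj.sim_translate` applies to the translation from one to the
other. -/
lemma Conj.sim_small (C : Conj N H E) {b : ℝ} (S : SmallNhd N H b) {x y : ℝ} (hx : Dy x) (hy : Dy y)
    (hx0 : 0 < x) (hxb : x < b) (hy0 : 0 < y) (hyb : y < b) : Sim H x y := by
  by_cases h0 : Remembers N E 0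
  · have hlev : ∀ z, Dy z → 0 < z → z < b → ∃ n, Lev n (H z) ∧ N < n := by
      intro z hz hz0 hzb
      have h1 := C.h.pos hz0
      obtain ⟨n, hn⟩ := exists_lev (C.h.dy z hz) h1.ne'
      exact ⟨n, hn, hn.lt_of_lt h1 ((C.h.mono (by linarith)).trans S.lt)⟩
    obtain ⟨n, ⟨u, hu, hu'⟩, hn⟩ := hlev x hx hx0 hxb
    obtain ⟨m, ⟨w, hw, hw'⟩, hm⟩ := hlev y hy hy0 hyb
    have h1 := h0 u w n m hu hw hn.le hm.le (by simp)
    rw [← hu', ← hw'] at h1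
    have h2 := C.swap.sim_dual (C.h.dy x hx) h1
    rwa [C.EH, C.EH] at h2
  obtain ⟨K, v, hK, hv, hS⟩ := exists_separates
    (fun u u' n n' hu hu' hn hn' h => C.swap.memory hu hu' hn hn' h) h0
  wlog hxy : x < y generalizing x y
  · rcases (not_lt.1 hxy).eq_or_lt with rfl | h
    · exact Sim.refl _ _
    · exact (this hy hx hy0 hyb hx0 hxb h).symm
  obtain ⟨p, hp⟩ := exists_lev (C.h.dy b S.dy) (C.h.pos S.pos).ne'
  obtain ⟨n, hn⟩ := exists_lev (C.h.dy x hx) (ne_of_gt (C.h.pos hx0))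
  -- rescaling towards `0` raises the level of `H x` beyond that of `H b`
  set k := (p - n).toNat with hk
  have hdy : ∀ z : ℝ, Dy z → Dy (z / 2 ^ k) := fun z hz => by
    have := hz.zpow_mul (-(k : ℤ))
    rwa [zneg, zpow_natCast, inv_mul_eq_div] at this
  obtain ⟨h1, h2, h3⟩ := S.half_pow hx0 hxb k
  have hlk : Lev (n + k) (H (x / 2 ^ k)) := by
    have := hn.div k
    rwa [zpow_natCast, ← h1] at this
  have h4 := C.sim_translate hS hK hv S (r := (y - x) / 2 ^ k) (hdy _ (hy.sub hx))
    (div_pos (by linarith) (by positivity))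
    ((div_le_self (by linarith) (one_le_pow₀ (by norm_num))).trans_lt (by linarith))
    hp (hdy _ hx) h2 h3 hlk (by omega)
  rw [← add_div, add_sub_cancel] at h4
  exact ((C.sim_half_pow S hx hx0 hxb k).symm.trans h4).trans (C.sim_half_pow S hy hy0 hyb k)

/-! ### Linearity near `0` and piecewise linearity of `H` -/

lemma Conj.exists_small (C : Conj N H E) :
    ∃ B : ℕ, SmallNhd N H (2 * (2 : ℝ) ^ (-(B : ℤ))) := by
  have h1 : ∀ᶠ ε in 𝓝 (0 : ℝ), H (2 * ε) = 2 * H ε := by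
    filter_upwards [C.self_zero] with ε hε
    simpa [C.h.zero] using hε
  have h2 : ∀ᶠ ε in 𝓝 (0 : ℝ), H (2 * ε) < 2 ^ (-(N : ℤ)) := by
    have hc : Continuous fun ε => H (2 * ε) := by have := C.h.cont; fun_prop
    refine (hc.tendsto 0).eventually (gt_mem_nhds ?_)
    rw [mul_zero, C.h.zero]
    exact two_zpow_pos _
  obtain ⟨δ, hδ, h⟩ := Metric.eventually_nhds_iff.1 (h1.and h2)
  obtain ⟨B, hB⟩ := exists_zpow_lt (half_pos hδ)
  have hpos := two_zpow_pos (-(B : ℤ))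
  have hd : ∀ x : ℝ, 0 ≤ x → x ≤ 2 * (2 : ℝ) ^ (-(B : ℤ)) → dist x 0 < δ := fun x h0 hx => by
    rw [Real.dist_eq, sub_zero, abs_of_nonneg h0]
    linarith
  refine ⟨B, by linarith, ?_, fun x h0 hx => (h (hd x h0 hx)).1, (h (hd _ (by linarith) le_rfl)).2⟩
  have := (dy_zpow_s11 (-(B : ℤ))).zpow_mul 1
  rwa [zpow_one] at this

/-- On a small interval, translations by dyadics are affine in the coordinate `H x`. Comparing
with `H (2 * r) = 2 * H r`, their slope is `1`, so `H` is additive. -/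
lemma Conj.additive (C : Conj N H E) {β : ℝ} (S : SmallNhd N H (2 * β)) {r : ℝ} (hr : Dy r)
    (hr0 : 0 < r) (hrβ : r ≤ β) {x : ℝ} (hx0 : 0 ≤ x) (hxβ : x ≤ β) : H (x + r) = H x + H r := by
  have hβ : 0 < β := by linarith
  have hΓ : Continuous fun y => H (E y + r) := by
    have := C.e.cont
    have := C.h.cont
    fun_prop
  obtain ⟨c, d, h⟩ := affine_Icc hΓ (C.h.pos hβ) fun y h1 h2 => by
    refine C.affine_of_sim ?_
    have h3 : 0 < E y := C.e.pos h1
    have h4 : E y < β := C.lt_of (by rwa [C.HE])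
    by_cases hy : Dy (E y)
    · exact C.sim_small S hy (hy.add hr) h3 (by linarith) (by linarith) (by linarith)
    · exact C.h.sim_not_dy hy hr
  have h' : ∀ z, 0 ≤ z → z ≤ β → H (z + r) = 2 ^ c * H z + d := fun z h1 h2 => by
    have := h (H z) ?_ (C.h.mono.monotone h2)
    · rwa [C.EH] at this
    · have := C.h.mono.monotone h1
      rwa [C.h.zero] at this
  have e0 := h' 0 le_rfl hβ.le
  rw [zero_add, C.h.zero, mul_zero, zero_add] at e0
  have er := h' r hr0.le hrβ
  rw [← two_mul, S.two r hr0.le (by linarith), ← e0] at er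
  have hc : (2 : ℝ) ^ c = 1 := by
    have := C.h.pos hr0
    have h5 : ((2 : ℝ) ^ c - 1) * H r = 0 := by linarith
    rcases mul_eq_zero.1 h5 with h | h <;> linarith
  rw [h' x hx0 hxβ, hc, e0, one_mul]

/-- Additivity gives linearity on dyadics, and continuity gives it everywhere. -/
lemma Conj.linear (C : Conj N H E) {B : ℕ} (S : SmallNhd N H (2 * (2 : ℝ) ^ (-(B : ℤ)))) {x : ℝ}
    (hx0 : 0 ≤ x) (hxβ : x ≤ 2 ^ (-(B : ℤ))) :
    H x = H (2 ^ (-(B : ℤ))) / 2 ^ (-(B : ℤ)) * x := by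
  set β : ℝ := 2 ^ (-(B : ℤ)) with hβdef
  have hβ : 0 < β := two_zpow_pos _
  have hmul : ∀ r, Dy r → 0 < r → ∀ k : ℕ, k * r ≤ β → H (k * r) = k * H r := by
    intro r hr hr0 k
    induction k with
    | zero => intro; simp [C.h.zero]
    | succ k ih =>
      intro hk
      push_cast at hk ⊢
      have h0 : (0 : ℝ) ≤ k * r := by positivity
      rw [add_mul, one_mul] at hk ⊢
      rw [C.additive S hr hr0 (by linarith) h0 (by linarith), ih (by linarith)]
      ring
  refine eqOn_Icc_of_dy C.h.cont (by fun_prop) hβ ?_ hx0 hxβ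
  rintro z ⟨n, hn⟩ hz0 hzβ
  obtain ⟨j, hj⟩ : ∃ j : ℕ, max n B = B + j := ⟨(max n B - B).toNat, by omega⟩
  obtain ⟨w, hw⟩ := hn.mono (le_max_left n B)
  rw [hj, zadd, zpow_natCast, zpow_natCast] at hw
  have hw0 : 0 < w := by
    have : (0 : ℝ) < w := by rw [← hw]; positivity
    exact_mod_cast this
  obtain ⟨k, rfl⟩ := Int.eq_ofNat_of_zero_le hw0.le
  set r : ℝ := β / 2 ^ j with hr
  have hr0 : 0 < r := by positivity
  have hrdy : Dy r := by
    have := (dy_zpow_s11 (-(B : ℤ))).zpow_mul (-(j : ℤ))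
    rwa [zneg (j : ℤ), zpow_natCast, inv_mul_eq_div] at this
  have hβr : β = (2 ^ j : ℕ) * r := by rw [hr]; push_cast; field_simp
  have hzr : z = k * r := by
    rw [hr, hβdef, zneg, zpow_natCast]
    push_cast at hw
    rw [← hw]
    field_simp
  have e1 := hmul r hrdy hr0 _ hβr.symm.le
  rw [← hβr] at e1
  have e2 := hmul r hrdy hr0 k (by rw [← hzr]; exact hzβ.le)
  rw [← hzr] at e2
  rw [e2, e1, hzr]
  field_simp
  push_cast at hβr ⊢
  linear_combination (k * H r) * hβr

lemma eq_zpow_of_dy_s11 {a : ℝ} (ha : 0 < a) (h : Dy a) (h' : Dy a⁻¹) : ∃ c : ℤ, a = 2 ^ c := by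
  obtain ⟨n, u, hu, hn⟩ := exists_lev h ha.ne'
  obtain ⟨m, v, hv, hm⟩ := exists_lev h' (inv_pos.2 ha).ne'
  have h1 : (u : ℝ) * v = 2 ^ (n + m) := by
    have h2 := mul_inv_cancel₀ ha.ne'
    rw [hm, hn] at h2
    rw [zadd]
    field_simp at h2
    exact h2
  have hu0 : 0 < u := by
    have : (0 : ℝ) < u := by
      rw [hn] at ha
      have h3 := two_zpow_pos n
      by_contra! hle
      exact absurd ha (not_lt.2 (div_nonpos_of_nonpos_of_nonneg hle h3.le))
    exact_mod_cast this
  -- `1` has level `n + m` after division by `2 ^ (n + m)`, and level `0`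
  have hl : Lev (n + m) (1 : ℝ) := ⟨u * v, hu.mul hv, by
    push_cast
    rw [h1, div_self (two_zpow_ne _)]⟩
  have hl' : Lev 0 (1 : ℝ) := ⟨1, odd_one, by simp⟩
  have h0 := hl.unique hl'
  rw [h0, zpow_zero] at h1
  have h3 : u * v = 1 := by exact_mod_cast h1
  have h4 : u = 1 := by
    rcases Int.eq_one_or_neg_one_of_mul_eq_one h3 with h | h <;> omega
  exact ⟨-n, by rw [hn, h4, zneg]; simp⟩

/-- Near `0`, to the right, `H` is multiplication by a power of two. -/
lemma Conj.germ_zero (C : Conj N H E) :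
    ∃ (c : ℤ) (β : ℝ), 0 < β ∧ ∀ x, 0 ≤ x → x ≤ β → H x = 2 ^ c * x := by
  obtain ⟨B, S⟩ := C.exists_small
  have hlin := fun x h0 hx => C.linear S (x := x) h0 hx
  set β : ℝ := 2 ^ (-(B : ℤ)) with hβdef
  have hβ : 0 < β := two_zpow_pos _
  have hHβ : 0 < H β := C.h.pos hβ
  set a := H β / β with ha
  have ha0 : 0 < a := div_pos hHβ hβ
  have hdy : Dy a := by
    have h1 := (C.h.dy β (dy_zpow_s11 _)).zpow_mul B
    rwa [show (2 : ℝ) ^ (B : ℤ) * H β = a by rw [ha, hβdef, zneg]; field_simp] at h1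
  have hdy' : Dy a⁻¹ := by
    obtain ⟨n, hn⟩ := exists_zpow_lt hHβ
    have h1 := two_zpow_pos (-(n : ℤ))
    set q : ℝ := 2 ^ (-(n : ℤ)) with hq
    have h2 : E q < β := C.lt_of (by rwa [C.HE])
    have h3 := hlin (E q) (C.e.pos h1).le h2.le
    rw [C.HE] at h3
    have h4 := (C.e.dy q (dy_zpow_s11 _)).zpow_mul n
    rwa [show (2 : ℝ) ^ (n : ℤ) * E q = a⁻¹ by
      have h5 : (2 : ℝ) ^ (n : ℤ) * q = 1 := by
        rw [hq, ← zadd, add_neg_cancel, zpow_zero]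
      rw [h3] at h5
      field_simp
      linarith] at h4
  obtain ⟨c, hc⟩ := eq_zpow_of_dy_s11 ha0 hdy hdy'
  exact ⟨c, β, hβ, fun x h0 hx => by rw [hlin x h0 hx, hc]⟩

/-- Away from the integers divided by `2 ^ N`, the germ of `H` is a rescaling of a germ near `0`,
so `H` is locally affine. -/
lemma Conj.locally_affine (C : Conj N H E) {x : ℝ} (hx : ¬ DyAt N x) :
    ∃ (k : ℤ) (c : ℝ), ∀ᶠ y in 𝓝 x, H y = 2 ^ k * y + c := by
  obtain ⟨c, β, hβ, hlin⟩ := C.germ_zero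
  set m := ⌊x⌋ with hm
  have hmN : DyAt N (m : ℝ) := (dyAt_int m).mono (by omega)
  set z := x - m with hz
  have hzN : ¬ DyAt N z := fun h => hx (by simpa [hz] using h.add hmN)
  have hz0 : 0 < z := by
    refine lt_of_le_of_ne (sub_nonneg.2 (Int.floor_le x)) fun h => hzN ⟨0, by simp [← h]⟩
  have hz1 : z < 1 := by
    have := Int.lt_floor_add_one x
    linarith
  -- halving the fractional part `z` of `x` repeatedly brings it close to `0`
  obtain ⟨n, hn⟩ := exists_zpow_lt hβ
  rw [zneg, zpow_natCast] at hn
  set w := z / 2 ^ n with hw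
  have hw0 : 0 < w := by positivity
  have hwβ : w < β := by
    refine lt_of_le_of_lt ?_ hn
    rw [hw, div_eq_mul_inv]
    exact mul_le_of_le_one_left (by positivity) hz1.le
  have hzw : z = 2 ^ n * w := by rw [hw]; field_simp
  obtain ⟨t, ht⟩ := C.h.double_iter (x := w) n fun i hi h => by
    refine hzN ?_
    obtain ⟨u, hu⟩ := h
    refine ⟨u * 2 ^ (n - i), ?_⟩
    push_cast
    rw [← hu, hzw]
    have : (2 : ℝ) ^ n = 2 ^ (n - i) * 2 ^ i := by rw [← pow_add]; congr 1; omega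
    rw [this]
    ring
  rw [← hzw] at ht
  have hrel := ht.trans (C.h.translate z m)
  rw [show z + m = x by rw [hz]; ring] at hrel
  have h1 : ∀ᶠ ε in 𝓝 (0 : ℝ), H (x + 2 ^ (n : ℤ) * ε) = 2 ^ (t + c) * ε + H x := by
    have ht : Tendsto (fun ε => w + ε) (𝓝 0) (𝓝 w) := by
      have : Continuous fun ε => w + ε := by fun_prop
      simpa using this.tendsto 0
    filter_upwards [hrel, ht.eventually (Ioo_mem_nhds hw0 hwβ)] with ε h1 h2
    rw [hlin _ h2.1.le h2.2.le, hlin w hw0.le hwβ.le, add_zero, add_zero] at h1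
    rw [zadd]
    linarith
  have h2 : Tendsto (fun y => 2 ^ (-(n : ℤ)) * (y - x)) (𝓝 x) (𝓝 0) := by
    have : Continuous fun y => (2 : ℝ) ^ (-(n : ℤ)) * (y - x) := by fun_prop
    simpa using this.tendsto x
  refine ⟨t + c - n, H x - 2 ^ (t + c - n) * x, ?_⟩
  filter_upwards [h2.eventually h1] with y hy
  rw [← mul_assoc, ← mul_assoc, ← zadd, ← zadd, add_neg_cancel, zpow_zero, one_mul,
    add_sub_cancel, ← sub_eq_add_neg] at hy
  rw [hy]
  ring

lemma Conj.circPL (C : Conj N H E) : CircPL 2 1 H := by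
  refine ⟨{x | DyAt N x}, ?_, ?_, ?_, ?_⟩
  · refine ((finite_dyAt N 1).union (Set.finite_singleton 0)).subset ?_
    rintro x ⟨h, h0, h1⟩
    rcases h0.eq_or_lt with h0 | h0
    · exact Or.inr h0.symm
    · exact Or.inl ⟨h, h0, h1⟩
  · intro x hx
    have h1 : DyAt N (1 : ℝ) := by
      have := (dyAt_int 1).mono (show (0 : ℤ) ≤ N by omega)
      simpa using this
    exact ⟨hx.add h1, by rw [sub_eq_add_neg]; exact hx.add h1.neg⟩
  · exact fun x hx => mem_zpows_iff.2 ⟨N, hx⟩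
  · intro x hx
    obtain ⟨k, c, h⟩ := C.locally_affine hx
    obtain ⟨ε, hε, h⟩ := Metric.eventually_nhds_iff.1 h
    exact ⟨k, c, ε, hε, fun y hy => by
      have := h (show dist y x < ε by rwa [Real.dist_eq])
      exact_mod_cast this⟩

/-! ### Lifts of the circle maps -/

lemma exists_dyAt_of_finite {s : Set ℝ} (hs : s.Finite) (h : ∀ x ∈ s, Dy x) :
    ∃ M : ℕ, ∀ x ∈ s, DyAt M x := by
  induction s, hs using Set.Finite.induction_on with
  | empty => exact ⟨0, by simp⟩
  | @insert a s _ _ ih =>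
    obtain ⟨M, hM⟩ := ih fun x hx => h x (Set.mem_insert_of_mem _ hx)
    obtain ⟨n, hn⟩ := h a (Set.mem_insert _ _)
    refine ⟨max M n.toNat, fun x hx => ?_⟩
    rcases hx with rfl | hx
    · exact hn.mono (by omega)
    · exact (hM x hx).mono (by omega)

/-- `G` maps dyadics to dyadics, and is locally affine with slope a power of two away from the
integers divided by `2 ^ M`. -/
def DyadicPL_s11 (M : ℕ) (G : ℝ → ℝ) : Prop :=
  (∀ x, Dy x → Dy (G x)) ∧
    ∀ y, ¬ DyAt M y → ∃ (k : ℤ) (d : ℝ), ∀ᶠ z in 𝓝 y, G z = 2 ^ k * z + d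

lemma circPL_breaks {F : ℝ → ℝ} (h : CircPL 2 1 F) :
    ∃ M : ℕ, ∀ y, ¬ DyAt M y → ∃ (k : ℤ) (d : ℝ), ∀ᶠ z in 𝓝 y, F z = 2 ^ k * z + d := by
  obtain ⟨B, hfin, hper, hdy, hF⟩ := h
  obtain ⟨M, hM⟩ := exists_dyAt_of_finite hfin fun x hx => mem_zpows_iff.1 (hdy hx.1)
  have h_int : ∀ (m : ℤ), ∀ x ∈ B, x + m ∈ B := by
    intro m
    induction m using Int.induction_on with
    | zero => simp
    | succ i ih =>
      intro x hx
      have := (hper _ (ih x hx)).1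
      push_cast at this ⊢
      rwa [← add_assoc]
    | pred i ih =>
      intro x hx
      have := (hper _ (ih x hx)).2
      push_cast at this ⊢
      rwa [← add_sub_assoc]
  refine ⟨M, fun y hy => ?_⟩
  obtain ⟨k, d, ε, hε, h⟩ := hF y fun hyB => hy <| by
    have h1 := h_int (-⌊y⌋) y hyB
    push_cast at h1
    rw [← sub_eq_add_neg, Int.self_sub_floor] at h1
    have h2 := (hM _ ⟨h1, Int.fract_nonneg y, Int.fract_lt_one y⟩).add
      ((dyAt_int ⌊y⌋).mono (show (0 : ℤ) ≤ M by omega))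
    rwa [Int.fract_add_floor] at h2
  refine ⟨k, d, Metric.eventually_nhds_iff.2 ⟨ε, hε, fun z hz => ?_⟩⟩
  rw [Real.dist_eq] at hz
  exact_mod_cast h z hz

/-- Two continuous lifts of the same circle map differ by an integer. -/
lemma lift_unique {F G : ℝ → ℝ} (hF : Continuous F) (hG : Continuous G)
    (h : ∀ x, ((F x : ℝ) : AddCircle (1 : ℝ)) = (G x : ℝ)) : ∃ m : ℤ, ∀ x, F x = G x + m := by
  have h1 : ∀ x, ∃ n : ℤ, (n : ℝ) = F x - G x := by
    intro x
    have h2 : ((F x - G x : ℝ) : AddCircle (1 : ℝ)) = 0 := by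
      rw [AddCircle.coe_sub, h x, sub_self]
    obtain ⟨n, hn⟩ := AddCircle.coe_eq_zero_iff (1 : ℝ) |>.1 h2
    exact ⟨n, by simpa using hn⟩
  choose n hn using h1
  have hc : Continuous n := by
    rw [Int.isClosedEmbedding_coe_real.isEmbedding.continuous_iff]
    have : (fun x => ((n x : ℤ) : ℝ)) = fun x => F x - G x := funext hn
    change Continuous fun x => ((n x : ℤ) : ℝ)
    rw [this]
    fun_prop
  refine ⟨n 0, fun x => ?_⟩
  rw [← PreconnectedSpace.constant inferInstance hc (x := x) (y := 0), hn x]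
  ring

lemma dyadicPL_of_memTbar {g : AddCircle (1 : ℝ) → AddCircle (1 : ℝ)} (hg : MemTbar 2 1 g)
    {F : ℝ → ℝ} (hF : Continuous F) (h : ∀ x : ℝ, g (x : AddCircle (1 : ℝ)) = (F x : ℝ)) :
    ∃ M, DyadicPL_s11 M F := by
  obtain ⟨G, d, -, hG, -, -, hcont, hPL, hdy⟩ := hg
  obtain ⟨m, hm⟩ := lift_unique hF hcont fun x => by rw [← h, ← hG]
  obtain ⟨M, hM⟩ := circPL_breaks hPL
  refine ⟨M, fun x hx => ?_, fun y hy => ?_⟩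
  · rw [hm x]
    exact (mem_zpows_iff.1 (hdy x (mem_zpows_iff.2 hx))).add (dy_int_s11 m)
  · obtain ⟨k, c, hk⟩ := hM y hy
    refine ⟨k, c + m, ?_⟩
    filter_upwards [hk] with z hz
    rw [hm, hz]
    ring

/-- Lifts of a circle homeomorphism fixing `0` and of its inverse. -/
structure Lifts (H E : ℝ → ℝ) : Prop where
  mono : StrictMono H
  cont : Continuous H
  zero : H 0 = 0
  per : ∀ x, H (x + 1) = H x + 1
  contE : Continuous E
  HE : ∀ y, H (E y) = y
  EH : ∀ x, E (H x) = x

variable {M M' : ℕ}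

lemma Lifts.swap (L : Lifts H E) : Lifts E H where
  mono x y h := L.mono.lt_iff_lt.1 (by rwa [L.HE, L.HE])
  cont := L.contE
  zero := by rw [← L.zero, L.EH, L.zero]
  per x := by rw [← L.EH (E x + 1), L.per, L.HE]
  contE := L.cont
  HE := L.EH
  EH := L.HE

lemma Lifts.per_int (L : Lifts H E) (x : ℝ) (m : ℤ) : H (x + m) = H x + m := by
  induction m using Int.induction_on with
  | zero => simp
  | succ i ih =>
    push_cast at ih ⊢
    rw [← add_assoc, L.per, ih]
    ring
  | pred i ih =>
    have := L.per (x + ((-i - 1 : ℤ) : ℝ))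
    push_cast at ih this ⊢
    rw [show x + (-(i : ℝ) - 1) + 1 = x + -i by ring, ih] at this
    linarith

lemma DyadicPL_s11.dy_of {G : ℝ → ℝ} (hG : DyadicPL_s11 M G) {y : ℝ} (h : Dy (G y)) : Dy y := by
  by_cases hy : DyAt M y
  · exact ⟨M, hy⟩
  obtain ⟨k, d, hk⟩ := hG.2 y hy
  obtain ⟨δ, hδ, hk⟩ := Metric.eventually_nhds_iff.1 hk
  obtain ⟨q, hq, h1, h2⟩ := exists_dy_btw (show y < y + δ by linarith)
  have hd : Dy d := by
    have h3 := (hG.1 q hq).sub (hq.zpow_mul k)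
    rwa [hk (by rw [Real.dist_eq, abs_of_pos] <;> linarith), add_sub_cancel_left] at h3
  have h4 := h.sub hd
  rwa [hk (by simpa using hδ), add_sub_cancel_right, Dy.zpow_mul_iff] at h4

/-- `H` maps dyadics to dyadics: if `H (2 * x)` is dyadic then so is `H x`, since
`H (2 * x)` is its image by a piecewise linear map with dyadic data. -/
lemma Lifts.dy (L : Lifts H E) (hG : DyadicPL_s11 M fun y => H (2 * E y)) {x : ℝ} (hx : Dy x) :
    Dy (H x) := by
  obtain ⟨n, hn⟩ := hx
  replace hn : DyAt (n.toNat : ℤ) x := hn.mono (Int.self_le_toNat n)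
  generalize n.toNat = n at hn
  induction n generalizing x with
  | zero =>
    obtain ⟨u, hu⟩ := hn
    simp only [Nat.cast_zero, zpow_zero, mul_one] at hu
    have h1 := L.per_int 0 u
    rw [zero_add, L.zero, zero_add] at h1
    rw [hu, h1]
    exact dy_int_s11 u
  | succ n ih =>
    refine hG.dy_of ?_
    rw [L.EH]
    refine ih ?_
    obtain ⟨u, hu⟩ := hn
    refine ⟨u, ?_⟩
    rw [← hu, Nat.cast_succ, zadd, zpow_one]
    ring

/-- A continuous map satisfying `DyadicPL` is affine between consecutive integers divided by
`2 ^ M`. -/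
lemma DyadicPL_s11.one_sided {G : ℝ → ℝ} (hG : DyadicPL_s11 M G) (hc : Continuous G) {α β : ℝ} (u : ℤ)
    (hα : α = u / 2 ^ M) (hβ : β = (u + 1) / 2 ^ M) :
    ∃ (c : ℤ) (d : ℝ), ∀ y, α ≤ y → y ≤ β → G y = 2 ^ c * y + d := by
  have h2 : (0 : ℝ) < 2 ^ M := by positivity
  refine affine_Icc hc (by rw [hα, hβ]; gcongr; linarith) fun y h1 h3 => ?_
  have hy : ¬DyAt M y := by
    rintro ⟨w, hw⟩
    rw [zpow_natCast] at hw
    rw [hα, div_lt_iff₀ h2, hw] at h1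
    rw [hβ, lt_div_iff₀ h2, hw] at h3
    have h4 : u < w := by exact_mod_cast h1
    have h5 : w < u + 1 := by exact_mod_cast h3
    omega
  obtain ⟨k, d, hk⟩ := hG.2 y hy
  refine ⟨k, ?_⟩
  have ht : Tendsto (fun ε => y + ε) (𝓝 0) (𝓝 y) := by
    have : Continuous fun ε => y + ε := by fun_prop
    simpa using this.tendsto 0
  filter_upwards [ht.eventually hk] with ε hε
  rw [hε, hk.self_of_nhds]
  ring

lemma Lifts.germ_of_affine (L : Lifts H E) {l : Filter ℝ} {c : ℤ} {d p : ℝ}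
    (hp : H (2 * E (H p)) = 2 ^ c * H p + d)
    (h : ∀ᶠ ε in l, H (2 * E (H (p + ε))) = 2 ^ c * H (p + ε) + d) : GRelOn l H 1 c p (2 * p) := by
  filter_upwards [h] with ε hε
  rw [L.EH] at hp hε
  rw [zpow_one, ← mul_add, hε, hp]
  ring

/-- The piecewise linear map `H ∘ (2 * ·) ∘ E` relates the germ of `H` at `p` to that at `2 * p`.
Its finitely many breaks modulo `1` are dyadic and so are their images by `E`, which are therefore
all of the form `u / 2 ^ N` for large `N`. -/
lemma Lifts.half (L : Lifts H E) (hG : DyadicPL_s11 M fun y => H (2 * E y))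
    (hK : DyadicPL_s11 M' fun x => E (2 * H x)) : ∃ N₀ : ℕ, ∀ N, N₀ ≤ N → Half N H := by
  have hcG : Continuous fun y => H (2 * E y) := by
    have := L.cont
    have := L.contE
    fun_prop
  have h2 : (0 : ℝ) < 2 ^ M := by positivity
  have hat : ∀ p, Tendsto (fun ε => H (p + ε)) (𝓝 0) (𝓝 (H p)) := fun p => by
    have : Continuous fun ε => H (p + ε) := by have := L.cont; fun_prop
    simpa using this.tendsto 0
  obtain ⟨N₀, hN₀⟩ := exists_dyAt_of_finite
    (((finite_dyAt M 1).union (Set.finite_singleton 0)).image E) (by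
      rintro _ ⟨y, hy | hy, rfl⟩
      · exact L.swap.dy hK ⟨M, hy.1⟩
      · rw [hy, L.swap.zero]
        exact ⟨0, 0, by simp⟩)
  refine ⟨N₀, fun N hN => ⟨L.mono, L.cont, L.zero, L.per, fun x hx => L.dy hG hx, ?_, ?_, ?_⟩⟩
  · intro p hp
    obtain ⟨k, d, hk⟩ := hG.2 (H p) fun hd => hp <| by
      have h1 : DyAt M (Int.fract (H p)) := by
        rw [← Int.self_sub_floor, sub_eq_add_neg]
        exact hd.add ((dyAt_int _).mono (by omega)).neg
      have h3 : DyAt N₀ (E (Int.fract (H p))) := by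
        refine hN₀ _ ⟨_, ?_, rfl⟩
        rcases (Int.fract_nonneg (H p)).eq_or_lt with h | h
        · exact Or.inr h.symm
        · exact Or.inl ⟨h1, h, Int.fract_lt_one _⟩
      have h4 := L.swap.per_int (Int.fract (H p)) ⌊H p⌋
      rw [Int.fract_add_floor, L.EH] at h4
      rw [h4]
      exact (h3.mono (by omega)).add ((dyAt_int _).mono (by omega))
    exact ⟨k, L.germ_of_affine hk.self_of_nhds ((hat p).eventually hk)⟩
  · intro p
    obtain ⟨c, d, h⟩ := hG.one_sided hcG ⌊H p * 2 ^ M⌋ rfl rfl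
    have h1 : (⌊H p * 2 ^ M⌋ : ℝ) / 2 ^ M ≤ H p := by
      rw [div_le_iff₀ h2]; exact Int.floor_le _
    have h3 : H p < ((⌊H p * 2 ^ M⌋ : ℝ) + 1) / 2 ^ M := by
      rw [lt_div_iff₀ h2]; exact Int.lt_floor_add_one _
    refine ⟨c, L.germ_of_affine (h _ h1 h3.le) ?_⟩
    filter_upwards [self_mem_nhdsWithin,
      nhdsWithin_le_nhds ((hat p).eventually (gt_mem_nhds h3))] with ε h4 h5
    have h4 : 0 < ε := h4
    exact h _ (h1.trans (L.mono (by linarith)).le) h5.le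
  · intro p
    obtain ⟨c, d, h⟩ := hG.one_sided hcG (⌈H p * 2 ^ M⌉ - 1) rfl rfl
    push_cast at h
    rw [sub_add_cancel] at h
    have h1 : ((⌈H p * 2 ^ M⌉ : ℝ) - 1) / 2 ^ M < H p := by
      rw [div_lt_iff₀ h2]
      have := Int.ceil_lt_add_one (H p * 2 ^ M)
      linarith
    have h3 : H p ≤ (⌈H p * 2 ^ M⌉ : ℝ) / 2 ^ M := by
      rw [le_div_iff₀ h2]; exact Int.le_ceil _
    refine ⟨c, L.germ_of_affine (h _ h1.le h3) ?_⟩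
    filter_upwards [self_mem_nhdsWithin,
      nhdsWithin_le_nhds ((hat p).eventually (lt_mem_nhds h1))] with ε h4 h5
    have h4 : ε < 0 := h4
    exact h _ h5.le ((L.mono (by linarith)).le.trans h3)

lemma exists_lifts {h : AddCircle (1 : ℝ) → AddCircle (1 : ℝ)} (hh : OrientedHomeo 1 h)
    (h0 : h 0 = 0) :
    ∃ H E : ℝ → ℝ, Lifts H E ∧ ∀ x : ℝ, h (x : AddCircle (1 : ℝ)) = (H x : ℝ) := by
  obtain ⟨F, hF, hper, hmono, hsurj⟩ := hh
  have h1 : ((F 0 : ℝ) : AddCircle (1 : ℝ)) = 0 := by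
    rw [← hF 0, AddCircle.coe_zero, h0]
  set H : ℝ → ℝ := fun x => F x - F 0 with hH
  have hm : StrictMono H := fun x y hxy => sub_lt_sub_right (hmono hxy) _
  have hs : Function.Surjective H := fun y => by
    obtain ⟨x, hx⟩ := hsurj (y + F 0)
    exact ⟨x, by simp only [hH]; rw [hx]; ring⟩
  set e := hm.orderIsoOfSurjective H hs with he
  refine ⟨H, e.symm, ⟨hm, e.continuous, by simp [hH], fun x => ?_, e.symm.continuous,
    fun y => e.apply_symm_apply y, fun x => e.symm_apply_apply x⟩, fun x => ?_⟩
  · simp only [hH]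
    rw [hper]
    ring
  · simp only [hH]
    rw [hF, AddCircle.coe_sub, h1, sub_zero]

/-- **Corollary 2.1.** If `h` is an orientation-preserving homeomorphism of
`S¹` fixing `0` such that `h ν₂ h⁻¹` and `h⁻¹ ν₂ h` are both everywhere-defined elements
of `T̄_{2,1}`, then `h ∈ T_{2,1}`. -/
theorem stmt_11 (h h' : AddCircle (1 : ℝ) → AddCircle (1 : ℝ))
    (hh : OrientedHomeo 1 h)
    (hinv₁ : ∀ z, h' (h z) = z) (hinv₂ : ∀ z, h (h' z) = z)
    (h0 : h 0 = 0)
    (hconj₁ : MemTbar 2 1 (h ∘ nu2 ∘ h'))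
    (hconj₂ : MemTbar 2 1 (h' ∘ nu2 ∘ h)) :
    MemT 2 1 h := by
  obtain ⟨H, E, L, hH⟩ := exists_lifts hh h0
  have hE : ∀ y : ℝ, h' (y : AddCircle (1 : ℝ)) = (E y : ℝ) := fun y => by
    rw [← hinv₁ (E y : ℝ), hH, L.HE]
  have hnu : ∀ x : ℝ, nu2 (x : AddCircle (1 : ℝ)) = ((2 * x : ℝ) : AddCircle (1 : ℝ)) := fun x => by
    rw [two_mul, AddCircle.coe_add]
    rfl
  have hcH := L.cont
  have hcE := L.contE
  obtain ⟨M, hG⟩ := dyadicPL_of_memTbar hconj₁ (F := fun y => H (2 * E y)) (by fun_prop) fun y => by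
    simp only [Function.comp_apply]
    rw [hE, hnu, hH]
  obtain ⟨M', hK⟩ := dyadicPL_of_memTbar hconj₂ (F := fun x => E (2 * H x)) (by fun_prop) fun x => by
    simp only [Function.comp_apply]
    rw [hH, hnu, hE]
  obtain ⟨N₁, h₁⟩ := L.half hG hK
  obtain ⟨N₂, h₂⟩ := L.swap.half hK hG
  have C : Conj (max N₁ N₂) H E := ⟨L.HE, L.EH, h₁ _ (le_max_left _ _), h₂ _ (le_max_right _ _)⟩
  exact ⟨H, hH, L.per, L.mono, fun y => ⟨E y, L.HE y⟩, C.circPL, fun q hq =>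
    mem_zpows_iff.2 (C.h.dy q (mem_zpows_iff.1 hq))⟩
end
end
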